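/- arXiv:2012.12798 — 7 statements merged into one kernel-verified Lean document; each statement's English description precedes it below -/
import Mathlib

section
/- Derandomization of approximating semialgebraic circuits: There exists an absolute constant C > 0 with the following property. Let n, k, s, b, t_f, t_ρ ≥ 1 be integers, let ρ ⊆ ℝ × ℝ be a t_ρ-semialgebraic binary relation, let f : ℝⁿ → ℝ be a function whose graph is t_f-semialgebraic, and let F be a probabilistic b-semialgebraic circuit of size s with n deterministic input variables x ∈ ℝⁿ and k random input variables r ∈ ℝᵏ distributed according to a Borel probability measure μ on ℝᵏ. Assume that F ρ-approximates f, i.e., for every x ∈ ℝⁿ, μ{r ∈ ℝᵏ : F(x,r) ρ f(x)} ≥ 2/3. Then there exist an integer m with 1 ≤ m ≤ C·n²·s·(1 + ln(b·s + t_f + t_ρ)) and (not necessarily distinct) points r_1,…,r_m ∈ ℝᵏ such that for every x ∈ ℝⁿ strictly more than m/2 of the indices i ∈ {1,…,m} satisfy F(x,r_i) ρ f(x). -/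
/-!
The proof is a uniform-convergence (Vapnik–Chervonenkis) argument. Say that `r` fails on `x` when
`F(x,r) ρ f(x)` is false.

*Symmetrization.* Draw `2m` independent strings. If every sample of size `m` had a majority or a tie
of failures on some input, then by Markov's inequality (`sixth_le_few_failures`) a double sample
would with probability at least `1/6` have an input on which at least half of the first half but at
most `2/5` of the second half fails. Swapping the two halves coordinatewise preserves the
distribution, and for a fixed failure pattern Hoeffding's inequality (`card_signs_le`) bounds the
proportion of swaps giving such an imbalance by `exp (-m/200)`. So a good sample exists as soon as
`2m` strings see fewer than `exp (m/200) / 6` failure patterns (`exists_majority_sample`). The events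
involved quantify over `x`; they are measurable because they are projections of `Fσ` subsets of a
`σ`-compact space (`IsFsigma.image`).

*Growth function.* Fix a string `r`. The value `f x` and the gate values are each determined by the
signs of few polynomials in the input and the earlier values, hence each is a root of one of these
polynomials, truncated at its actual degree. The choices of polynomials and degrees give finitely
many towers of algebraic extensions over `ℝⁿ`. The number of complex points of a tower above `x` at
which a given polynomial does not vanish is the rank of a Hermitian matrix of traces (Hermite), and
this rank is read off from which coefficients of the characteristic polynomial vanish at `x`
(`exists_counting_polys`). Where these counts are constant, the points of the tower continue uniquely
to nearby `x`, and so do the real values of the gates (`stack_continues`). Consequently the truth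
value of `F(x,r) ρ f(x)` is locally constant on the strata where boundedly many polynomials in `x`,
of bounded degree, have a fixed vanishing pattern (`exists_zero_pattern_polys`).

*Counting.* Labels that are locally constant on such strata are counted by enclosing one witness of
each label in bounded open regions that are disjoint and whose frontiers lie on the zero set of one
polynomial `Q` (`card_labels_le`). For every vector `a` each region contains a critical point of
`Q(x) exp⟨a,x⟩`, and for generic `a` there are at most `(n deg Q + 1)ⁿ` of these, by a dimension
count that replaces Bézout's theorem (`card_regions_le`).

With `B = b s + t_f + t_ρ` the number of patterns is at most `((B+1)^(25 n s) m)ⁿ / 6`, which is below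
`exp (m/200) / 6` once `m ≥ 10⁴ n² s (1 + log B)`.
-/

open MvPolynomial MeasureTheory

/-- A set `S ⊆ ℝ^N` is `t`-semialgebraic if there are `m ≤ t` polynomials of total degree
at most `t` whose sign patterns separate `S` from its complement. -/
def IsTSemialgebraic (N t : ℕ) (S : Set (Fin N → ℝ)) : Prop :=
  ∃ (m : ℕ) (p : Fin m → MvPolynomial (Fin N) ℝ),
    m ≤ t ∧ (∀ i, (p i).totalDegree ≤ t) ∧
    ∀ y ∈ S, ∀ y' ∉ S,
      (fun i => Real.sign (eval y (p i))) ≠ (fun i => Real.sign (eval y' (p i)))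

/-- A function `g : ℝ^l → ℝ` is `t`-semialgebraic if its graph, viewed as a subset of
`ℝ^{l+1}`, is `t`-semialgebraic. -/
def IsTSemialgebraicFun (l t : ℕ) (g : (Fin l → ℝ) → ℝ) : Prop :=
  IsTSemialgebraic (l + 1) t
    {w : Fin (l + 1) → ℝ | w (Fin.last l) = g (fun j => w j.castSucc)}

/-- `f : Fin s → ((Fin N → ℝ) → ℝ)` is a `b`-semialgebraic circuit of size `s` on `N` real
inputs: each `f i` is a `b`-semialgebraic gate applied to inputs, each of which is a
coordinate projection, a constant, or an earlier function of the sequence. -/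
def IsSACircuit (N s b : ℕ) (f : Fin s → (Fin N → ℝ) → ℝ) : Prop :=
  ∀ i : Fin s, ∃ (l : ℕ) (g : (Fin l → ℝ) → ℝ) (h : Fin l → (Fin N → ℝ) → ℝ),
    IsTSemialgebraicFun l b g ∧
    (∀ j : Fin l,
      (∃ u : Fin N, h j = fun x => x u) ∨
      (∃ cst : ℝ, h j = fun _ => cst) ∨
      (∃ i' : Fin s, i' < i ∧ h j = f i')) ∧
    f i = fun x => g (fun j => h j x)

open Filter Topology
open scoped ENNReal

/-! ### Critical points of a polynomial times an exponential -/

lemma hasDerivAt_eval_update {n : ℕ} (Q : MvPolynomial (Fin n) ℝ) (x : Fin n → ℝ) (j : Fin n) :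
    HasDerivAt (fun t => eval (Function.update x j t) Q) (eval x (pderiv j Q)) (x j) := by
  induction Q using MvPolynomial.induction_on with
  | C a => simpa using hasDerivAt_const (x j) a
  | add p q hp hq => simpa using! hp.add hq
  | mul_X p i hp =>
    have hX : HasDerivAt (fun t => Function.update x j t i) (if i = j then (1 : ℝ) else 0) (x j) := by
      by_cases h : i = j
      · subst h
        simpa using! hasDerivAt_id (x i)
      · simpa [h, Function.update_of_ne] using hasDerivAt_const (x j) (x i)
    simp only [map_mul, eval_X, Derivation.leibniz, pderiv_X, smul_eq_mul, map_add]
    refine (hp.mul hX).congr_deriv ?_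
    by_cases h : i = j
    · subst h; simp; ring
    · simp [h]; ring

/-- On a bounded open region whose frontier lies in `{Q = 0}`, the square of `Q(x) exp⟨a,x⟩` attains
its maximum in the interior, which gives a solution of `∇Q + a Q = 0` with `Q ≠ 0`. -/
lemma exists_critical_point {n : ℕ} (Q : MvPolynomial (Fin n) ℝ) (Ω : Set (Fin n → ℝ))
    (ho : IsOpen Ω) (hb : Bornology.IsBounded Ω) (w : Fin n → ℝ) (hw : w ∈ Ω)
    (hQw : eval w Q ≠ 0) (hfr : ∀ x ∈ frontier Ω, eval x Q = 0) (a : Fin n → ℝ) :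
    ∃ x ∈ Ω, eval x Q ≠ 0 ∧ ∀ j, eval x (pderiv j Q) + a j * eval x Q = 0 := by
  set φ : (Fin n → ℝ) → ℝ := fun x => (eval x Q * Real.exp (∑ j, a j * x j)) ^ 2 with hφ
  have hc : Continuous φ := by
    have := MvPolynomial.continuous_eval Q
    fun_prop
  have hcomp : IsCompact (closure Ω) := hb.isCompact_closure
  obtain ⟨x, hx, hmax⟩ := hcomp.exists_isMaxOn ⟨w, subset_closure hw⟩ hc.continuousOn
  have hpos : 0 < φ w := by
    have := Real.exp_pos (∑ j, a j * w j)
    positivity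
  have hφx : 0 < φ x := lt_of_lt_of_le hpos (hmax (subset_closure hw))
  have hQx : eval x Q ≠ 0 := by
    intro h
    simp [hφ, h] at hφx
  have hxΩ : x ∈ Ω := by
    by_contra h
    exact hQx (hfr x ⟨hx, by rwa [ho.interior_eq]⟩)
  refine ⟨x, hxΩ, hQx, fun j => ?_⟩
  have hu : Continuous (fun t => Function.update x j t) := by fun_prop
  have hloc : IsLocalMax (fun t => φ (Function.update x j t)) (x j) := by
    have : ∀ᶠ t in nhds (x j), Function.update x j t ∈ Ω := by
      apply hu.continuousAt.eventually_mem
      rw [Function.update_eq_self]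
      exact ho.mem_nhds hxΩ
    filter_upwards [this] with t ht
    rw [Function.update_eq_self]
    exact hmax (subset_closure ht)
  have hd1 := hasDerivAt_eval_update Q x j
  have hlin : HasDerivAt (fun t => ∑ i, a i * Function.update x j t i) (a j) (x j) := by
    have h1 : ∀ i ∈ Finset.univ, HasDerivAt (fun t => a i * Function.update x j t i)
        (if i = j then a j else 0) (x j) := by
      intro i _
      by_cases h : i = j
      · subst h
        simpa using (hasDerivAt_id (x i)).const_mul (a i)
      · simpa [h, Function.update_of_ne] using hasDerivAt_const (x j) (a i * x i)
    have := HasDerivAt.fun_sum h1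
    simpa using this
  have hd := ((hd1.mul hlin.exp).pow 2)
  have h0 := hloc.hasDerivAt_eq_zero hd
  simp only [Function.update_eq_self, Pi.mul_apply] at h0
  have he := Real.exp_pos (∑ j, a j * x j)
  have h2 : 2 * (eval x Q * Real.exp (∑ j, a j * x j)) * Real.exp (∑ j, a j * x j) *
      (eval x (pderiv j Q) + a j * eval x Q) = 0 := by
    rw [← h0]; push_cast; ring
  rcases mul_eq_zero.1 h2 with h3 | h3
  · exfalso
    have : eval x Q = 0 := by
      simpa [he.ne'] using h3
    exact hQx this
  · exact h3

/-! ### A Bézout-type count by linear algebra -/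

/-- Dimension count: more polynomials of degree at most `E` than exponent vectors in the box
`{0,…,E}ⁿ` are linearly dependent. -/
lemma exists_linear_relation {n E : ℕ} {ι : Type*} [Fintype ι]
    (P : ι → MvPolynomial (Fin n) ℝ) (hP : ∀ i, (P i).totalDegree ≤ E)
    (hcard : (E + 1) ^ n < Fintype.card ι) :
    ∃ c : ι → ℝ, c ≠ 0 ∧ ∑ i, c i • P i = 0 := by
  classical
  let f : (ι → ℝ) →ₗ[ℝ] ((Fin n → Fin (E + 1)) → ℝ) :=
    { toFun := fun c α => coeff (Finsupp.equivFunOnFinite.symm fun i => (α i : ℕ)) (∑ i, c i • P i)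
      map_add' := by
        intro c d; ext α; simp [add_smul, Finset.sum_add_distrib, coeff_sum]
      map_smul' := by
        intro r c; ext α; simp [Finset.mul_sum, coeff_sum, mul_assoc] }
  have hker : LinearMap.ker f ≠ ⊥ := by
    apply LinearMap.ker_ne_bot_of_finrank_lt
    simpa using hcard
  obtain ⟨c, hc, hc0⟩ := (Submodule.ne_bot_iff _).1 hker
  refine ⟨c, hc0, ?_⟩
  have hdeg : (∑ i, c i • P i).totalDegree ≤ E :=
    totalDegree_finsetSum_le fun i _ => (totalDegree_smul_le _ _).trans (hP i)
  ext m
  rw [coeff_zero]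
  by_cases hm : ∀ i, m i ≤ E
  · have := congrFun (LinearMap.mem_ker.1 hc) (fun i => ⟨m i, Nat.lt_succ_of_le (hm i)⟩)
    simp only [f, LinearMap.coe_mk, AddHom.coe_mk, Pi.zero_apply] at this
    rw [← this]
    congr 1
    ext i; simp
  · push Not at hm
    obtain ⟨i, hi⟩ := hm
    apply coeff_eq_zero_of_totalDegree_lt
    calc _ ≤ E := hdeg
      _ < m i := hi
      _ ≤ _ := by
        by_cases hs : i ∈ m.support
        · exact Finset.single_le_sum (f := fun i => m i) (fun _ _ => Nat.zero_le _) hs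
        · simp only [Finsupp.mem_support_iff, not_not] at hs; omega

lemma totalDegree_pderiv_le' {n : ℕ} (j : Fin n) (Q : MvPolynomial (Fin n) ℝ) :
    (pderiv j Q).totalDegree ≤ Q.totalDegree := by
  conv_lhs => rw [Q.as_sum]
  rw [map_sum]
  refine totalDegree_finsetSum_le fun m hm => ?_
  rw [pderiv_monomial]
  refine (totalDegree_monomial_le _ _).trans (le_trans ?_ (le_totalDegree hm))
  exact Finsupp.sum_le_sum_index tsub_le_self (fun _ _ => monotone_id) (fun _ _ => rfl)

/-- Some power vector `(1, h, h², …)` with `h` below a bound depending only on `n` and `N`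
separates any `N` given points of `ℝⁿ`. -/
lemma exists_separating (n N : ℕ) : ∃ H : ℕ, ∀ z : Fin N → (Fin n → ℝ), Function.Injective z →
    ∃ h < H, Function.Injective fun i => ∑ j, z i j * (h : ℝ) ^ (j : ℕ) := by
  classical
  refine ⟨Fintype.card (Fin N × Fin N) * n + 1, fun z hz => ?_⟩
  let q : Fin N × Fin N → Polynomial ℝ := fun e =>
    if e.1 = e.2 then 1 else ∑ j, Polynomial.C (z e.1 j - z e.2 j) * Polynomial.X ^ (j : ℕ)
  have hcoef : ∀ e : Fin N × Fin N, ∀ j : Fin n,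
      (∑ j : Fin n, Polynomial.C (z e.1 j - z e.2 j) * Polynomial.X ^ (j : ℕ)).coeff j
        = z e.1 j - z e.2 j := by
    intro e j
    rw [Polynomial.finsetSum_coeff]
    simp only [Polynomial.coeff_C_mul, Polynomial.coeff_X_pow, Fin.val_inj]
    simp
  have hq0 : ∀ e, q e ≠ 0 := by
    intro e
    by_cases he : e.1 = e.2
    · simp [q, he]
    · simp only [q, he, if_false]
      intro h0
      apply he
      apply hz
      ext j
      have := hcoef e j
      rw [h0] at this
      simp at this
      linarith
  have hqd : ∀ e, (q e).natDegree ≤ n := by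
    intro e
    by_cases he : e.1 = e.2
    · simp [q, he]
    · simp only [q, he, if_false]
      apply Polynomial.natDegree_sum_le_of_forall_le
      intro j _
      exact (Polynomial.natDegree_C_mul_X_pow_le _ _).trans j.2.le
  have hprod : ∏ e, q e ≠ 0 := Finset.prod_ne_zero_iff.2 fun e _ => hq0 e
  have hdeg : (∏ e, q e).natDegree ≤ Fintype.card (Fin N × Fin N) * n := by
    refine (Polynomial.natDegree_prod_le _ _).trans ?_
    refine (Finset.sum_le_card_nsmul _ _ n fun e _ => hqd e).trans ?_
    simp
  have hex : ∃ h < Fintype.card (Fin N × Fin N) * n + 1, (∏ e, q e).eval (h : ℝ) ≠ 0 := by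
    by_contra hcon
    push Not at hcon
    apply hprod
    apply Polynomial.eq_zero_of_natDegree_lt_card_of_eval_eq_zero' _
      ((Finset.range (Fintype.card (Fin N × Fin N) * n + 1)).image (fun h : ℕ => (h : ℝ)))
    · intro i hi
      obtain ⟨h, hh, rfl⟩ := Finset.mem_image.1 hi
      exact hcon h (Finset.mem_range.1 hh)
    · rw [Finset.card_image_of_injective _ Nat.cast_injective, Finset.card_range]
      omega
  obtain ⟨h, hh, hne⟩ := hex
  refine ⟨h, hh, fun i i' hii => ?_⟩
  by_contra hne'
  rw [Polynomial.eval_prod] at hne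
  have := Finset.prod_ne_zero_iff.1 hne (i, i') (Finset.mem_univ _)
  apply this
  simp only [q, hne', if_false]
  simp only [Polynomial.eval_finsetSum, Polynomial.eval_mul, Polynomial.eval_C,
    Polynomial.eval_pow, Polynomial.eval_X, sub_mul, Finset.sum_sub_distrib]
  simp only at hii
  linarith

/-- For every polynomial `Q` of degree at most `d` and every polynomial `u` of degree at most one,
the values `u(x)` at solutions of `∇Q(x) + a Q(x) = 0`, `Q(x) ≠ 0`, are roots of a univariate
polynomial of degree at most `(nd+1)ⁿ` whose coefficients are polynomials in `a`, not all zero. -/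
lemma exists_eliminant {n d : ℕ} (Q : MvPolynomial (Fin n) ℝ) (hd : Q.totalDegree ≤ d)
    (u : MvPolynomial (Fin n) ℝ) (hu : u.totalDegree ≤ 1) :
    ∃ A : Fin ((n * d + 1) ^ n + 1) → MvPolynomial (Fin n) ℝ, (∃ i, A i ≠ 0) ∧
      ∀ a x : Fin n → ℝ, eval x Q ≠ 0 → (∀ j, eval x (pderiv j Q) + a j * eval x Q = 0) →
        ∑ i, eval a (A i) * eval x u ^ (i : ℕ) = 0 := by
  classical
  set J := (n * d + 1) ^ n with hJ
  let P : (Fin n → Fin (J + 1)) × Fin (J + 1) → MvPolynomial (Fin n) ℝ := fun e =>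
    (∏ j, ((-pderiv j Q) ^ (e.1 j : ℕ) * Q ^ (J - (e.1 j : ℕ)))) * u ^ (e.2 : ℕ)
  have hP : ∀ e, (P e).totalDegree ≤ n * d * J + J := by
    intro e
    refine (totalDegree_mul _ _).trans (add_le_add ?_ ?_)
    · refine (totalDegree_finsetProd _ _).trans ?_
      refine (Finset.sum_le_card_nsmul _ _ (d * J) fun j _ => ?_).trans (by simp [mul_assoc])
      refine (totalDegree_mul _ _).trans ?_
      have h1 : ((-pderiv j Q) ^ (e.1 j : ℕ)).totalDegree ≤ (e.1 j : ℕ) * d := by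
        refine (totalDegree_pow _ _).trans ?_
        rw [totalDegree_neg]
        exact Nat.mul_le_mul_left _ ((totalDegree_pderiv_le' j Q).trans hd)
      have h2 : (Q ^ (J - (e.1 j : ℕ))).totalDegree ≤ (J - (e.1 j : ℕ)) * d :=
        (totalDegree_pow _ _).trans (Nat.mul_le_mul_left _ hd)
      have h3 : (e.1 j : ℕ) ≤ J := Nat.lt_succ_iff.1 (e.1 j).2
      calc _ ≤ (e.1 j : ℕ) * d + (J - (e.1 j : ℕ)) * d := add_le_add h1 h2
        _ = d * J := by rw [← add_mul, Nat.add_sub_cancel' h3, mul_comm]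
    · refine (totalDegree_pow _ _).trans ?_
      have h3 : (e.2 : ℕ) ≤ J := Nat.lt_succ_iff.1 e.2.2
      nlinarith
  have hcard : (n * d * J + J + 1) ^ n < Fintype.card ((Fin n → Fin (J + 1)) × Fin (J + 1)) := by
    simp only [Fintype.card_prod, Fintype.card_fun, Fintype.card_fin]
    calc (n * d * J + J + 1) ^ n ≤ ((n * d + 1) * (J + 1)) ^ n :=
          Nat.pow_le_pow_left (by nlinarith) n
      _ = (J + 1) ^ n * J := by rw [mul_pow, mul_comm]
      _ < (J + 1) ^ n * (J + 1) := by
          apply Nat.mul_lt_mul_of_pos_left (Nat.lt_succ_self J) (by positivity)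
  obtain ⟨c, hc0, hc⟩ := exists_linear_relation P hP hcard
  refine ⟨fun i => ∑ β : Fin n → Fin (J + 1),
    monomial (Finsupp.equivFunOnFinite.symm fun j => (β j : ℕ)) (c (β, i)), ?_, ?_⟩
  · by_contra hcon
    push Not at hcon
    apply hc0
    ext ⟨β, i⟩
    have h := congrArg (coeff (Finsupp.equivFunOnFinite.symm fun j => (β j : ℕ))) (hcon i)
    rw [coeff_sum, Finset.sum_eq_single β] at h
    · simpa using h
    · intro β' _ hne
      rw [coeff_monomial, if_neg]
      intro heq
      apply hne
      ext j
      have := DFunLike.congr_fun heq j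
      simpa using this
    · simp
  · intro a x hQ hcrit
    have h := congrArg (eval x) hc
    rw [map_sum, map_zero] at h
    have hev : ∀ e, eval x (P e) = (∏ j, a j ^ (e.1 j : ℕ)) * eval x Q ^ (J * n)
        * eval x u ^ (e.2 : ℕ) := by
      intro e
      simp only [P, map_mul, map_prod, map_pow, map_neg]
      congr 1
      have : ∀ j : Fin n, (-(eval x) ((pderiv j) Q)) ^ (e.1 j : ℕ) * (eval x) Q ^ (J - (e.1 j : ℕ))
          = a j ^ (e.1 j : ℕ) * eval x Q ^ J := by
        intro j
        have h1 : -(eval x) ((pderiv j) Q) = a j * eval x Q := by linarith [hcrit j]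
        have h3 : (e.1 j : ℕ) ≤ J := Nat.lt_succ_iff.1 (e.1 j).2
        rw [h1, mul_pow, mul_assoc, ← pow_add, Nat.add_sub_cancel' h3]
      rw [Finset.prod_congr rfl fun j _ => this j, Finset.prod_mul_distrib]
      simp [pow_mul]
    simp only [smul_eval, hev] at h
    have h2 : eval x Q ^ (J * n) * ∑ i : Fin (J + 1), (∑ β : Fin n → Fin (J + 1),
        c (β, i) * ∏ j, a j ^ (β j : ℕ)) * eval x u ^ (i : ℕ) = 0 := by
      rw [← h, Fintype.sum_prod_type_right, Finset.mul_sum]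
      refine Finset.sum_congr rfl fun i _ => ?_
      rw [Finset.sum_mul, Finset.mul_sum]
      refine Finset.sum_congr rfl fun β _ => ?_
      ring
    have h3 := (mul_eq_zero.1 h2).resolve_left (pow_ne_zero _ hQ)
    rw [← h3]
    refine Finset.sum_congr rfl fun i _ => ?_
    congr 1
    rw [map_sum]
    refine Finset.sum_congr rfl fun β _ => ?_
    rw [eval_monomial, Finsupp.prod_fintype _ _ (by simp)]
    simp

/-- Pairwise disjoint bounded open regions, each meeting `{Q ≠ 0}` and with frontier inside
`{Q = 0}`, number at most `(n·deg Q + 1)ⁿ`: for every `a` each region contains a critical point of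
`Q(x) exp⟨a,x⟩`, and for a suitable `a` a linear form takes distinct values at these points, all of
them roots of one nonzero polynomial of that degree. -/
lemma card_regions_le {n d N : ℕ} (Q : MvPolynomial (Fin n) ℝ) (hd : Q.totalDegree ≤ d)
    (Ω : Fin N → Set (Fin n → ℝ)) (ho : ∀ i, IsOpen (Ω i))
    (hb : ∀ i, Bornology.IsBounded (Ω i)) (hw : ∀ i, ∃ w ∈ Ω i, eval w Q ≠ 0)
    (hfr : ∀ i, ∀ x ∈ frontier (Ω i), eval x Q = 0)
    (hdis : ∀ i i', i ≠ i' → Disjoint (Ω i) (Ω i')) :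
    N ≤ (n * d + 1) ^ n := by
  classical
  obtain ⟨H, hH⟩ := exists_separating n N
  let u : ℕ → MvPolynomial (Fin n) ℝ := fun h => ∑ j : Fin n, (C ((h : ℝ) ^ (j : ℕ)) * X j)
  have hu : ∀ h, (u h).totalDegree ≤ 1 := fun h =>
    totalDegree_finsetSum_le fun j _ => (totalDegree_mul _ _).trans (by rw [totalDegree_C, totalDegree_X])
  choose A hA0 hA using fun h => exists_eliminant Q hd (u h) (hu h)
  choose i0 hi0 using hA0
  have hprod : ∏ h ∈ Finset.range H, A h (i0 h) ≠ 0 :=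
    Finset.prod_ne_zero_iff.2 fun h _ => hi0 h
  obtain ⟨a, ha⟩ : ∃ a, eval a (∏ h ∈ Finset.range H, A h (i0 h)) ≠ 0 := by
    by_contra hcon
    push Not at hcon
    exact hprod (MvPolynomial.funext fun a => by rw [hcon a, map_zero])
  rw [map_prod] at ha
  choose w hwΩ hwQ using hw
  choose x hxΩ hxQ hx using fun i =>
    exists_critical_point Q (Ω i) (ho i) (hb i) (w i) (hwΩ i) (hwQ i) (hfr i) a
  have hinj : Function.Injective x := by
    intro i i' hii
    by_contra hne
    exact Set.disjoint_left.1 (hdis i i' hne) (hxΩ i) (hii ▸ hxΩ i')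
  obtain ⟨h, hhH, hsep⟩ := hH x hinj
  let q : Polynomial ℝ := ∑ i : Fin ((n * d + 1) ^ n + 1),
    Polynomial.C (eval a (A h i)) * Polynomial.X ^ (i : ℕ)
  have hq0 : q ≠ 0 := by
    intro h0
    have hc : q.coeff (i0 h) = eval a (A h (i0 h)) := by
      simp only [q]
      rw [Polynomial.finsetSum_coeff]
      simp [Polynomial.coeff_X_pow, Fin.val_inj]
    rw [h0, Polynomial.coeff_zero] at hc
    exact Finset.prod_ne_zero_iff.1 ha h (Finset.mem_range.2 hhH) hc.symm
  have hqd : q.natDegree ≤ (n * d + 1) ^ n := by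
    apply Polynomial.natDegree_sum_le_of_forall_le
    intro j _
    exact (Polynomial.natDegree_C_mul_X_pow_le _ _).trans (Nat.lt_succ_iff.1 j.2)
  by_contra hlt
  push Not at hlt
  apply hq0
  apply Polynomial.eq_zero_of_natDegree_lt_card_of_eval_eq_zero' q
    (Finset.univ.image fun i => ∑ j, x i j * (h : ℝ) ^ (j : ℕ))
  · intro v hv
    obtain ⟨i, -, rfl⟩ := Finset.mem_image.1 hv
    have := hA h a (x i) (hxQ i) (hx i)
    have hux : eval (x i) (u h) = ∑ j, x i j * (h : ℝ) ^ (j : ℕ) := by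
      simp [u, mul_comm]
    rw [hux] at this
    simpa [q, Polynomial.eval_finsetSum] using this
  · rw [Finset.card_image_of_injective _ hsep]
    simpa using lt_of_le_of_lt hqd hlt

/-! ### Counting labels that are locally constant on zero-pattern classes -/

lemma exists_pos_lt_finite {ι : Type*} [Finite ι] (p : ι → ℝ → Prop)
    (h : ∀ i, ∃ e > 0, ∀ e' > 0, e' ≤ e → p i e') : ∃ e > 0, ∀ i, p i e := by
  classical
  cases nonempty_fintype ι
  choose e he hp using h
  by_cases hι : Nonempty ι
  · refine ⟨Finset.univ.inf' Finset.univ_nonempty e, ?_, fun i => hp i _ ?_ ?_⟩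
    · rw [gt_iff_lt, Finset.lt_inf'_iff]; exact fun i _ => he i
    · rw [gt_iff_lt, Finset.lt_inf'_iff]; exact fun i _ => he i
    · exact Finset.inf'_le _ (Finset.mem_univ i)
  · exact ⟨1, one_pos, fun i => (hι ⟨i⟩).elim⟩

/-- If a label is locally constant along each class of points with the same zero pattern of a
finite family of polynomials, then the number of labels is bounded. Each witness is enclosed in a
bounded open region cut out by a perturbation of the family, so that the regions are disjoint and
their frontiers lie on the zero set of one polynomial. -/
theorem card_labels_le {n M Δ N : ℕ} (𝓡 : Finset (MvPolynomial (Fin n) ℝ)) (hM : 𝓡.card ≤ M)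
    (hΔ : ∀ R ∈ 𝓡, R.totalDegree ≤ Δ) {Λ : Type*} (label : (Fin n → ℝ) → Λ)
    (hloc : ∀ x₀, ∀ᶠ x in nhds x₀,
      (∀ R ∈ 𝓡, eval x R = 0 ↔ eval x₀ R = 0) → label x = label x₀)
    (w : Fin N → (Fin n → ℝ)) (hinj : Function.Injective fun i => label (w i)) :
    N ≤ (n * (2 + 4 * M * Δ) + 1) ^ n := by
  classical
  obtain ⟨ε, hε, hεw⟩ : ∃ ε > 0, ∀ e : Fin N × 𝓡,
      eval (w e.1) e.2.1 ≠ 0 → ε < eval (w e.1) e.2.1 ^ 2 := by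
    apply exists_pos_lt_finite (p := fun (e : Fin N × 𝓡) ε =>
      eval (w e.1) e.2.1 ≠ 0 → ε < eval (w e.1) e.2.1 ^ 2)
    intro e
    by_cases h : eval (w e.1) e.2.1 = 0
    · exact ⟨1, one_pos, fun _ _ _ h' => (h' h).elim⟩
    · have : 0 < eval (w e.1) e.2.1 ^ 2 := by positivity
      exact ⟨_, half_pos this, fun e' _ h1 _ => by linarith⟩
  obtain ⟨ρ, hρ⟩ : ∃ ρ : ℝ, ∀ i, ∑ j, w i j ^ 2 < ρ := by
    refine ⟨∑ i, ∑ j, w i j ^ 2 + 1, fun i => ?_⟩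
    have := Finset.single_le_sum (f := fun i => ∑ j, w i j ^ 2)
      (fun i _ => Finset.sum_nonneg fun j _ => sq_nonneg _) (Finset.mem_univ i)
    linarith
  have hcR : ∀ R : MvPolynomial (Fin n) ℝ, Continuous fun x => eval x R :=
    fun R => MvPolynomial.continuous_eval R
  -- `B i` is the compact set of points that are as far as the witness from the nonzero members
  let B : Fin N → Set (Fin n → ℝ) := fun i =>
    {x | ∑ j, x j ^ 2 ≤ ρ ∧ ∀ R ∈ 𝓡, eval (w i) R ≠ 0 → ε ≤ eval x R ^ 2}
  have hballc : IsCompact {x : Fin n → ℝ | ∑ j, x j ^ 2 ≤ ρ} := by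
    apply Metric.isCompact_of_isClosed_isBounded
    · exact isClosed_le (by fun_prop) continuous_const
    · rw [isBounded_iff_forall_norm_le]
      refine ⟨ρ + 1, fun x hx => ?_⟩
      have hρ0 : 0 ≤ ρ := le_trans (Finset.sum_nonneg fun j _ => sq_nonneg _) hx
      rw [pi_norm_le_iff_of_nonneg (by linarith)]
      intro j
      have h1 := Finset.single_le_sum (f := fun j => x j ^ 2) (fun j _ => sq_nonneg _)
        (Finset.mem_univ j)
      have h2 : x j ^ 2 ≤ ρ := le_trans h1 hx
      rw [Real.norm_eq_abs]
      nlinarith [sq_abs (x j), sq_nonneg (|x j| - 1), abs_nonneg (x j)]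
  have hBc : ∀ i, IsCompact (B i) := by
    intro i
    have : B i = {x | ∑ j, x j ^ 2 ≤ ρ} ∩
        ⋂ R ∈ 𝓡, ⋂ (_ : eval (w i) R ≠ 0), {x | ε ≤ eval x R ^ 2} := by
      ext x; simp [B]
    rw [this]
    apply hballc.inter_right
    refine isClosed_biInter fun R _ => isClosed_iInter fun _ => ?_
    exact isClosed_le continuous_const ((hcR R).pow 2)
  let K : Fin N → Set (Fin n → ℝ) := fun i =>
    B i ∩ {x | ∀ R ∈ 𝓡, eval (w i) R = 0 → eval x R = 0}
  have hKc : ∀ i, IsCompact (K i) := by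
    intro i
    apply (hBc i).inter_right
    have : {x | ∀ R ∈ 𝓡, eval (w i) R = 0 → eval x R = 0} =
        ⋂ R ∈ 𝓡, ⋂ (_ : eval (w i) R = 0), {x | eval x R = 0} := by
      ext x; simp
    rw [this]
    exact isClosed_biInter fun R _ => isClosed_iInter fun _ => isClosed_eq (hcR R) continuous_const
  have hKz : ∀ i, ∀ x ∈ K i, ∀ R ∈ 𝓡, eval x R = 0 ↔ eval (w i) R = 0 := by
    intro i x hx R hR
    refine ⟨fun h => ?_, fun h => hx.2 R hR h⟩
    by_contra hne
    have := hx.1.2 R hR hne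
    rw [h] at this
    norm_num at this
    linarith
  -- within `K i` the label is locally constant, so its level sets are closed
  have hlev : ∀ i, ∀ S : Set Λ, IsCompact (K i ∩ {x | label x ∈ S}) := by
    intro i S
    apply (hKc i).of_isClosed_subset _ Set.inter_subset_left
    rw [← isOpen_compl_iff, isOpen_iff_mem_nhds]
    intro x hx
    by_cases hxK : x ∈ K i
    · have hxS : label x ∉ S := fun h => hx ⟨hxK, h⟩
      filter_upwards [hloc x] with y hy hyK
      apply hxS
      rw [← hy fun R hR => by rw [hKz i y hyK.1 R hR, hKz i x hxK R hR]]
      exact hyK.2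
    · filter_upwards [(hKc i).isClosed.isOpen_compl.mem_nhds hxK] with y hy hyK
      exact hy hyK.1
  obtain ⟨η, hη, hηd⟩ : ∃ η > 0, ∀ i : Fin N,
      Disjoint (Metric.thickening η (K i ∩ {x | label x ∈ ({label (w i)} : Set Λ)}))
        (Metric.thickening η (K i ∩ {x | label x ∈ ({label (w i)}ᶜ : Set Λ)})) := by
    apply exists_pos_lt_finite (p := fun (i : Fin N) η =>
      Disjoint (Metric.thickening η (K i ∩ {x | label x ∈ ({label (w i)} : Set Λ)}))
        (Metric.thickening η (K i ∩ {x | label x ∈ ({label (w i)}ᶜ : Set Λ)})))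
    intro i
    have hd : Disjoint (K i ∩ {x | label x ∈ ({label (w i)} : Set Λ)})
        (K i ∩ {x | label x ∈ ({label (w i)}ᶜ : Set Λ)}) := by
      rw [Set.disjoint_left]
      rintro x ⟨_, hx⟩ ⟨_, hx'⟩
      exact hx' hx
    obtain ⟨e, he, hed⟩ := hd.exists_thickenings (hlev i _) (hlev i _).isClosed
    exact ⟨e, he, fun e' _ hle => hed.mono (Metric.thickening_mono hle _)
      (Metric.thickening_mono hle _)⟩
  set U : Fin N → Set (Fin n → ℝ) := fun i =>
    Metric.thickening η (K i ∩ {x | label x ∈ ({label (w i)} : Set Λ)}) with hU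
  set U' : Fin N → Set (Fin n → ℝ) := fun i =>
    Metric.thickening η (K i ∩ {x | label x ∈ ({label (w i)}ᶜ : Set Λ)}) with hU'
  have hKU : ∀ i, K i ⊆ U i ∪ U' i := by
    intro i x hx
    by_cases h : label x = label (w i)
    · exact Or.inl (Metric.self_subset_thickening hη _ ⟨hx, h⟩)
    · exact Or.inr (Metric.self_subset_thickening hη _ ⟨hx, h⟩)
  obtain ⟨δ, hδ, hδK⟩ : ∃ δ > 0, ∀ i : Option (Fin N), i.elim (δ < ε) fun i =>
      ∀ x ∈ B i, (∀ R ∈ 𝓡, eval (w i) R = 0 → eval x R ^ 2 ≤ δ) → x ∈ U i ∪ U' i := by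
    apply exists_pos_lt_finite (p := fun (i : Option (Fin N)) δ => i.elim (δ < ε) fun i =>
      ∀ x ∈ B i, (∀ R ∈ 𝓡, eval (w i) R = 0 → eval x R ^ 2 ≤ δ) → x ∈ U i ∪ U' i)
    rintro (_ | i)
    · exact ⟨ε / 2, half_pos hε, fun e' _ h => by simp only [Option.elim]; linarith⟩
    simp only [Option.elim]
    let φ : (Fin n → ℝ) → ℝ := fun x => ∑ R ∈ 𝓡 with eval (w i) R = 0, eval x R ^ 2
    have hφ : Continuous φ := continuous_finsetSum _ fun R _ => (hcR R).pow 2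
    have hcomp : IsCompact (B i \ (U i ∪ U' i)) :=
      (hBc i).diff (Metric.isOpen_thickening.union Metric.isOpen_thickening)
    have hpos : ∃ e > 0, ∀ x ∈ B i \ (U i ∪ U' i), e ≤ φ x := by
      by_cases hne : (B i \ (U i ∪ U' i)).Nonempty
      · obtain ⟨x, hx, hmin⟩ := hcomp.exists_isMinOn hne hφ.continuousOn
        refine ⟨φ x, ?_, fun y hy => hmin hy⟩
        by_contra hle
        have h0 : φ x = 0 := le_antisymm (not_lt.1 hle) (Finset.sum_nonneg fun _ _ => sq_nonneg _)
        have h1 := (Finset.sum_eq_zero_iff_of_nonneg fun _ _ => sq_nonneg _).1 h0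
        refine hx.2 (hKU i ⟨hx.1, fun R hR hRw => ?_⟩)
        simpa using h1 R (Finset.mem_filter.2 ⟨hR, hRw⟩)
      · rw [Set.not_nonempty_iff_eq_empty] at hne
        exact ⟨1, one_pos, by simp [hne]⟩
    obtain ⟨e, he, hemin⟩ := hpos
    refine ⟨e / (𝓡.card + 1), by positivity, fun e' he' hle x hx hxR => ?_⟩
    by_contra hxU
    have h1 := hemin x ⟨hx, hxU⟩
    have h2 : φ x ≤ 𝓡.card * e' := by
      refine (Finset.sum_le_card_nsmul _ _ e' fun R hR => ?_).trans ?_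
      · exact hxR R (Finset.mem_filter.1 hR).1 (Finset.mem_filter.1 hR).2
      · rw [nsmul_eq_mul]
        gcongr
        exact Finset.filter_subset _ _
    rw [le_div_iff₀ (by positivity)] at hle
    nlinarith
  have hδε : δ < ε := hδK none
  replace hδK : ∀ i, ∀ x ∈ B i, (∀ R ∈ 𝓡, eval (w i) R = 0 → eval x R ^ 2 ≤ δ) →
    x ∈ U i ∪ U' i := fun i => hδK (some i)
  let O : Fin N → Set (Fin n → ℝ) := fun i =>
    {x | ∑ j, x j ^ 2 < ρ} ∩ {x | ∀ R ∈ 𝓡, (eval (w i) R = 0 → eval x R ^ 2 < δ) ∧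
      (eval (w i) R ≠ 0 → ε < eval x R ^ 2)}
  have hOo : ∀ i, IsOpen (O i) := by
    intro i
    have : O i = {x | ∑ j, x j ^ 2 < ρ} ∩ ⋂ R ∈ 𝓡,
        ({x | eval (w i) R = 0 → eval x R ^ 2 < δ} ∩
          {x | eval (w i) R ≠ 0 → ε < eval x R ^ 2}) := by
      ext x; simp [O]
    rw [this]
    apply (isOpen_lt (by fun_prop) continuous_const).inter
    refine isOpen_biInter_finset fun R _ => ?_
    by_cases h : eval (w i) R = 0
    · simpa [h] using isOpen_lt ((hcR R).pow 2) continuous_const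
    · simpa [h] using isOpen_lt continuous_const ((hcR R).pow 2)
  let Q : MvPolynomial (Fin n) ℝ := (C ρ - ∑ j, X j ^ 2) *
    ∏ R ∈ 𝓡, ((R ^ 2 - C δ) * (R ^ 2 - C ε))
  have hQe : ∀ x, eval x Q = (ρ - ∑ j, x j ^ 2) *
      ∏ R ∈ 𝓡, ((eval x R ^ 2 - δ) * (eval x R ^ 2 - ε)) := by
    intro x; simp [Q, map_prod]
  have hsq : ∀ (R : MvPolynomial (Fin n) ℝ) (e : ℝ), (R ^ 2 - C e).totalDegree ≤
      2 * R.totalDegree := by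
    intro R e
    refine (totalDegree_sub _ _).trans (max_le (totalDegree_pow _ _) (by simp))
  have hQd : Q.totalDegree ≤ 2 + 4 * M * Δ := by
    refine (totalDegree_mul _ _).trans (add_le_add ?_ ?_)
    · refine (totalDegree_sub _ _).trans (max_le (by simp) ?_)
      refine totalDegree_finsetSum_le fun j _ => (totalDegree_pow _ _).trans ?_
      rw [totalDegree_X]
    · refine (totalDegree_finsetProd _ _).trans ?_
      refine (Finset.sum_le_card_nsmul _ _ (4 * Δ) fun R hR => ?_).trans ?_
      · refine (totalDegree_mul _ _).trans ?_
        have h1 := hsq R δ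
        have h2 := hsq R ε
        have h3 := hΔ R hR
        omega
      · rw [smul_eq_mul]
        calc 𝓡.card * (4 * Δ) ≤ M * (4 * Δ) := Nat.mul_le_mul_right _ hM
          _ = 4 * M * Δ := by ring
  have hwO : ∀ i, w i ∈ O i := by
    refine fun i => ⟨hρ i, fun R hR => ⟨fun h => ?_, fun h => hεw (i, ⟨R, hR⟩) h⟩⟩
    rw [h]; simpa using hδ
  have hwK : ∀ i, w i ∈ K i :=
    fun i => ⟨⟨(hρ i).le, fun R hR h => (hεw (i, ⟨R, hR⟩) h).le⟩, fun R _ h => h⟩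
  refine card_regions_le Q hQd (fun i => U i ∩ O i)
    (fun i => Metric.isOpen_thickening.inter (hOo i)) ?_ ?_ ?_ ?_
  · exact fun i => hballc.isBounded.subset fun x hx => Set.mem_ofPred_eq ▸ le_of_lt hx.2.1
  · refine fun i => ⟨w i, ⟨Metric.self_subset_thickening hη _ ⟨hwK i, rfl⟩, hwO i⟩, ?_⟩
    rw [hQe]
    refine mul_ne_zero (by linarith [hρ i]) (Finset.prod_ne_zero_iff.2 fun R hR => ?_)
    by_cases h : eval (w i) R = 0
    · rw [h]; apply mul_ne_zero <;> norm_num <;> linarith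
    · have := hεw (i, ⟨R, hR⟩) h
      simp only at this
      apply mul_ne_zero <;> linarith
  · intro i x hx
    by_contra hQx
    rw [hQe] at hQx
    obtain ⟨hne1, hne2⟩ := mul_ne_zero_iff.1 hQx
    have hne2 := Finset.prod_ne_zero_iff.1 hne2
    have hxcl : x ∈ closure (O i) := closure_mono Set.inter_subset_right hx.1
    have hs : ∑ j, x j ^ 2 ≤ ρ := by
      have : closure (O i) ⊆ {x | ∑ j, x j ^ 2 ≤ ρ} :=
        closure_minimal (fun y hy => Set.mem_ofPred_eq ▸ le_of_lt hy.1)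
          (isClosed_le (by fun_prop) continuous_const)
      exact this hxcl
    have h1 : ∀ R ∈ 𝓡, eval (w i) R = 0 → eval x R ^ 2 ≤ δ := by
      intro R hR h
      have : closure (O i) ⊆ {x | eval x R ^ 2 ≤ δ} :=
        closure_minimal (fun y hy => le_of_lt ((hy.2 R hR).1 h))
          (isClosed_le ((hcR R).pow 2) continuous_const)
      exact this hxcl
    have h2 : ∀ R ∈ 𝓡, eval (w i) R ≠ 0 → ε ≤ eval x R ^ 2 := by
      intro R hR h
      have : closure (O i) ⊆ {x | ε ≤ eval x R ^ 2} :=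
        closure_minimal (fun y hy => le_of_lt ((hy.2 R hR).2 h))
          (isClosed_le continuous_const ((hcR R).pow 2))
      exact this hxcl
    have hxU : x ∈ U i := by
      rcases hδK i x ⟨hs, h2⟩ h1 with h | h
      · exact h
      · exfalso
        obtain ⟨y, hyU', hyU⟩ := mem_closure_iff.1 hx.1 (U' i) Metric.isOpen_thickening h
        exact Set.disjoint_left.1 (hηd i) hyU.1 hyU'
    have hxO : x ∈ O i := by
      refine ⟨lt_of_le_of_ne hs fun h => hne1 (by rw [h]; ring), fun R hR => ⟨fun h => ?_, fun h => ?_⟩⟩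
      · exact lt_of_le_of_ne (h1 R hR h) fun h' => hne2 R hR (by rw [h']; ring)
      · exact lt_of_le_of_ne (h2 R hR h) fun h' => hne2 R hR (by rw [← h']; ring)
    have := hx.2
    rw [(Metric.isOpen_thickening.inter (hOo i)).interior_eq] at this
    exact this ⟨hxU, hxO⟩
  · intro i i' hne
    rw [Set.disjoint_left]
    rintro x ⟨hxU, hxO⟩ ⟨hxU', hxO'⟩
    -- both witnesses have the same zero pattern, hence `K i = K i'`
    have hz : ∀ R ∈ 𝓡, eval (w i) R = 0 ↔ eval (w i') R = 0 := by
      intro R hR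
      constructor
      · intro h
        by_contra h'
        linarith [(hxO.2 R hR).1 h, (hxO'.2 R hR).2 h']
      · intro h
        by_contra h'
        linarith [(hxO'.2 R hR).1 h, (hxO.2 R hR).2 h']
    have hKK : K i' ⊆ K i := by
      rintro y ⟨⟨hy1, hy2⟩, hy3⟩
      exact ⟨⟨hy1, fun R hR h => hy2 R hR fun h' => h ((hz R hR).2 h')⟩,
        fun R hR h => hy3 R hR ((hz R hR).1 h)⟩
    have hsub : U i' ⊆ U' i := by
      apply Metric.thickening_subset_of_subset
      rintro y ⟨hyK, hy⟩
      refine ⟨hKK hyK, fun h => hne (hinj ?_)⟩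
      simp only [Set.mem_ofPred_eq, Set.mem_singleton_iff] at hy h
      simp only
      rw [← h, hy]
    exact Set.disjoint_left.1 (hηd i) hxU (hsub hxU')

/-! ### Traces over the roots of a truncated polynomial -/

/-- Newton's identities for a multiset of complex numbers. -/
theorem newton_multiset (s : Multiset ℂ) (k : ℕ) (hk : 0 < k) :
    (s.map (· ^ k)).sum = (-1) ^ (k + 1) * k * s.esymm k -
      ∑ a ∈ Finset.HasAntidiagonal.antidiagonal k with a.1 ∈ Set.Ioo 0 k,
        (-1) ^ a.1 * s.esymm a.1 * (s.map (· ^ a.2)).sum := by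
  obtain ⟨l, f, rfl⟩ : ∃ (l : ℕ) (f : Fin l → ℂ), s = Finset.univ.val.map f := by
    refine ⟨s.toList.length, s.toList.get, ?_⟩
    rw [Fin.univ_val_map, List.ofFn_get, Multiset.coe_toList]
  have h := congrArg (aeval f) (psum_eq_mul_esymm_sub_sum (Fin l) ℂ k hk)
  have hp : ∀ k, aeval f (psum (Fin l) ℂ k) = ((Finset.univ.val.map f).map (· ^ k)).sum := by
    intro k
    rw [psum, map_sum, Multiset.map_map]
    simp [Finset.sum]
  rw [map_sub, map_sum, hp] at h
  rw [h]
  simp only [map_mul, map_pow, map_neg, map_one, map_natCast, hp, aeval_esymm_eq_multiset_esymm]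

/-- The univariate complex polynomial obtained from `p` by specialising all variables but the
first to `y` and keeping only the terms of degree at most `e` in the first variable. -/
noncomputable def truncAt {N : ℕ} (p : MvPolynomial (Fin (N + 1)) ℝ) (e : ℕ) (y : Fin N → ℂ) :
    Polynomial ℂ :=
  ∑ a ∈ Finset.range (e + 1),
    Polynomial.C (aeval y ((finSuccEquiv ℝ N p).coeff a)) * Polynomial.X ^ a

theorem coeff_truncAt {N : ℕ} (p : MvPolynomial (Fin (N + 1)) ℝ) (e : ℕ) (y : Fin N → ℂ) (a : ℕ) :
    (truncAt p e y).coeff a = if a ≤ e then aeval y ((finSuccEquiv ℝ N p).coeff a) else 0 := by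
  simp only [truncAt, Polynomial.finsetSum_coeff, Polynomial.coeff_C_mul, Polynomial.coeff_X_pow,
    mul_ite, mul_one, mul_zero, Finset.sum_ite_eq, Finset.mem_range, Nat.lt_succ_iff]

theorem natDegree_truncAt {N : ℕ} (p : MvPolynomial (Fin (N + 1)) ℝ) (e : ℕ) (y : Fin N → ℂ)
    (h : aeval y ((finSuccEquiv ℝ N p).coeff e) ≠ 0) : (truncAt p e y).natDegree = e := by
  apply Polynomial.natDegree_eq_of_le_of_coeff_ne_zero
  · rw [Polynomial.natDegree_le_iff_coeff_eq_zero]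
    intro a ha
    rw [coeff_truncAt, if_neg (by omega)]
  · rw [coeff_truncAt, if_pos le_rfl]; exact h

theorem esymm_roots_truncAt {N : ℕ} (p : MvPolynomial (Fin (N + 1)) ℝ) (e : ℕ) (y : Fin N → ℂ)
    (h : aeval y ((finSuccEquiv ℝ N p).coeff e) ≠ 0) (i : ℕ) :
    aeval y ((finSuccEquiv ℝ N p).coeff e) * (truncAt p e y).roots.esymm i =
      if i ≤ e then (-1) ^ i * aeval y ((finSuccEquiv ℝ N p).coeff (e - i)) else 0 := by
  have hd := natDegree_truncAt p e y h
  have hc : (truncAt p e y).roots.card = (truncAt p e y).natDegree :=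
    Polynomial.splits_iff_card_roots.mp (IsAlgClosed.splits _)
  have hl : (truncAt p e y).leadingCoeff = aeval y ((finSuccEquiv ℝ N p).coeff e) := by
    rw [Polynomial.leadingCoeff, hd, coeff_truncAt, if_pos le_rfl]
  split_ifs with hi
  · have := Polynomial.coeff_eq_esymm_roots_of_card hc (k := e - i) (by omega)
    rw [hl, hd, coeff_truncAt, if_pos (by omega), show e - (e - i) = i by omega] at this
    rw [this]
    have h1 : ((-1 : ℂ) ^ i) * (-1) ^ i = 1 := by rw [← mul_pow]; simp
    linear_combination (-aeval y ((finSuccEquiv ℝ N p).coeff e) *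
      (truncAt p e y).roots.esymm i) * h1
  · rw [Multiset.esymm, Multiset.powersetCard_eq_empty]
    · simp
    · rw [hc, hd]; omega

theorem totalDegree_coeff_finSucc_le {N D : ℕ} {p : MvPolynomial (Fin (N + 1)) ℝ}
    (hp : p.totalDegree ≤ D) (a : ℕ) : ((finSuccEquiv ℝ N p).coeff a).totalDegree ≤ D := by
  by_cases h : (finSuccEquiv ℝ N p).coeff a = 0
  · simp [h]
  · have := totalDegree_coeff_finSuccEquiv_add_le p a h
    omega

/-- The power sums of the roots of `truncAt p e y`, cleared of denominators, are polynomials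
in `y`; this is Newton's recursion. -/
theorem exists_power_sum {N D : ℕ} (p : MvPolynomial (Fin (N + 1)) ℝ) (hp : p.totalDegree ≤ D)
    (e k : ℕ) : ∃ T : MvPolynomial (Fin N) ℝ, T.totalDegree ≤ k * D ∧ ∀ y : Fin N → ℂ,
      aeval y ((finSuccEquiv ℝ N p).coeff e) ≠ 0 →
      aeval y T = aeval y ((finSuccEquiv ℝ N p).coeff e) ^ k *
        ((truncAt p e y).roots.map (· ^ k)).sum := by
  induction k using Nat.strong_induction_on with
  | _ k ih =>
  rcases Nat.eq_zero_or_pos k with rfl | hk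
  · refine ⟨C (e : ℝ), by rw [totalDegree_C]; omega, fun y hy => ?_⟩
    have hc : (truncAt p e y).roots.card = (truncAt p e y).natDegree :=
      Polynomial.splits_iff_card_roots.mp (IsAlgClosed.splits _)
    simp [hc, natDegree_truncAt p e y hy]
  choose! T hTd hT using ih
  set c := (finSuccEquiv ℝ N p).coeff e with hcdef
  let E : ℕ → MvPolynomial (Fin N) ℝ := fun i =>
    if i ≤ e then (-1) ^ i * (finSuccEquiv ℝ N p).coeff (e - i) else 0
  have hcd : c.totalDegree ≤ D := totalDegree_coeff_finSucc_le hp e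
  have hneg : ∀ i, ((-1 : MvPolynomial (Fin N) ℝ) ^ i).totalDegree = 0 := by
    intro i
    rcases neg_one_pow_eq_or (MvPolynomial (Fin N) ℝ) i with h | h <;> rw [h] <;> simp
  have hEd : ∀ i, (E i).totalDegree ≤ D := by
    intro i
    simp only [E]
    split_ifs
    · refine (totalDegree_mul _ _).trans ?_
      rw [hneg, zero_add]
      exact totalDegree_coeff_finSucc_le hp _
    · simp
  have hE : ∀ y : Fin N → ℂ, aeval y c ≠ 0 → ∀ i,
      aeval y (E i) = aeval y c * (truncAt p e y).roots.esymm i := by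
    intro y hy i
    rw [hcdef, esymm_roots_truncAt p e y hy i]
    simp only [E]
    split_ifs <;> simp
  have hcp : ∀ i, (c ^ i).totalDegree ≤ i * D := fun i =>
    (totalDegree_pow _ _).trans (Nat.mul_le_mul_left _ hcd)
  refine ⟨C ((-1) ^ (k + 1) * (k : ℝ)) * (E k * c ^ (k - 1)) -
    ∑ a ∈ Finset.HasAntidiagonal.antidiagonal k with a.1 ∈ Set.Ioo 0 k,
      (-1) ^ a.1 * (E a.1 * (c ^ (a.1 - 1) * T a.2)), ?_, ?_⟩
  · refine (totalDegree_sub _ _).trans (max_le ?_ ?_)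
    · refine (totalDegree_mul _ _).trans ?_
      rw [totalDegree_C, zero_add]
      refine (totalDegree_mul _ _).trans ?_
      refine (add_le_add (hEd k) (hcp (k - 1))).trans ?_
      obtain ⟨k, rfl⟩ : ∃ k', k = k' + 1 := ⟨k - 1, by omega⟩
      simp; nlinarith
    · refine totalDegree_finsetSum_le fun a ha => ?_
      simp only [Finset.mem_filter, Finset.HasAntidiagonal.mem_antidiagonal, Set.mem_Ioo] at ha
      obtain ⟨i, j⟩ := a
      obtain ⟨i, rfl⟩ : ∃ i', i = i' + 1 := ⟨i - 1, by grind⟩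
      refine (totalDegree_mul _ _).trans ?_
      rw [hneg, zero_add]
      refine (totalDegree_mul _ _).trans ?_
      refine (add_le_add (hEd _) (totalDegree_mul _ _)).trans ?_
      refine (add_le_add le_rfl (add_le_add (hcp _) (hTd j (by omega)))).trans ?_
      have : i + 1 + j = k := ha.1
      subst this
      simp; nlinarith
  · intro y hy
    rw [newton_multiset _ k hk, map_sub, map_sum, mul_sub, Finset.mul_sum]
    congr 1
    · simp only [map_mul, map_pow, algHom_C, hE y hy k]
      obtain ⟨k, rfl⟩ : ∃ k', k = k' + 1 := ⟨k - 1, by omega⟩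
      simp
      ring
    · refine Finset.sum_congr rfl fun a ha => ?_
      simp only [Finset.mem_filter, Finset.HasAntidiagonal.mem_antidiagonal, Set.mem_Ioo] at ha
      obtain ⟨i, j⟩ := a
      obtain ⟨i, rfl⟩ : ∃ i', i = i' + 1 := ⟨i - 1, by grind⟩
      have : i + 1 + j = k := ha.1
      simp only [map_mul, map_pow, hE y hy, hT j (by omega) y hy]
      subst this
      simp
      ring

theorem aeval_cons_eq {N : ℕ} (Q : MvPolynomial (Fin (N + 1)) ℝ) {q : ℕ} (hq : Q.totalDegree ≤ q)
    (ξ : ℂ) (y : Fin N → ℂ) : aeval (Fin.cons ξ y : Fin (N + 1) → ℂ) Q =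
      ∑ a ∈ Finset.range (q + 1), aeval y ((finSuccEquiv ℝ N Q).coeff a) * ξ ^ a := by
  have hom : (aeval (Fin.cons ξ y : Fin (N + 1) → ℂ) : MvPolynomial (Fin (N + 1)) ℝ →ₐ[ℝ] ℂ).toRingHom
      = (Polynomial.evalRingHom ξ).comp ((Polynomial.mapRingHom
        (aeval y : MvPolynomial (Fin N) ℝ →ₐ[ℝ] ℂ).toRingHom).comp
          (finSuccEquiv ℝ N).toAlgHom.toRingHom) := by
    apply MvPolynomial.ringHom_ext
    · intro r; simp [finSuccEquiv_apply]
    · intro i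
      refine Fin.cases ?_ (fun i => ?_) i
      · simp [finSuccEquiv_X_zero]
      · simp [finSuccEquiv_X_succ]
  have key : aeval (Fin.cons ξ y : Fin (N + 1) → ℂ) Q =
      Polynomial.eval ξ ((finSuccEquiv ℝ N Q).map
        (aeval y : MvPolynomial (Fin N) ℝ →ₐ[ℝ] ℂ).toRingHom) := DFunLike.congr_fun hom Q
  rw [key, Polynomial.eval_eq_sum_range' (n := q + 1)]
  · simp
  · refine Nat.lt_succ_of_le (Polynomial.natDegree_map_le.trans ?_)
    rw [natDegree_finSuccEquiv]
    exact (degreeOf_le_totalDegree _ _).trans hq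

/-- The sum of `Q` over the roots (with multiplicity) of `truncAt p e y`, cleared of denominators by a
power of the coefficient `c` of degree `e`, is a polynomial in `y`. The exponent is `q + 1` rather
than `q` so that both sides vanish when `c(y) = 0`. -/
theorem exists_fiber_trace {N D : ℕ} (p : MvPolynomial (Fin (N + 1)) ℝ) (hp : p.totalDegree ≤ D)
    (e q : ℕ) (Q : MvPolynomial (Fin (N + 1)) ℝ) (hQ : Q.totalDegree ≤ q) :
    ∃ Q' : MvPolynomial (Fin N) ℝ, Q'.totalDegree + 1 ≤ (q + 1) * (D + 1) ∧ ∀ y : Fin N → ℂ,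
      aeval y Q' = aeval y ((finSuccEquiv ℝ N p).coeff e) ^ (q + 1) *
        ((truncAt p e y).roots.map fun ξ => aeval (Fin.cons ξ y : Fin (N + 1) → ℂ) Q).sum := by
  choose T hTd hT using exists_power_sum p hp e
  set c := (finSuccEquiv ℝ N p).coeff e with hcdef
  have hcd : c.totalDegree ≤ D := totalDegree_coeff_finSucc_le hp e
  refine ⟨∑ a ∈ Finset.range (q + 1), (finSuccEquiv ℝ N Q).coeff a * (c ^ (q + 1 - a) * T a),
    ?_, fun y => ?_⟩
  · have : (∑ a ∈ Finset.range (q + 1), (finSuccEquiv ℝ N Q).coeff a *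
        (c ^ (q + 1 - a) * T a)).totalDegree ≤ q + (q + 1) * D := by
      refine totalDegree_finsetSum_le fun a ha => ?_
      have ha := Finset.mem_range.1 ha
      refine (totalDegree_mul _ _).trans (add_le_add (totalDegree_coeff_finSucc_le hQ a) ?_)
      refine (totalDegree_mul _ _).trans ?_
      refine (add_le_add ((totalDegree_pow _ _).trans (Nat.mul_le_mul_left _ hcd)) (hTd a)).trans ?_
      rw [← add_mul]
      exact Nat.mul_le_mul_right _ (by omega)
    nlinarith
  · rw [map_sum]
    by_cases hy : aeval y c = 0
    · rw [hy, zero_pow (by omega), zero_mul]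
      refine Finset.sum_eq_zero fun a ha => ?_
      have ha := Finset.mem_range.1 ha
      rw [map_mul, map_mul, map_pow, hy, zero_pow (by omega)]
      simp
    · simp_rw [aeval_cons_eq Q hQ]
      rw [Multiset.sum_map_sum, Finset.mul_sum]
      refine Finset.sum_congr rfl fun a ha => ?_
      have ha := Finset.mem_range.1 ha
      rw [map_mul, map_mul, map_pow, hT a y hy, Multiset.sum_map_mul_left]
      rw [show q + 1 = (q + 1 - a) + a by omega, pow_add, Nat.add_sub_cancel]
      ring

/-! ### Towers of algebraic extensions and Hermite's root counting -/

/-- The distinct roots of `truncAt p e y`, or the empty set when the coefficient of degree `e`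
vanishes at `y`. -/
noncomputable def fib {N : ℕ} (p : MvPolynomial (Fin (N + 1)) ℝ) (e : ℕ) (y : Fin N → ℂ) :
    Finset ℂ :=
  open Classical in
  if aeval y ((finSuccEquiv ℝ N p).coeff e) = 0 then ∅ else (truncAt p e y).roots.toFinset

/-- A tower of algebraic extensions over `ℝⁿ`: level `j` adds one coordinate in front, as a root of
the polynomial `(π j).1` truncated at degree `(π j).2`. -/
abbrev Tower (n : ℕ) := ∀ j : ℕ, MvPolynomial (Fin (n + j + 1)) ℝ × ℕ

/-- The finite set of complex points of the tower at level `j` above `x`. -/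
noncomputable def towerPts {n : ℕ} (π : Tower n) (x : Fin n → ℝ) : ∀ j, Finset (Fin (n + j) → ℂ)
  | 0 => {fun i => (x i : ℂ)}
  | j + 1 => open Classical in
    (towerPts π x j).biUnion fun y =>
      (fib (π j).1 (π j).2 y).image fun ξ => (Fin.cons ξ y : Fin (n + j + 1) → ℂ)

theorem mem_fib {N : ℕ} {p : MvPolynomial (Fin (N + 1)) ℝ} {e : ℕ} {y : Fin N → ℂ} {ξ : ℂ} :
    ξ ∈ fib p e y ↔ aeval y ((finSuccEquiv ℝ N p).coeff e) ≠ 0 ∧ (truncAt p e y).eval ξ = 0 := by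
  unfold fib
  split_ifs with h
  · simp [h]
  · have : truncAt p e y ≠ 0 := by
      intro h0
      have := coeff_truncAt p e y e
      rw [if_pos le_rfl, h0, Polynomial.coeff_zero] at this
      exact h this.symm
    simp [h, this]

theorem card_fib_le {N : ℕ} (p : MvPolynomial (Fin (N + 1)) ℝ) (e : ℕ) (y : Fin N → ℂ) :
    (fib p e y).card ≤ e := by
  unfold fib
  split_ifs with h
  · simp
  · exact (Multiset.toFinset_card_le _).trans
      ((Polynomial.card_roots' _).trans (natDegree_truncAt p e y h).le)

theorem cons_mem_towerPts {n : ℕ} {π : Tower n} {x : Fin n → ℝ} {j : ℕ} {ξ : ℂ}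
    {y : Fin (n + j) → ℂ} : (Fin.cons ξ y : Fin (n + j + 1) → ℂ) ∈ towerPts π x (j + 1) ↔
      y ∈ towerPts π x j ∧ ξ ∈ fib (π j).1 (π j).2 y := by
  simp only [towerPts, Finset.mem_biUnion, Finset.mem_image]
  constructor
  · rintro ⟨y', hy', ξ', hξ', h⟩
    obtain ⟨rfl, rfl⟩ := Fin.cons_inj.1 h
    exact ⟨hy', hξ'⟩
  · rintro ⟨hy, hξ⟩
    exact ⟨y, hy, ξ, hξ, rfl⟩

theorem sum_towerPts_succ {n : ℕ} (π : Tower n) (x : Fin n → ℝ) (j : ℕ)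
    (F : (Fin (n + j + 1) → ℂ) → ℂ) : ∑ z ∈ towerPts π x (j + 1), F z =
      ∑ y ∈ towerPts π x j, ∑ ξ ∈ fib (π j).1 (π j).2 y, F (Fin.cons ξ y) := by
  classical
  rw [towerPts, Finset.sum_biUnion]
  · refine Finset.sum_congr rfl fun y _ => ?_
    rw [Finset.sum_image]
    intro a _ b _ h
    exact (Fin.cons_inj.1 h).1
  · intro y _ y' _ hne
    rw [Function.onFun, Finset.disjoint_left]
    rintro z hz hz'
    obtain ⟨a, _, rfl⟩ := Finset.mem_image.1 hz
    obtain ⟨b, _, h⟩ := Finset.mem_image.1 hz'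
    exact hne (Fin.cons_inj.1 h).2.symm

/-- Weighted sums of a polynomial over the points of a tower are polynomials on the base; the
weights vanish nowhere and do not depend on the polynomial. -/
theorem exists_tower_trace {n D : ℕ} (π : Tower n) (j : ℕ)
    (hπ : ∀ i < j, (π i).1.totalDegree ≤ D) (q : ℕ) :
    ∃ w : (Fin n → ℝ) → (Fin (n + j) → ℂ) → ℂ, (∀ x, ∀ y ∈ towerPts π x j, w x y ≠ 0) ∧
      ∀ Q : MvPolynomial (Fin (n + j)) ℝ, Q.totalDegree ≤ q →
        ∃ R : MvPolynomial (Fin n) ℝ, R.totalDegree + 1 ≤ (q + 1) * (D + 1) ^ j ∧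
          ∀ x, ((eval x R : ℝ) : ℂ) = ∑ y ∈ towerPts π x j, w x y * aeval y Q := by
  classical
  induction j generalizing q with
  | zero =>
    refine ⟨fun _ _ => 1, fun _ _ _ => one_ne_zero, fun Q hQ => ⟨Q, by simpa using hQ, fun x => ?_⟩⟩
    simp only [towerPts, Finset.sum_singleton, one_mul]
    exact (aeval_algebraMap_apply (B := ℂ) x Q).symm ▸ rfl
  | succ j ih =>
    obtain ⟨w, hw, hR⟩ := ih (fun i hi => hπ i (by omega)) ((q + 1) * (D + 1) - 1)
    set p := (π j).1
    set e := (π j).2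
    refine ⟨fun x z => w x (Fin.tail z) * (aeval (Fin.tail z) ((finSuccEquiv ℝ _ p).coeff e) ^ (q + 1)
      * ((truncAt p e (Fin.tail z)).roots.count (z 0) : ℂ)), ?_, ?_⟩
    · intro x z hz
      rw [← Fin.cons_self_tail z] at hz
      obtain ⟨h1, h2⟩ := cons_mem_towerPts.1 hz
      have h3 := (mem_fib.1 h2).1
      refine mul_ne_zero (hw x _ h1) (mul_ne_zero (pow_ne_zero _ h3) ?_)
      have : z 0 ∈ (truncAt p e (Fin.tail z)).roots := by
        unfold fib at h2
        rw [if_neg h3] at h2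
        exact Multiset.mem_toFinset.1 h2
      exact Nat.cast_ne_zero.2 (Multiset.count_pos.2 this).ne'
    · intro Q hQ
      obtain ⟨Q', hQ'd, hQ'⟩ := exists_fiber_trace p (hπ j (by omega)) e q Q hQ
      obtain ⟨R, hRd, hRe⟩ := hR Q' (by omega)
      have hpos : 0 < (q + 1) * (D + 1) := by positivity
      refine ⟨R, ?_, fun x => ?_⟩
      · rw [Nat.sub_add_cancel hpos] at hRd
        rw [pow_succ]
        linarith
      · rw [hRe, sum_towerPts_succ]
        refine Finset.sum_congr rfl fun y _ => ?_
        rw [hQ', fib]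
        split_ifs with h
        · simp [h, p, e]
        · simp only [Fin.tail_cons, Fin.cons_zero]
          rw [Finset.sum_multiset_map_count, Finset.mul_sum, Finset.mul_sum]
          refine Finset.sum_congr rfl fun ξ _ => ?_
          rw [nsmul_eq_mul]
          ring

/-- The points of a tower can be interpolated by polynomials whose degree in every variable is at
most a bound on the degrees of the extensions. -/
theorem exists_interpolation {n D : ℕ} (π : Tower n) (j : ℕ) (hπ : ∀ i < j, (π i).2 ≤ D)
    (x : Fin n → ℝ) (y : Fin (n + j) → ℂ) (hy : y ∈ towerPts π x j) :
    ∃ a : (Fin (n + j) → Fin (D + 1)) → ℂ, ∀ z ∈ towerPts π x j,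
      ∑ α, a α * ∏ i, z i ^ (α i : ℕ) = open Classical in if z = y then 1 else 0 := by
  classical
  induction j with
  | zero =>
    refine ⟨fun α => if α = 0 then 1 else 0, fun z hz => ?_⟩
    simp only [towerPts, Finset.mem_singleton] at hy hz
    rw [if_pos (hz.trans hy.symm)]
    simp
  | succ j ih =>
    obtain ⟨ξ, y, rfl⟩ : ∃ (ξ : ℂ) (y' : Fin (n + j) → ℂ), y = Fin.cons ξ y' :=
      ⟨y 0, Fin.tail y, (Fin.cons_self_tail y).symm⟩
    obtain ⟨hy1, hy2⟩ := cons_mem_towerPts.1 hy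
    obtain ⟨a, ha⟩ := ih (fun i hi => hπ i (by omega)) y hy1
    set S := fib (π j).1 (π j).2 y with hS
    let ℓ : Polynomial ℂ := Lagrange.basis S id ξ
    have hℓd : ℓ.natDegree < D + 1 := by
      have h1 : ℓ.degree = (S.card - 1 : ℕ) := Lagrange.degree_basis (Set.injOn_id _) hy2
      have h2 := Polynomial.natDegree_eq_of_degree_eq_some h1
      have h3 := card_fib_le (π j).1 (π j).2 y
      have h4 := hπ j (by omega)
      rw [← hS] at h3
      omega
    refine ⟨fun α => ℓ.coeff (α 0) * a (Fin.tail α), fun z hz => ?_⟩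
    obtain ⟨η, z, rfl⟩ : ∃ (η : ℂ) (z' : Fin (n + j) → ℂ), z = Fin.cons η z' :=
      ⟨z 0, Fin.tail z, (Fin.cons_self_tail z).symm⟩
    obtain ⟨hz1, hz2⟩ := cons_mem_towerPts.1 hz
    have hsum : ∑ α : Fin (n + j + 1) → Fin (D + 1), (ℓ.coeff (α 0) * a (Fin.tail α)) *
        ∏ i, (Fin.cons η z : Fin (n + j + 1) → ℂ) i ^ (α i : ℕ) =
        ℓ.eval η * ∑ α, a α * ∏ i, z i ^ (α i : ℕ) := by
      rw [← (Fin.consEquiv fun _ : Fin (n + j + 1) => Fin (D + 1)).sum_comp, Fintype.sum_prod_type,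
        Polynomial.eval_eq_sum_range' hℓd, Finset.sum_mul_sum, ← Fin.sum_univ_eq_sum_range
          (fun i => ∑ α, ℓ.coeff i * η ^ i * (a α * ∏ i, z i ^ (α i : ℕ)))]
      refine Finset.sum_congr rfl fun i _ => Finset.sum_congr rfl fun α _ => ?_
      simp only [Fin.consEquiv_apply, Fin.prod_univ_succ, Fin.cons_zero, Fin.cons_succ,
        show Fin.tail ((Fin.consEquiv fun _ : Fin (n + j + 1) => Fin (D + 1)) (i, α)) = α from rfl]
      ring
    refine hsum.trans ?_
    rw [ha z hz1]
    by_cases h : z = y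
    · subst h
      by_cases h' : η = ξ
      · subst h'
        have := Lagrange.eval_basis_self (s := S) (v := id) (Set.injOn_id _) hy2
        simp only [id] at this
        simp [ℓ, this]
      · have := Lagrange.eval_basis_of_ne (s := S) (v := id) (i := ξ) (j := η) (Ne.symm h') hz2
        simp only [id] at this
        rw [if_neg (fun h => h' (Fin.cons_inj.1 h).1)]
        simp [ℓ, this]
    · rw [if_neg h, if_neg (fun h' => h (Fin.cons_inj.1 h').2), mul_zero]

theorem coeff_charpoly_totalDegree_le {n d : ℕ} {ι : Type*} [Fintype ι] [DecidableEq ι]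
    (H : Matrix ι ι (MvPolynomial (Fin n) ℝ)) (hH : ∀ a b, (H a b).totalDegree ≤ d) (k : ℕ) :
    (H.charpoly.coeff k).totalDegree ≤ Fintype.card ι * d := by
  have hmul : ∀ (s : Finset ι) (F : ι → Polynomial (MvPolynomial (Fin n) ℝ)),
      (∀ i k, ((F i).coeff k).totalDegree ≤ d) →
      ∀ k, ((∏ i ∈ s, F i).coeff k).totalDegree ≤ s.card * d := by
    intro s F hF
    induction s using Finset.induction_on with
    | empty => intro k; simp [Polynomial.coeff_one]; split_ifs <;> simp
    | insert a s ha ih =>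
      intro k
      rw [Finset.prod_insert ha, Polynomial.coeff_mul, Finset.card_insert_of_notMem ha]
      refine totalDegree_finsetSum_le fun b _ => ?_
      refine (totalDegree_mul _ _).trans ((add_le_add (hF _ _) (ih _)).trans ?_)
      linarith
  rw [Matrix.charpoly, Matrix.det_apply, Polynomial.finsetSum_coeff]
  refine totalDegree_finsetSum_le fun σ _ => ?_
  have hs : ∀ p : Polynomial (MvPolynomial (Fin n) ℝ),
      ((Equiv.Perm.sign σ • p).coeff k).totalDegree = (p.coeff k).totalDegree := by
    intro p
    rcases Int.units_eq_one_or (Equiv.Perm.sign σ) with h | h <;> rw [h]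
    · simp
    · simp [totalDegree_neg]
  rw [hs]
  refine (hmul _ _ (fun i k => ?_) k).trans (by simp)
  rw [Matrix.charmatrix_apply, Polynomial.coeff_sub, Matrix.diagonal_apply, Polynomial.coeff_C]
  refine (totalDegree_sub _ _).trans (max_le ?_ ?_)
  · split_ifs
    · rw [Polynomial.coeff_X]; split_ifs <;> simp
    · simp
  · split_ifs
    · exact hH _ _
    · simp

/-- The rank of a Hermitian matrix is determined by the vanishing pattern of the coefficients of
its characteristic polynomial. -/
theorem rank_eq_of_charpoly {ι : Type*} [Fintype ι] [DecidableEq ι] (A B : Matrix ι ι ℂ)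
    (hA : A.IsHermitian) (hB : B.IsHermitian)
    (h : ∀ k ≤ Fintype.card ι, A.charpoly.coeff k = 0 ↔ B.charpoly.coeff k = 0) :
    A.rank = B.rank := by
  have key : ∀ (A : Matrix ι ι ℂ) (hA : A.IsHermitian),
      A.charpoly.natTrailingDegree + A.rank = Fintype.card ι := by
    intro A hA
    have h1 := Polynomial.rootMultiplicity_eq_natTrailingDegree' (p := A.charpoly)
    rw [← h1, ← Polynomial.count_roots, hA.roots_charpoly_eq_eigenvalues, Multiset.count_map,
      hA.rank_eq_card_non_zero_eigs, Fintype.card_subtype]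
    have h2 : (Multiset.filter (fun a => (0 : ℂ) = ((fun r : ℝ => (r : ℂ)) ∘ hA.eigenvalues) a)
        Finset.univ.val).card = (Finset.univ.filter fun i => hA.eigenvalues i = 0).card := by
      rw [Finset.card_def, Finset.filter_val]
      congr 1
      refine Multiset.filter_congr fun i _ => ?_
      exact ⟨fun h => (Complex.ofReal_eq_zero.1 h.symm), fun h => (Complex.ofReal_eq_zero.2 h).symm⟩
    refine (congrArg (· + _) h2).trans ?_
    rw [Finset.card_filter_add_card_filter_not]
    rfl
  have hAB : A.charpoly.natTrailingDegree = B.charpoly.natTrailingDegree := by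
    have hsupp : A.charpoly.support = B.charpoly.support := by
      ext k
      rw [Polynomial.mem_support_iff, Polynomial.mem_support_iff, ne_eq, ne_eq, not_iff_not]
      by_cases hk : k ≤ Fintype.card ι
      · exact h k hk
      · rw [Polynomial.coeff_eq_zero_of_natDegree_lt, Polynomial.coeff_eq_zero_of_natDegree_lt] <;>
          rw [Matrix.charpoly_natDegree_eq_dim] <;> omega
    rw [Polynomial.natTrailingDegree, Polynomial.natTrailingDegree, Polynomial.trailingDegree,
      Polynomial.trailingDegree, hsupp]
  have h1 := key A hA
  have h2 := key B hB
  omega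

/-- Hermite's root counting: the number of points of the tower above `x` at which `g` does not
vanish is determined by the vanishing pattern at `x` of few polynomials of controlled degree. The
number is the rank of the real symmetric matrix of weighted moments `∑ w(y) g(y) y^(α+β)`. -/
theorem exists_counting_polys {n D : ℕ} (π : Tower n) (j : ℕ)
    (hπ : ∀ i < j, (π i).1.totalDegree ≤ D ∧ (π i).2 ≤ D)
    (g : MvPolynomial (Fin (n + j)) ℝ) (hg : g.totalDegree ≤ D) :
    ∃ R : Fin ((D + 1) ^ (n + j) + 1) → MvPolynomial (Fin n) ℝ,
      (∀ k, (R k).totalDegree ≤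
        (D + 1) ^ (n + j) * ((D + 2 * (n + j) * D + 1) * (D + 1) ^ j)) ∧
      ∀ x x', (∀ k, eval x (R k) = 0 ↔ eval x' (R k) = 0) →
        ((towerPts π x j).filter fun y => aeval y g ≠ 0).card =
          ((towerPts π x' j).filter fun y => aeval y g ≠ 0).card := by
  classical
  obtain ⟨w, hw, htr⟩ := exists_tower_trace π j (fun i hi => (hπ i hi).1) (D + 2 * (n + j) * D)
  let ι := Fin (n + j) → Fin (D + 1)
  let mon : ι → MvPolynomial (Fin (n + j)) ℝ := fun α => ∏ i, X i ^ (α i : ℕ)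
  have hmon : ∀ α, (mon α).totalDegree ≤ (n + j) * D := by
    intro α
    refine (totalDegree_finsetProd _ _).trans ?_
    refine (Finset.sum_le_card_nsmul _ _ D fun i _ => ?_).trans (by simp)
    rw [totalDegree_X_pow]
    have := (α i).2
    omega
  have hQd : ∀ α β, (g * (mon α * mon β)).totalDegree ≤ D + 2 * (n + j) * D := by
    intro α β
    refine (totalDegree_mul _ _).trans ?_
    have h1 := totalDegree_mul (mon α) (mon β)
    have h2 := hmon α
    have h3 := hmon β
    have : 2 * (n + j) * D = (n + j) * D + (n + j) * D := by ring
    omega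
  choose R hRd hRe using fun α β => htr _ (hQd α β)
  -- `R α β` and `R β α` are chosen independently, but they have the same values
  let H : Matrix ι ι (MvPolynomial (Fin n) ℝ) := Matrix.of R
  let Hx : (Fin n → ℝ) → Matrix ι ι ℂ := fun x => H.map fun p => ((eval x p : ℝ) : ℂ)
  have hcard : Fintype.card ι = (D + 1) ^ (n + j) := by simp [ι]
  have hchar : ∀ x, (Hx x).charpoly =
      H.charpoly.map ((Complex.ofRealHom).comp (eval x)) := fun x =>
    Matrix.charpoly_map H ((Complex.ofRealHom).comp (eval x))
  have hent : ∀ x α β, Hx x α β = ∑ y ∈ towerPts π x j,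
      w x y * (aeval y g * ((∏ i, y i ^ (α i : ℕ)) * ∏ i, y i ^ (β i : ℕ))) := by
    intro x α β
    refine (hRe α β x).trans (Finset.sum_congr rfl fun y _ => ?_)
    simp [mon, map_prod]
  have hherm : ∀ x, (Hx x).IsHermitian := by
    intro x
    ext α β
    rw [Matrix.conjTranspose_apply]
    have : star (Hx x β α) = Hx x β α := Complex.conj_ofReal _
    rw [this, hent, hent]
    refine Finset.sum_congr rfl fun y _ => ?_
    ring
  have hrank : ∀ x, (Hx x).rank = ((towerPts π x j).filter fun y => aeval y g ≠ 0).card := by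
    intro x
    let Y := {y // y ∈ towerPts π x j}
    choose a ha using fun y : Y => exists_interpolation π j (fun i hi => (hπ i hi).2) x y.1 y.2
    let M : Matrix Y ι ℂ := Matrix.of fun y α => ∏ i, y.1 i ^ (α i : ℕ)
    let A : Matrix ι Y ℂ := Matrix.of fun α y => a y α
    let Dg : Matrix Y Y ℂ := Matrix.diagonal fun y => w x y.1 * aeval y.1 g
    have hMA : M * A = 1 := by
      ext z y
      rw [Matrix.mul_apply, Matrix.one_apply]
      have := ha y z.1 z.2
      simp only [M, A, Matrix.of_apply]
      rw [← Finset.sum_congr rfl fun α _ => mul_comm (a y α) _, this]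
      exact if_congr Subtype.ext_iff.symm rfl rfl
    have hH : Hx x = M.transpose * Dg * M := by
      ext α β
      rw [hent, Matrix.mul_apply, ← Finset.sum_coe_sort]
      refine Finset.sum_congr rfl fun y _ => ?_
      simp only [Dg, Matrix.mul_diagonal, Matrix.transpose_apply, M, Matrix.of_apply]
      ring
    have hD : Dg = A.transpose * Hx x * A := by
      have h1 : A.transpose * M.transpose = 1 := by
        rw [← Matrix.transpose_mul, hMA, Matrix.transpose_one]
      calc Dg = (A.transpose * M.transpose) * Dg * (M * A) := by rw [h1, hMA]; simp
        _ = _ := by rw [hH]; simp only [Matrix.mul_assoc]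
    have h1 : (Hx x).rank ≤ Dg.rank := by
      rw [hH]
      exact (Matrix.rank_mul_le_left _ _).trans (Matrix.rank_mul_le_right _ _)
    have h2 : Dg.rank ≤ (Hx x).rank := by
      rw [hD]
      exact (Matrix.rank_mul_le_left _ _).trans (Matrix.rank_mul_le_right _ _)
    rw [le_antisymm h1 h2, Matrix.rank_diagonal, ← Fintype.card_coe]
    refine Fintype.card_congr ⟨fun y => ⟨y.1.1, Finset.mem_filter.2 ⟨y.1.2, ?_⟩⟩,
      fun y => ⟨⟨y.1, (Finset.mem_filter.1 y.2).1⟩, ?_⟩, fun _ => rfl, fun _ => rfl⟩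
    · exact right_ne_zero_of_mul y.2
    · exact mul_ne_zero (hw x _ (Finset.mem_filter.1 y.2).1) (Finset.mem_filter.1 y.2).2
  refine ⟨fun k => H.charpoly.coeff k, fun k => ?_, fun x x' h => ?_⟩
  · refine (coeff_charpoly_totalDegree_le H (fun α β => ?_) k).trans
      (le_of_eq (congrArg (· * _) hcard))
    have := hRd α β
    exact (Nat.le_succ _).trans this
  · rw [← hrank, ← hrank]
    refine rank_eq_of_charpoly _ _ (hherm x) (hherm x') fun k hk => ?_
    have := h ⟨k, by omega⟩
    rw [hchar, hchar, Polynomial.coeff_map, Polynomial.coeff_map]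
    simpa using this

/-! ### Local constancy of sign patterns along a tower -/

/-- Roots depend continuously on the parameter: near `y` the fibre keeps a point close to `ξ`. -/
theorem exists_near_root {N : ℕ} (p : MvPolynomial (Fin (N + 1)) ℝ) (e : ℕ) (y : Fin N → ℂ) (ξ : ℂ)
    (hξ : ξ ∈ fib p e y) {ε : ℝ} (hε : 0 < ε) :
    ∀ᶠ y' in 𝓝 y, ∃ ξ' ∈ fib p e y', dist ξ' ξ < ε := by
  obtain ⟨hc, h0⟩ := mem_fib.1 hξ
  set c := (finSuccEquiv ℝ N p).coeff e with hcdef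
  have hca : ∀ P : MvPolynomial (Fin N) ℝ, Continuous fun y' : Fin N → ℂ => aeval y' P := by
    intro P
    simp only [aeval_def, eval₂_eq_eval_map]
    exact MvPolynomial.continuous_eval _
  have hcont : Continuous fun y' : Fin N → ℂ => ‖(truncAt p e y').eval ξ‖ := by
    simp only [truncAt, Polynomial.eval_finsetSum, Polynomial.eval_mul, Polynomial.eval_C,
      Polynomial.eval_pow, Polynomial.eval_X]
    exact (continuous_finsetSum _ fun a _ => (hca _).mul continuous_const).norm
  have hlt : ‖(truncAt p e y).eval ξ‖ < ‖aeval y c‖ * ε ^ e := by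
    rw [h0, norm_zero]
    have := norm_pos_iff.2 hc
    positivity
  have h1 := hcont.continuousAt.eventually_lt (((hca c).norm.mul continuous_const).continuousAt) hlt
  have h2 := (hca c).continuousAt.eventually_ne hc
  filter_upwards [h1, h2] with y' hy' hc'
  by_contra hno
  push Not at hno
  have hd := natDegree_truncAt p e y' hc'
  have hcard : (truncAt p e y').roots.card = e := by
    rw [Polynomial.splits_iff_card_roots.mp (IsAlgClosed.splits _), hd]
  have hprod := (IsAlgClosed.splits (truncAt p e y')).eq_prod_roots
  have hl : (truncAt p e y').leadingCoeff = aeval y' c := by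
    rw [Polynomial.leadingCoeff, hd, coeff_truncAt, if_pos le_rfl]
  have hne : truncAt p e y' ≠ 0 := by
    rw [← Polynomial.leadingCoeff_ne_zero, hl]; exact hc'
  have hev : (truncAt p e y').eval ξ = aeval y' c *
      ((truncAt p e y').roots.map fun a => ξ - a).prod := by
    conv_lhs => rw [hprod, hl]
    rw [Polynomial.eval_mul, Polynomial.eval_C, Polynomial.eval_multiset_prod, Multiset.map_map]
    simp
  have hge : ∀ s : Multiset ℂ, (∀ a ∈ s, ε ≤ dist a ξ) →
      ε ^ s.card ≤ ‖(s.map fun a => ξ - a).prod‖ := by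
    intro s
    induction s using Multiset.induction_on with
    | empty => simp
    | cons a s ih =>
      intro h
      rw [Multiset.card_cons, Multiset.map_cons, Multiset.prod_cons, norm_mul, pow_succ']
      have h1 : ε ≤ ‖ξ - a‖ := by
        rw [← dist_eq_norm, dist_comm]; exact h a (Multiset.mem_cons_self _ _)
      have h2 := ih fun b hb => h b (Multiset.mem_cons_of_mem hb)
      exact mul_le_mul h1 h2 (by positivity) (norm_nonneg _)
  have := hge (truncAt p e y').roots fun a ha => hno a (mem_fib.2 ⟨hc', (Polynomial.mem_roots hne).1 ha⟩)
  rw [hcard] at this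
  rw [hev, norm_mul] at hy'
  exact absurd hy' (not_lt.2 (mul_le_mul_of_nonneg_left this (norm_nonneg _)))

theorem dist_cons_lt {N : ℕ} {a b : ℂ} {y z : Fin N → ℂ} {ε : ℝ} (hε : 0 < ε) :
    dist (Fin.cons a y : Fin (N + 1) → ℂ) (Fin.cons b z) < ε ↔ dist a b < ε ∧ dist y z < ε := by
  rw [dist_pi_lt_iff hε, dist_pi_lt_iff hε, Fin.forall_fin_succ]
  simp

/-- Every point of a tower is approximated by points of the tower above nearby parameters. -/
theorem exists_near_towerPt {n : ℕ} (π : Tower n) (x₀ : Fin n → ℝ) (j : ℕ) (ζ : Fin (n + j) → ℂ)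
    (hζ : ζ ∈ towerPts π x₀ j) {ε : ℝ} (hε : 0 < ε) :
    ∀ᶠ x in 𝓝 x₀, ∃ z ∈ towerPts π x j, dist z ζ < ε := by
  induction j generalizing ε with
  | zero =>
    simp only [towerPts, Finset.mem_singleton] at hζ
    subst hζ
    have hc : Continuous fun x : Fin n → ℝ => (fun i => (x i : ℂ)) := by fun_prop
    filter_upwards [hc.continuousAt (Metric.ball_mem_nhds _ hε)] with x hx
    exact ⟨_, Finset.mem_singleton_self _, hx⟩
  | succ j ih =>
    obtain ⟨ξ, y, rfl⟩ : ∃ (ξ : ℂ) (y' : Fin (n + j) → ℂ), ζ = Fin.cons ξ y' :=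
      ⟨ζ 0, Fin.tail ζ, (Fin.cons_self_tail ζ).symm⟩
    obtain ⟨hy, hξ⟩ := cons_mem_towerPts.1 hζ
    obtain ⟨δ, hδ, hball⟩ := Metric.eventually_nhds_iff.1 (exists_near_root _ _ y ξ hξ hε)
    filter_upwards [ih y hy (lt_min hδ hε)] with x ⟨z, hz, hd⟩
    obtain ⟨ξ', h1, h2⟩ := hball (hd.trans_le (min_le_left _ _))
    exact ⟨Fin.cons ξ' z, cons_mem_towerPts.2 ⟨hz, h1⟩,
      (dist_cons_lt hε).2 ⟨h2, hd.trans_le (min_le_right _ _)⟩⟩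

/-- If every point of a well separated finite set `V₀` is approximated by a set `V` that has no
more elements, then the approximation is a bijection. -/
theorem matching {E : Type*} [MetricSpace E] (V₀ V : Finset E) {ε : ℝ}
    (hsep : ∀ a ∈ V₀, ∀ b ∈ V₀, a ≠ b → 2 * ε ≤ dist a b)
    (happ : ∀ a ∈ V₀, ∃ z ∈ V, dist z a < ε) (hcard : V.card ≤ V₀.card) :
    (∀ z ∈ V, ∃ a ∈ V₀, dist z a < ε) ∧
    ∀ a ∈ V₀, ∀ z ∈ V, ∀ z' ∈ V, dist z a < ε → dist z' a < ε → z = z' := by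
  classical
  choose! φ hφ hφd using happ
  have hsep' : ∀ a ∈ V₀, ∀ b ∈ V₀, ∀ z, dist z a < ε → dist z b < ε → a = b := by
    intro a ha b hb z h1 h2
    by_contra hne
    have := hsep a ha b hb hne
    have h3 := dist_triangle_left a b z
    linarith
  have hinj : Set.InjOn φ V₀ := fun a ha b hb h =>
    hsep' a ha b hb (φ a) (hφd a ha) (h ▸ hφd b hb)
  have himg : V₀.image φ = V :=
    Finset.eq_of_subset_of_card_le (Finset.image_subset_iff.2 hφ)
      (by rw [Finset.card_image_of_injOn hinj]; exact hcard)
  have hsurj : ∀ z ∈ V, ∃ a ∈ V₀, φ a = z := fun z hz => by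
    rw [← himg] at hz; exact Finset.mem_image.1 hz
  constructor
  · intro z hz
    obtain ⟨a, ha, rfl⟩ := hsurj z hz
    exact ⟨a, ha, hφd a ha⟩
  · intro a ha z hz z' hz' h h'
    obtain ⟨b, hb, rfl⟩ := hsurj z hz
    obtain ⟨b', hb', rfl⟩ := hsurj z' hz'
    rw [hsep' b hb a ha _ (hφd b hb) h, hsep' b' hb' a ha _ (hφd b' hb') h']

/-- As long as the number of points of the tower and the numbers of points with `g i ≠ 0` do not
change, a point of the tower continues uniquely to nearby parameters, and so do the vanishing
conditions `g i = 0`. -/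
theorem exists_unique_near {n j : ℕ} {ι : Type*} [Finite ι] (π : Tower n) (x₀ : Fin n → ℝ)
    (g : ι → MvPolynomial (Fin (n + j)) ℝ) (ζ : Fin (n + j) → ℂ) (hζ : ζ ∈ towerPts π x₀ j) :
    ∀ᶠ ε in 𝓝[>] (0 : ℝ), ∀ᶠ x in 𝓝 x₀,
      (towerPts π x j).card = (towerPts π x₀ j).card →
      (∀ i, ((towerPts π x j).filter fun y => aeval y (g i) ≠ 0).card =
        ((towerPts π x₀ j).filter fun y => aeval y (g i) ≠ 0).card) →
      ∃ z ∈ towerPts π x j, dist z ζ < ε ∧ (∀ z' ∈ towerPts π x j, dist z' ζ < ε → z' = z) ∧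
        ∀ i, aeval ζ (g i) = 0 → aeval z (g i) = 0 := by
  classical
  set V₀ := towerPts π x₀ j with hV₀
  have hca : ∀ P : MvPolynomial (Fin (n + j)) ℝ,
      Continuous fun y' : Fin (n + j) → ℂ => aeval y' P := by
    intro P
    simp only [aeval_def, eval₂_eq_eval_map]
    exact MvPolynomial.continuous_eval _
  have hsep : ∀ᶠ ε in 𝓝[>] (0 : ℝ), ∀ a ∈ V₀, ∀ b ∈ V₀, a ≠ b → 2 * ε ≤ dist a b := by
    rw [eventually_all_finset]; intro a _
    rw [eventually_all_finset]; intro b _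
    by_cases hab : a = b
    · exact Eventually.of_forall fun _ h => absurd hab h
    · have : (0 : ℝ) < dist a b / 2 := by have := dist_pos.2 hab; positivity
      filter_upwards [nhdsWithin_le_nhds (Iio_mem_nhds this)] with ε hε _
      have : ε < dist a b / 2 := hε
      linarith
  have hnz : ∀ᶠ ε in 𝓝[>] (0 : ℝ), ∀ i, ∀ a ∈ V₀, aeval a (g i) ≠ 0 →
      ∀ z, dist z a < ε → aeval z (g i) ≠ 0 := by
    rw [eventually_all]; intro i
    rw [eventually_all_finset]; intro a _
    by_cases h : aeval a (g i) = 0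
    · exact Eventually.of_forall fun _ h' => absurd h h'
    · obtain ⟨δ, hδ, hb⟩ := Metric.eventually_nhds_iff.1 ((hca (g i)).continuousAt.eventually_ne h)
      filter_upwards [nhdsWithin_le_nhds (Iio_mem_nhds hδ)] with ε hε _ z hz
      exact hb (lt_trans hz hε)
  filter_upwards [hsep, hnz, self_mem_nhdsWithin] with ε hsep hnz hε
  have hε : 0 < ε := hε
  have happ : ∀ᶠ x in 𝓝 x₀, ∀ a ∈ V₀, ∃ z ∈ towerPts π x j, dist z a < ε := by
    rw [eventually_all_finset]
    exact fun a ha => exists_near_towerPt π x₀ j a ha hε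
  filter_upwards [happ] with x happ hcard hcardg
  obtain ⟨z, hz, hzd⟩ := happ ζ hζ
  have hm := (matching V₀ _ hsep happ hcard.le).2
  refine ⟨z, hz, hzd, fun z' hz' h => hm ζ hζ z' hz' z hz h hzd, fun i hi => ?_⟩
  by_contra hne
  have hmg := (matching (V₀.filter fun y => aeval y (g i) ≠ 0)
    ((towerPts π x j).filter fun y => aeval y (g i) ≠ 0) (ε := ε)
    (fun a ha b hb => hsep a (Finset.mem_filter.1 ha).1 b (Finset.mem_filter.1 hb).1)
    (fun a ha => by
      obtain ⟨ha1, ha2⟩ := Finset.mem_filter.1 ha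
      obtain ⟨u, hu, hud⟩ := happ a ha1
      exact ⟨u, Finset.mem_filter.2 ⟨hu, hnz i a ha1 ha2 u hud⟩, hud⟩) (hcardg i).le).1
  obtain ⟨a, ha, had⟩ := hmg z (Finset.mem_filter.2 ⟨hz, hne⟩)
  obtain ⟨ha1, ha2⟩ := Finset.mem_filter.1 ha
  have : a = ζ := by
    by_contra hna
    have h1 := hsep a ha1 ζ hζ hna
    have h2 := dist_triangle_left a ζ z
    linarith
  exact ha2 (this ▸ hi)

/-- The polynomials of a tower are real, so its points above a real `x` are closed under complex
conjugation. This is what keeps the continuation of a real point real. -/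
theorem conj_mem_towerPts {n : ℕ} (π : Tower n) (x : Fin n → ℝ) (j : ℕ) (z : Fin (n + j) → ℂ)
    (hz : z ∈ towerPts π x j) : (fun i => (starRingEnd ℂ) (z i)) ∈ towerPts π x j := by
  have hconj : ∀ {N : ℕ} (y : Fin N → ℂ) (P : MvPolynomial (Fin N) ℝ),
      aeval (fun i => (starRingEnd ℂ) (y i)) P = (starRingEnd ℂ) (aeval y P) := by
    intro N y P
    exact (comp_aeval_apply y (Complex.conjAe : ℂ →ₐ[ℝ] ℂ) P).symm
  induction j with
  | zero =>
    simp only [towerPts, Finset.mem_singleton] at hz ⊢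
    subst hz
    simp
  | succ j ih =>
    obtain ⟨ξ, y, rfl⟩ : ∃ (ξ : ℂ) (y' : Fin (n + j) → ℂ), z = Fin.cons ξ y' :=
      ⟨z 0, Fin.tail z, (Fin.cons_self_tail z).symm⟩
    obtain ⟨hy, hξ⟩ := cons_mem_towerPts.1 hz
    have : (fun i => (starRingEnd ℂ) ((Fin.cons ξ y : Fin (n + j + 1) → ℂ) i)) =
        Fin.cons ((starRingEnd ℂ) ξ) fun i => (starRingEnd ℂ) (y i) := by
      funext i
      refine Fin.cases ?_ (fun i => ?_) i <;> simp
    refine (this ▸ cons_mem_towerPts.2 ⟨ih y hy, ?_⟩)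
    obtain ⟨h1, h2⟩ := mem_fib.1 hξ
    refine mem_fib.2 ⟨?_, ?_⟩
    · rw [hconj]; exact (map_ne_zero _).2 h1
    · have := congrArg (starRingEnd ℂ) h2
      simp only [truncAt, Polynomial.eval_finsetSum, Polynomial.eval_mul, Polynomial.eval_C,
        Polynomial.eval_pow, Polynomial.eval_X, map_sum, map_mul, map_pow, map_zero] at this ⊢
      simpa only [hconj] using this

/-- The point `(val (j-1) x, …, val 0 x, x)`, most recent value first. -/
def stack {n : ℕ} (val : ℕ → (Fin n → ℝ) → ℝ) (x : Fin n → ℝ) : ∀ j, Fin (n + j) → ℝ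
  | 0 => x
  | j + 1 => (Fin.cons (val j x) (stack val x j) : Fin (n + j + 1) → ℝ)

/-- The complex point with real coordinates `u`. -/
def toC {N : ℕ} (u : Fin N → ℝ) : Fin N → ℂ := fun i => (u i : ℂ)

theorem aeval_toC {N : ℕ} (u : Fin N → ℝ) (P : MvPolynomial (Fin N) ℝ) :
    aeval (toC u) P = ((eval u P : ℝ) : ℂ) := by
  exact (aeval_algebraMap_apply (B := ℂ) u P).trans rfl

theorem dist_toC {N : ℕ} (u v : Fin N → ℝ) : dist (toC u) (toC v) = dist u v := by
  rw [dist_pi_def, dist_pi_def]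
  congr 2
  funext i
  rw [toC, toC, ← NNReal.coe_inj, coe_nndist, coe_nndist, Complex.dist_eq, Real.dist_eq,
    ← Complex.ofReal_sub, Complex.norm_real, Real.norm_eq_abs]

theorem toC_cons {N : ℕ} (a : ℝ) (u : Fin N → ℝ) :
    toC (Fin.cons a u : Fin (N + 1) → ℝ) = (Fin.cons (a : ℂ) (toC u) : Fin (N + 1) → ℂ) := by
  funext i
  refine Fin.cases ?_ (fun i => ?_) i <;> simp [toC]

theorem sign_eventually_eq {X : Type*} [TopologicalSpace X] {F : X → ℝ} {a : X}
    (hF : ContinuousAt F a) (h : F a ≠ 0) : ∀ᶠ y in 𝓝 a, Real.sign (F y) = Real.sign (F a) := by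
  rcases lt_or_gt_of_ne h with h | h
  · filter_upwards [hF.eventually_lt continuousAt_const h] with y hy
    rw [Real.sign_of_neg h, Real.sign_of_neg hy]
  · filter_upwards [continuousAt_const.eventually_lt hF h] with y hy
    rw [Real.sign_of_pos h, Real.sign_of_pos hy]

/-- If the signs of finitely many polynomials isolate the value `v` above the point `u`, then `v`
is a root of one of these polynomials specialised at `u`. -/
theorem exists_mem_fib {N B : ℕ} (q : Fin B → MvPolynomial (Fin (N + 1)) ℝ)
    (hq : ∀ i, (q i).totalDegree ≤ B) (u : Fin N → ℝ) (v : ℝ)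
    (H : ∀ η : ℝ, (∀ i, Real.sign (eval (Fin.cons η u : Fin (N + 1) → ℝ) (q i)) =
      Real.sign (eval (Fin.cons v u : Fin (N + 1) → ℝ) (q i))) → η = v) :
    ∃ a : Fin B × Fin (B + 1), (v : ℂ) ∈ fib (q a.1) a.2 (toC u) := by
  let P : Fin B → Polynomial ℝ := fun i => (finSuccEquiv ℝ N (q i)).map (eval u)
  have hP : ∀ i η, eval (Fin.cons η u : Fin (N + 1) → ℝ) (q i) = (P i).eval η :=
    fun i η => eval_eq_eval_mv_eval' u η (q i)
  obtain ⟨i, hi0, hi⟩ : ∃ i, (P i).eval v = 0 ∧ P i ≠ 0 := by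
    by_contra hno
    push Not at hno
    have hev : ∀ᶠ η in 𝓝 v, η = v := by
      have : ∀ᶠ η in 𝓝 v, ∀ i, Real.sign ((P i).eval η) = Real.sign ((P i).eval v) := by
        rw [eventually_all]
        intro i
        by_cases h : (P i).eval v = 0
        · rw [hno i h]; simp
        · exact sign_eventually_eq (P i).continuous.continuousAt h
      filter_upwards [this] with η hη
      exact H η fun i => by rw [hP, hP]; exact hη i
    have h2 : ∀ᶠ η in 𝓝[≠] v, False := by
      filter_upwards [nhdsWithin_le_nhds hev, self_mem_nhdsWithin] with η h1 h2
      exact h2 h1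
    exact (NeBot.ne (inferInstance : NeBot (𝓝[≠] v))) (eventually_false_iff_eq_bot.1 h2)
  have hdeg : (P i).natDegree ≤ B := by
    refine Polynomial.natDegree_map_le.trans ?_
    rw [natDegree_finSuccEquiv]
    exact (degreeOf_le_totalDegree _ _).trans (hq i)
  have hcoeff : ∀ a, aeval (toC u) ((finSuccEquiv ℝ N (q i)).coeff a) = (((P i).coeff a : ℝ) : ℂ) := by
    intro a
    rw [aeval_toC, Polynomial.coeff_map]
  refine ⟨(i, ⟨(P i).natDegree, by omega⟩), mem_fib.2 ⟨?_, ?_⟩⟩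
  · rw [hcoeff, Complex.ofReal_ne_zero]
    exact Polynomial.leadingCoeff_ne_zero.2 hi
  · simp only [truncAt, Polynomial.eval_finsetSum, Polynomial.eval_mul, Polynomial.eval_C,
      Polynomial.eval_pow, Polynomial.eval_X, hcoeff]
    rw [Polynomial.eval_eq_sum_range] at hi0
    exact_mod_cast congrArg (fun r : ℝ => (r : ℂ)) hi0

/-- The tower that follows the choices `a` among the polynomials `q`. -/
noncomputable def towerOf {n B J : ℕ} (q : ∀ j, Fin B → MvPolynomial (Fin (n + j + 1)) ℝ)
    (a : Fin J → Fin B × Fin (B + 1)) : Tower n := fun j =>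
  if h : j < J then (q j (a ⟨j, h⟩).1, ((a ⟨j, h⟩).2 : ℕ)) else (0, 0)

/-- Above parameters `x` near `x₀` with the same point counts, the stack of values over `x` is the
tower point that continues the stack over `x₀`: the continued point is real by uniqueness, it has the
same signs of `q j`, and by `H` these signs determine the value. -/
theorem stack_continues {n B J : ℕ} (q : ∀ j, Fin B → MvPolynomial (Fin (n + j + 1)) ℝ)
    (val : ℕ → (Fin n → ℝ) → ℝ)
    (H : ∀ j < J, ∀ (x x' : Fin n → ℝ) (η : ℝ),
      (∀ i, Real.sign (eval (Fin.cons η (stack val x j) : Fin (n + j + 1) → ℝ) (q j i)) =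
        Real.sign (eval (stack val x' (j + 1)) (q j i))) → η = val j x)
    (π : Tower n) (x₀ : Fin n → ℝ) (hπ : ∀ j ≤ J, toC (stack val x₀ j) ∈ towerPts π x₀ j)
    (same : (Fin n → ℝ) → Prop)
    (hsame : ∀ x, same x → ∀ j < J,
      (towerPts π x (j + 1)).card = (towerPts π x₀ (j + 1)).card ∧
      ∀ i, ((towerPts π x (j + 1)).filter fun y => aeval y (q j i) ≠ 0).card =
        ((towerPts π x₀ (j + 1)).filter fun y => aeval y (q j i) ≠ 0).card) (j : ℕ) :
    (j ≤ J → ∀ ε > 0, ∀ᶠ x in 𝓝 x₀, same x → toC (stack val x j) ∈ towerPts π x j ∧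
      dist (stack val x j) (stack val x₀ j) < ε) ∧
    (j < J → ∀ᶠ x in 𝓝 x₀, same x → ∀ i, Real.sign (eval (stack val x (j + 1)) (q j i)) =
      Real.sign (eval (stack val x₀ (j + 1)) (q j i))) := by
  have hstep : ∀ j < J, (∀ ε > 0, ∀ᶠ x in 𝓝 x₀, same x → toC (stack val x j) ∈ towerPts π x j ∧
      dist (stack val x j) (stack val x₀ j) < ε) → ∀ ε > 0, ∀ᶠ x in 𝓝 x₀, same x →
      (toC (stack val x (j + 1)) ∈ towerPts π x (j + 1) ∧
      dist (stack val x (j + 1)) (stack val x₀ (j + 1)) < ε) ∧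
      ∀ i, Real.sign (eval (stack val x (j + 1)) (q j i)) =
      Real.sign (eval (stack val x₀ (j + 1)) (q j i)) := by
    intro j hj ih ε₀ hε₀
    have e1 := exists_unique_near π x₀ (q j) (toC (stack val x₀ (j + 1))) (hπ (j + 1) hj)
    have e2 := exists_unique_near π x₀ (fun i : Fin 0 => i.elim0) (toC (stack val x₀ j))
      (hπ j hj.le)
    have e3 : ∀ᶠ ε in 𝓝[>] (0 : ℝ), ∀ i, eval (stack val x₀ (j + 1)) (q j i) ≠ 0 →
        ∀ u, dist u (stack val x₀ (j + 1)) < ε →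
          Real.sign (eval u (q j i)) = Real.sign (eval (stack val x₀ (j + 1)) (q j i)) := by
      rw [eventually_all]
      intro i
      by_cases h : eval (stack val x₀ (j + 1)) (q j i) = 0
      · exact Eventually.of_forall fun _ h' => absurd h h'
      · obtain ⟨δ, hδ, hb⟩ := Metric.eventually_nhds_iff.1 (sign_eventually_eq
          (MvPolynomial.continuous_eval (q j i)).continuousAt h)
        filter_upwards [nhdsWithin_le_nhds (Iio_mem_nhds hδ)] with ε hε _ z hz
        exact hb (lt_trans hz hε)
    have e4 : ∀ᶠ ε in 𝓝[>] (0 : ℝ), ε < ε₀ := nhdsWithin_le_nhds (Iio_mem_nhds hε₀)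
    have e5 : ∀ᶠ ε in 𝓝[>] (0 : ℝ), 0 < ε := self_mem_nhdsWithin
    obtain ⟨ε, h1, h2, h3, h4, hε⟩ := (e1.and (e2.and (e3.and (e4.and e5)))).exists
    filter_upwards [h1, h2, ih ε hε] with x h1 h2 h5 hx
    obtain ⟨h6, h7⟩ := hsame x hx j hj
    obtain ⟨z, hz, hzd, hzu, hz0⟩ := h1 h6 h7
    have hcardj : (towerPts π x j).card = (towerPts π x₀ j).card := by
      rcases Nat.eq_zero_or_pos j with rfl | hj0
      · simp [towerPts]
      · obtain ⟨i, rfl⟩ : ∃ i, j = i + 1 := ⟨j - 1, by omega⟩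
        exact (hsame x hx i (by omega)).1
    obtain ⟨z', -, -, hzu', -⟩ := h2 hcardj fun i => i.elim0
    obtain ⟨hs1, hs2⟩ := h5 hx
    -- uniqueness makes the continued point invariant under complex conjugation
    have hreal : (fun i => (starRingEnd ℂ) (z i)) = z := by
      refine hzu _ (conj_mem_towerPts π x _ z hz) (lt_of_le_of_lt (le_of_eq ?_) hzd)
      rw [dist_pi_def, dist_pi_def]
      congr 2
      funext i
      rw [← NNReal.coe_inj, coe_nndist, coe_nndist]
      have : toC (stack val x₀ (j + 1)) i = (starRingEnd ℂ) (toC (stack val x₀ (j + 1)) i) := by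
        simp [toC]
      rw [this, Complex.dist_conj_conj]
      simp [toC]
    obtain ⟨u, rfl⟩ : ∃ u, z = toC u := by
      refine ⟨fun i => (z i).re, funext fun i => ?_⟩
      exact (Complex.conj_eq_iff_re.1 (congrFun hreal i)).symm
    rw [dist_toC] at hzd
    obtain ⟨η, t, rfl⟩ : ∃ (η : ℝ) (t : Fin (n + j) → ℝ), u = (Fin.cons η t : Fin (n + j + 1) → ℝ) :=
      ⟨u 0, Fin.tail u, (Fin.cons_self_tail u).symm⟩
    have htail : t = stack val x j := by
      have hz2 := hz
      rw [toC_cons] at hz2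
      have ht := (cons_mem_towerPts.1 hz2).1
      have htd : dist (toC t) (toC (stack val x₀ j)) < ε := by
        have := hzd
        rw [← dist_toC, toC_cons, stack, toC_cons, dist_cons_lt hε] at this
        exact this.2
      have := (hzu' _ ht htd).trans (hzu' _ hs1 (by rw [dist_toC]; exact hs2)).symm
      funext i
      exact Complex.ofReal_injective (congrFun this i)
    subst htail
    have hsign : ∀ i, Real.sign (eval (Fin.cons η (stack val x j) : Fin (n + j + 1) → ℝ) (q j i)) =
        Real.sign (eval (stack val x₀ (j + 1)) (q j i)) := by
      intro i
      by_cases h : eval (stack val x₀ (j + 1)) (q j i) = 0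
      · have := hz0 i (by rw [aeval_toC, h]; simp)
        rw [aeval_toC, Complex.ofReal_eq_zero] at this
        rw [this, h]
      · exact h3 i h _ hzd
    have hη := H j hj x x₀ η hsign
    subst hη
    exact ⟨⟨hz, hzd.trans h4⟩, hsign⟩
  have hmain : ∀ j ≤ J, ∀ ε > 0, ∀ᶠ x in 𝓝 x₀, same x → toC (stack val x j) ∈ towerPts π x j ∧
      dist (stack val x j) (stack val x₀ j) < ε := by
    intro j
    induction j with
    | zero =>
      intro _ ε hε
      filter_upwards [Metric.ball_mem_nhds x₀ hε] with x hx _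
      exact ⟨by simp [towerPts, stack]; rfl, hx⟩
    | succ j ih =>
      intro hj ε hε
      filter_upwards [hstep j hj (ih (by omega)) ε hε] with x h hx
      exact (h hx).1
  refine ⟨hmain j, fun hj => ?_⟩
  filter_upwards [hstep j hj (hmain j hj.le) 1 one_pos] with x h hx
  exact (h hx).2

/-- Quantifier elimination for the values `val j`: the signs of the polynomials `q j` along the
stack of values are locally constant on the strata where a family of polynomials on the base, of
controlled number and degree, has a constant vanishing pattern. -/
theorem exists_zero_pattern_polys {n B J : ℕ}
    (q : ∀ j, Fin B → MvPolynomial (Fin (n + j + 1)) ℝ)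
    (hq : ∀ j i, (q j i).totalDegree ≤ B) (val : ℕ → (Fin n → ℝ) → ℝ)
    (H : ∀ j < J, ∀ (x x' : Fin n → ℝ) (η : ℝ),
      (∀ i, Real.sign (eval (Fin.cons η (stack val x j) : Fin (n + j + 1) → ℝ) (q j i)) =
        Real.sign (eval (stack val x' (j + 1)) (q j i))) → η = val j x) :
    ∃ 𝓡 : Finset (MvPolynomial (Fin n) ℝ),
      𝓡.card ≤ (B * (B + 1)) ^ J * (J * (B + 1)) * ((B + 1) ^ (n + J) + 1) ∧
      (∀ R ∈ 𝓡, R.totalDegree ≤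
        (B + 1) ^ (n + J) * ((B + 2 * (n + J) * B + 1) * (B + 1) ^ J)) ∧
      ∀ x₀, ∀ᶠ x in 𝓝 x₀, (∀ R ∈ 𝓡, eval x R = 0 ↔ eval x₀ R = 0) →
        ∀ j < J, ∀ i, Real.sign (eval (stack val x (j + 1)) (q j i)) =
          Real.sign (eval (stack val x₀ (j + 1)) (q j i)) := by
  classical
  let G : ∀ j : ℕ, Option (Fin B) → MvPolynomial (Fin (n + j + 1)) ℝ := fun j o =>
    o.elim 1 (q j)
  have hG : ∀ j o, (G j o).totalDegree ≤ B := by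
    intro j o
    cases o with
    | none => simp [G]
    | some i => exact hq j i
  have hT : ∀ (a : Fin J → Fin B × Fin (B + 1)) (i : ℕ),
      (towerOf q a i).1.totalDegree ≤ B ∧ (towerOf q a i).2 ≤ B := by
    intro a i
    unfold towerOf
    split_ifs with h
    · exact ⟨hq _ _, Nat.lt_succ_iff.1 (a ⟨i, h⟩).2.2⟩
    · simp
  choose R hRd hRe using fun t : (Fin J → Fin B × Fin (B + 1)) × Fin J × Option (Fin B) =>
    exists_counting_polys (D := B) (towerOf q t.1) (t.2.1 + 1) (fun i _ => hT t.1 i)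
      (G t.2.1 t.2.2) (hG _ _)
  refine ⟨Finset.univ.biUnion fun t => Finset.univ.image (R t), ?_, ?_, ?_⟩
  · refine (Finset.card_biUnion_le_card_mul _ _ ((B + 1) ^ (n + J) + 1) fun t _ => ?_).trans ?_
    · refine Finset.card_image_le.trans ?_
      rw [Finset.card_univ, Fintype.card_fin]
      have := t.2.1.2
      exact Nat.succ_le_succ (Nat.pow_le_pow_right (by omega) (by omega))
    · simp
  · intro P hP
    obtain ⟨t, -, ht⟩ := Finset.mem_biUnion.1 hP
    obtain ⟨k, -, rfl⟩ := Finset.mem_image.1 ht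
    have := t.2.1.2
    refine (hRd t k).trans ?_
    gcongr <;> omega
  · intro x₀
    have hpath : ∀ j : Fin J, ∃ a : Fin B × Fin (B + 1),
        ((val j x₀ : ℝ) : ℂ) ∈ fib (q j a.1) a.2 (toC (stack val x₀ j)) := fun j =>
      exists_mem_fib (q j) (hq j) _ _ fun η hη => H j j.2 x₀ x₀ η hη
    choose a ha using hpath
    have hπ : ∀ j ≤ J, toC (stack val x₀ j) ∈ towerPts (towerOf q a) x₀ j := by
      intro j
      induction j with
      | zero => intro _; simp [towerPts, stack]; rfl
      | succ j ih =>
        intro hj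
        rw [stack, toC_cons]
        refine cons_mem_towerPts.2 ⟨ih (by omega), ?_⟩
        have hj' : j < J := hj
        rw [towerOf, dif_pos hj']
        exact ha ⟨j, hj'⟩
    have := fun j => (stack_continues q val H (towerOf q a) x₀ hπ
      (fun x => ∀ P ∈ Finset.univ.biUnion fun t => Finset.univ.image (R t),
        eval x P = 0 ↔ eval x₀ P = 0) (fun x hx j hj => ?_) j).2
    · have hall : ∀ᶠ x in 𝓝 x₀, ∀ j : Fin J, (∀ P ∈ Finset.univ.biUnion fun t =>
          Finset.univ.image (R t), eval x P = 0 ↔ eval x₀ P = 0) →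
          ∀ i, Real.sign (eval (stack val x (j + 1)) (q j i)) =
            Real.sign (eval (stack val x₀ (j + 1)) (q j i)) := by
        rw [eventually_all]
        exact fun j => this j j.2
      filter_upwards [hall] with x h hx j hj
      exact h ⟨j, hj⟩ hx
    · have hk : ∀ o, ((towerPts (towerOf q a) x (j + 1)).filter fun y => aeval y (G j o) ≠ 0).card =
          ((towerPts (towerOf q a) x₀ (j + 1)).filter fun y => aeval y (G j o) ≠ 0).card := fun o =>
        hRe (a, ⟨j, hj⟩, o) x x₀ fun k => hx _ (Finset.mem_biUnion.2
          ⟨(a, ⟨j, hj⟩, o), Finset.mem_univ _, Finset.mem_image_of_mem _ (Finset.mem_univ k)⟩)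
      refine ⟨?_, fun i => hk (some i)⟩
      simpa [G] using hk none

/-! ### From circuits to towers: the growth function -/

theorem totalDegree_aeval_le {σ τ : Type*} (L : σ → MvPolynomial τ ℝ)
    (hL : ∀ a, (L a).totalDegree ≤ 1) (p : MvPolynomial σ ℝ) :
    (aeval L p).totalDegree ≤ p.totalDegree := by
  classical
  rw [aeval_def, eval₂_eq]
  refine totalDegree_finsetSum_le fun d hd => ?_
  refine (totalDegree_mul _ _).trans ?_
  have h1 : (algebraMap ℝ (MvPolynomial τ ℝ) (coeff d p)).totalDegree = 0 := totalDegree_C _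
  rw [h1, zero_add]
  refine (totalDegree_finsetProd _ _).trans ?_
  refine le_trans (Finset.sum_le_sum fun i _ => ?_) (le_totalDegree hd)
  refine (totalDegree_pow _ _).trans ?_
  simpa using Nat.mul_le_mul_left (d i) (hL i)

theorem eval_aeval {σ τ : Type*} (L : σ → MvPolynomial τ ℝ) (y : τ → ℝ) (p : MvPolynomial σ ℝ) :
    eval y (aeval L p) = eval (fun a => eval y (L a)) p := by
  have := comp_aeval_apply L (aeval y : _ →ₐ[ℝ] ℝ) p
  simpa only [aeval_eq_eval] using this

/-- Two lists can be merged and padded by a default element to a list of prescribed length. -/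
theorem exists_padding {P : Type*} (good : P → Prop) (z : P) (hz : good z) {m₁ m₂ B : ℕ} (hB : m₁ + m₂ ≤ B)
    (q₁ : Fin m₁ → P) (q₂ : Fin m₂ → P) (h₁ : ∀ i, good (q₁ i)) (h₂ : ∀ i, good (q₂ i)) :
    ∃ q : Fin B → P, (∀ i, good (q i)) ∧ (∀ i, ∃ i', q i' = q₁ i) ∧ ∀ i, ∃ i', q i' = q₂ i := by
  refine ⟨fun i => if h : (i : ℕ) < m₁ + m₂ then Fin.append q₁ q₂ ⟨i, h⟩ else z, ?_, ?_, ?_⟩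
  · intro i
    dsimp only
    split_ifs with h
    · generalize (⟨i, h⟩ : Fin (m₁ + m₂)) = a
      induction a using Fin.addCases with
      | left a => simpa using h₁ a
      | right a => simpa using h₂ a
    · exact hz
  · intro i
    refine ⟨⟨i, by omega⟩, ?_⟩
    have h : (i : ℕ) < m₁ + m₂ := by omega
    simp only [h, dif_pos]
    exact Fin.append_left q₁ q₂ i
  · intro i
    refine ⟨⟨m₁ + i, by omega⟩, ?_⟩
    have h : m₁ + (i : ℕ) < m₁ + m₂ := by omega
    simp only [h, dif_pos]
    exact Fin.append_right q₁ q₂ i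

/-- Pulling the graph of a gate back along affine inputs: the signs of the resulting polynomials
at a point of the graph pin down the gate value. -/
theorem exists_gate_polys {l t N : ℕ} {g : (Fin l → ℝ) → ℝ} (hg : IsTSemialgebraicFun l t g)
    (L : Fin l → MvPolynomial (Fin N) ℝ) (hL : ∀ a, (L a).totalDegree ≤ 1) :
    ∃ (m : ℕ) (p : Fin m → MvPolynomial (Fin (N + 1)) ℝ), m ≤ t ∧ (∀ i, (p i).totalDegree ≤ t) ∧
      ∀ (y y' : Fin N → ℝ) (η η' : ℝ), η' = g (fun a => eval y' (L a)) →
        (∀ i, Real.sign (eval (Fin.cons η y : Fin (N + 1) → ℝ) (p i)) =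
          Real.sign (eval (Fin.cons η' y' : Fin (N + 1) → ℝ) (p i))) →
        η = g (fun a => eval y (L a)) := by
  obtain ⟨m, p, hm, hp, hsep⟩ := hg
  let S : Fin (l + 1) → MvPolynomial (Fin (N + 1)) ℝ :=
    Fin.snoc (α := fun _ => MvPolynomial (Fin (N + 1)) ℝ) (fun a => rename Fin.succ (L a)) (X 0)
  have hev : ∀ (y : Fin N → ℝ) (η : ℝ) (P : MvPolynomial (Fin (l + 1)) ℝ),
      eval (Fin.cons η y : Fin (N + 1) → ℝ) (aeval S P) =
        eval (Fin.snoc (α := fun _ => ℝ) (fun a => eval y (L a)) η : Fin (l + 1) → ℝ) P := by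
    intro y η P
    rw [eval_aeval]
    congr 1
    congr 1
    funext i
    induction i using Fin.lastCases with
    | last => simp [S]
    | cast i =>
      simp only [S, Fin.snoc_castSucc, eval_rename]
      congr 1
  refine ⟨m, fun i => aeval S (p i), hm, fun i => (totalDegree_aeval_le S ?_ _).trans (hp i), ?_⟩
  · intro a
    induction a using Fin.lastCases with
    | last => simp [S]
    | cast i =>
      simp only [S, Fin.snoc_castSucc]
      exact (totalDegree_rename_le _ _).trans (hL i)
  · intro y y' η η' hη' hs
    by_contra hne
    refine hsep (Fin.snoc (α := fun _ => ℝ) (fun a => eval y' (L a)) η') (by simpa using hη')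
      (Fin.snoc (α := fun _ => ℝ) (fun a => eval y (L a)) η) (by simpa using hne) ?_
    funext i
    rw [← hev, ← hev]
    exact (hs i).symm

theorem exists_stack_input {n : ℕ} (val : ℕ → (Fin n → ℝ) → ℝ) (u : Fin n) (j : ℕ) :
    ∃ v : Fin (n + j), ∀ x, stack val x j v = x u := by
  induction j with
  | zero => exact ⟨u, fun x => rfl⟩
  | succ j ih =>
    obtain ⟨v, hv⟩ := ih
    exact ⟨Fin.succ v, fun x => by rw [← hv x]; rfl⟩

theorem exists_stack_val {n : ℕ} (val : ℕ → (Fin n → ℝ) → ℝ) (j i : ℕ) (hi : i < j) :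
    ∃ v : Fin (n + j), ∀ x, stack val x j v = val i x := by
  induction j with
  | zero => omega
  | succ j ih =>
    rcases Nat.lt_succ_iff_lt_or_eq.1 hi with h | rfl
    · obtain ⟨v, hv⟩ := ih h
      exact ⟨Fin.succ v, fun x => by rw [← hv x]; rfl⟩
    · exact ⟨(0 : Fin (n + i + 1)), fun x => rfl⟩

/-- The successive values attached to an input `x` once the random string `r` is fixed: the target
value `f x`, followed by the values of the gates. -/
def circVal {n k s : ℕ} (f : (Fin n → ℝ) → ℝ) (circ : Fin s → (Fin (n + k) → ℝ) → ℝ)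
    (r : Fin k → ℝ) : ℕ → (Fin n → ℝ) → ℝ
  | 0 => f
  | i + 1 => fun x => if h : i < s then circ ⟨i, h⟩ (Fin.append x r) else 0

/-- For a fixed random string, polynomials `q j` whose signs determine the `j`-th value from the
previous ones; at the last level they also determine whether `ρ` holds. -/
theorem exists_circuit_polys {n k s b tf tρ : ℕ} (hs : 1 ≤ s) {ρ : ℝ → ℝ → Prop}
    (hρ : IsTSemialgebraic 2 tρ {w : Fin 2 → ℝ | ρ (w 0) (w 1)}) {f : (Fin n → ℝ) → ℝ}
    (hf : IsTSemialgebraicFun n tf f) {circ : Fin s → (Fin (n + k) → ℝ) → ℝ}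
    (hc : IsSACircuit (n + k) s b circ) (r : Fin k → ℝ) :
    ∃ q : ∀ j, Fin (b * s + tf + tρ) → MvPolynomial (Fin (n + j + 1)) ℝ,
      (∀ j i, (q j i).totalDegree ≤ b * s + tf + tρ) ∧
      (∀ j < s + 1, ∀ x x' η,
        (∀ i, Real.sign (eval (Fin.cons η (stack (circVal f circ r) x j) : Fin (n + j + 1) → ℝ) (q j i)) =
          Real.sign (eval (stack (circVal f circ r) x' (j + 1)) (q j i))) →
        η = circVal f circ r j x) ∧
      ∀ x x', (∀ i, Real.sign (eval (stack (circVal f circ r) x (s + 1)) (q s i)) =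
          Real.sign (eval (stack (circVal f circ r) x' (s + 1)) (q s i))) →
        (ρ (circVal f circ r s x) (f x) ↔ ρ (circVal f circ r s x') (f x')) := by
  set val := circVal f circ r with hval
  set B := b * s + tf + tρ with hB
  have hbs : b ≤ b * s := Nat.le_mul_of_pos_right b hs
  -- every gate (including the target, at level `0`) reads affine functions of the stack
  have hgate : ∀ j < s + 1, ∃ (t l : ℕ) (g : (Fin l → ℝ) → ℝ)
      (L : Fin l → MvPolynomial (Fin (n + j)) ℝ), t + tρ ≤ B ∧ IsTSemialgebraicFun l t g ∧
      (∀ a, (L a).totalDegree ≤ 1) ∧ ∀ x, val j x = g fun a => eval (stack val x j) (L a) := by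
    intro j hj
    rcases j with _ | i
    · refine ⟨tf, n, f, fun u => X u, by omega, hf, fun a => by simp, fun x => ?_⟩
      simp [hval, circVal, stack]
    · have hi : i < s := by omega
      obtain ⟨l, g, h, hg, hh, hfi⟩ := hc ⟨i, hi⟩
      have hL : ∀ a, ∃ L : MvPolynomial (Fin (n + (i + 1))) ℝ, L.totalDegree ≤ 1 ∧
          ∀ x, eval (stack val x (i + 1)) L = h a (Fin.append x r) := by
        intro a
        rcases hh a with ⟨u, hu⟩ | ⟨cst, hu⟩ | ⟨i', hi', hu⟩
        · rw [hu]
          induction u using Fin.addCases with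
          | left u =>
            obtain ⟨v, hv⟩ := exists_stack_input val u (i + 1)
            exact ⟨X v, by simp, fun x => by simp [hv]⟩
          | right u => exact ⟨C (r u), by simp, fun x => by simp⟩
        · exact ⟨C cst, by simp, fun x => by simp [hu]⟩
        · obtain ⟨v, hv⟩ := exists_stack_val val (i + 1) (i' + 1)
            (by have : (i' : ℕ) < i := hi'; omega)
          refine ⟨X v, by simp, fun x => ?_⟩
          rw [eval_X, hv, hu]
          simp [hval, circVal]
      choose L hL1 hL2 using hL
      refine ⟨b, l, g, L, by omega, hg, hL1, fun x => ?_⟩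
      simp only [hL2]
      simp [hval, circVal, hi, hfi]
  obtain ⟨mρ, pρ, hmρ, hpρ, hsepρ⟩ := hρ
  have key : ∀ j, ∃ q : Fin B → MvPolynomial (Fin (n + j + 1)) ℝ, (∀ i, (q i).totalDegree ≤ B) ∧
      (j < s + 1 → ∀ x x' η,
        (∀ i, Real.sign (eval (Fin.cons η (stack val x j) : Fin (n + j + 1) → ℝ) (q i)) =
          Real.sign (eval (stack val x' (j + 1)) (q i))) → η = val j x) ∧
      (j < s + 1 → ∀ x x', (∀ i, Real.sign (eval (stack val x (j + 1)) (q i)) =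
          Real.sign (eval (stack val x' (j + 1)) (q i))) →
        (ρ (val j x) (f x) ↔ ρ (val j x') (f x'))) := by
    intro j
    by_cases hj : j < s + 1
    · obtain ⟨t, l, g, L, ht, hg, hL, hv⟩ := hgate j hj
      obtain ⟨m, p, hm, hp, H⟩ := exists_gate_polys hg L hL
      obtain ⟨v, hv0⟩ := exists_stack_val val (j + 1) 0 (by omega)
      let S : Fin 2 → MvPolynomial (Fin (n + j + 1)) ℝ := ![X (0 : Fin (n + j + 1)), X v]
      have hS : ∀ x (P : MvPolynomial (Fin 2) ℝ), eval (stack val x (j + 1)) (aeval S P) =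
          eval ![val j x, f x] P := by
        intro x P
        rw [eval_aeval]
        congr 2
        funext i
        fin_cases i
        · simp [S]; rfl
        · exact (eval_X v).trans (hv0 x)
      obtain ⟨q, hq, hq1, hq2⟩ := exists_padding
        (fun P : MvPolynomial (Fin (n + j + 1)) ℝ => P.totalDegree ≤ B) 0 (by simp)
        (m₁ := m) (m₂ := mρ) (B := B) (by omega) p (fun i => aeval S (pρ i))
        (fun i => (hp i).trans (by omega))
        (fun i => (totalDegree_aeval_le S (fun a => by fin_cases a <;> simp [S]) _).trans
          ((hpρ i).trans (by omega)))
      refine ⟨q, hq, fun _ x x' η hη => ?_, fun _ x x' hx => ?_⟩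
      · rw [hv]
        refine H _ (stack val x' j) η (val j x') (hv x') fun i => ?_
        obtain ⟨i', hi'⟩ := hq1 i
        rw [← hi']
        exact hη i'
      · have hs' : ∀ i, Real.sign (eval ![val j x, f x] (pρ i)) =
            Real.sign (eval ![val j x', f x'] (pρ i)) := by
          intro i
          obtain ⟨i', hi'⟩ := hq2 i
          rw [← hS, ← hS, ← hi']
          exact hx i'
        constructor
        · intro h
          by_contra h'
          exact hsepρ ![val j x, f x] (by simpa using h) ![val j x', f x'] (by simpa using h')
            (funext hs')
        · intro h
          by_contra h'
          exact hsepρ ![val j x', f x'] (by simpa using h) ![val j x, f x] (by simpa using h')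
            (funext fun i => (hs' i).symm)
    · exact ⟨fun _ => 0, by simp, fun h => absurd h hj, fun h => absurd h hj⟩
  choose q h1 h2 h3 using key
  exact ⟨q, h1, h2, h3 s (by omega)⟩

/-- Growth bound: the number of truth patterns of `m` fixed random strings. -/
theorem card_patterns_le {n k s b tf tρ : ℕ} (hs : 1 ≤ s) {ρ : ℝ → ℝ → Prop}
    (hρ : IsTSemialgebraic 2 tρ {w : Fin 2 → ℝ | ρ (w 0) (w 1)}) {f : (Fin n → ℝ) → ℝ}
    (hf : IsTSemialgebraicFun n tf f) {circ : Fin s → (Fin (n + k) → ℝ) → ℝ}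
    (hc : IsSACircuit (n + k) s b circ) {B M Δ : ℕ} (hB : B = b * s + tf + tρ)
    (hM : M = (B * (B + 1)) ^ (s + 1) * ((s + 1) * (B + 1)) * ((B + 1) ^ (n + (s + 1)) + 1))
    (hΔ : Δ = (B + 1) ^ (n + (s + 1)) * ((B + 2 * (n + (s + 1)) * B + 1) * (B + 1) ^ (s + 1)))
    {m : ℕ} (r : Fin m → Fin k → ℝ) (T : Finset (Fin m → Prop))
    (hT : ∀ τ ∈ T, ∃ x, τ = fun a => ρ (circ ⟨s - 1, by omega⟩ (Fin.append x (r a))) (f x)) :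
    T.card ≤ (n * (2 + 4 * (m * M) * Δ) + 1) ^ n := by
  classical
  have h := fun a => exists_circuit_polys hs hρ hf hc (r a)
  choose q h1 h2 h3 using h
  have h' := fun a => exists_zero_pattern_polys (J := s + 1) (q a) (h1 a) _ (h2 a)
  choose 𝓡 c1 c2 c3 using h'
  have hval : ∀ a x, circVal f circ (r a) s x = circ ⟨s - 1, by omega⟩ (Fin.append x (r a)) := by
    intro a x
    obtain ⟨i, rfl⟩ : ∃ i, s = i + 1 := ⟨s - 1, by omega⟩
    simp [circVal]
  let label : (Fin n → ℝ) → Fin m → Prop := fun x a =>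
    ρ (circ ⟨s - 1, by omega⟩ (Fin.append x (r a))) (f x)
  have hw : ∀ i : Fin T.card, ∃ x, ((T.equivFin.symm i : T) : Fin m → Prop) = label x :=
    fun i => hT _ (T.equivFin.symm i).2
  choose w hw using hw
  refine card_labels_le (Finset.univ.biUnion 𝓡) (M := m * M) (Δ := Δ) ?_ ?_ label ?_ w ?_
  · refine Finset.card_biUnion_le.trans ?_
    refine (Finset.sum_le_card_nsmul _ _ M fun a _ => ?_).trans (by simp)
    rw [hM, hB]
    exact c1 a
  · intro R hR
    obtain ⟨a, -, ha⟩ := Finset.mem_biUnion.1 hR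
    rw [hΔ, hB]
    exact c2 a R ha
  · intro x₀
    have : ∀ᶠ x in nhds x₀, ∀ a, (∀ R ∈ 𝓡 a, eval x R = 0 ↔ eval x₀ R = 0) → ∀ j < s + 1, ∀ i,
        Real.sign (eval (stack (circVal f circ (r a)) x (j + 1)) (q a j i)) =
          Real.sign (eval (stack (circVal f circ (r a)) x₀ (j + 1)) (q a j i)) :=
      eventually_all.2 fun a => c3 a x₀
    filter_upwards [this] with x hx hR
    funext a
    have := h3 a x x₀ fun i => hx a (fun R hRa => hR R
      (Finset.mem_biUnion.2 ⟨a, Finset.mem_univ _, hRa⟩)) s (by omega) i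
    rw [hval, hval] at this
    exact propext this
  · intro i j hij
    simp only [← hw] at hij
    exact T.equivFin.symm.injective (Subtype.ext hij)

/-! ### `Fσ` sets and measurability -/

/-- `Fσ` sets, encoded as complements of `Gδ` sets. -/
def IsFsigma {E : Type*} [TopologicalSpace E] (S : Set E) : Prop := IsGδ Sᶜ

theorem IsFsigma.of_isClosed {E : Type*} [TopologicalSpace E] {S : Set E} (h : IsClosed S) :
    IsFsigma S := h.isOpen_compl.isGδ

theorem IsFsigma.of_isOpen {E : Type*} [TopologicalSpace E] [TopologicalSpace.PseudoMetrizableSpace E]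
    {S : Set E} (h : IsOpen S) : IsFsigma S := h.isClosed_compl.isGδ

theorem IsFsigma.iUnion {E ι : Type*} [TopologicalSpace E] [Countable ι] {S : ι → Set E}
    (h : ∀ i, IsFsigma (S i)) : IsFsigma (⋃ i, S i) := by
  rw [IsFsigma, Set.compl_iUnion]
  exact IsGδ.iInter h

theorem IsFsigma.iInter {E ι : Type*} [TopologicalSpace E] [Finite ι] {S : ι → Set E}
    (h : ∀ i, IsFsigma (S i)) : IsFsigma (⋂ i, S i) := by
  rw [IsFsigma, Set.compl_iInter]
  exact IsGδ.iUnion h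

theorem IsFsigma.inter {E : Type*} [TopologicalSpace E] {S T : Set E}
    (hS : IsFsigma S) (hT : IsFsigma T) : IsFsigma (S ∩ T) := by
  rw [IsFsigma, Set.compl_inter]
  exact IsGδ.union hS hT

theorem IsFsigma.preimage {E E' : Type*} [TopologicalSpace E] [TopologicalSpace E'] {f : E → E'}
    (hf : Continuous f) {S : Set E'} (h : IsFsigma S) : IsFsigma (f ⁻¹' S) :=
  IsGδ.preimage hf h

/-- Continuous images of `Fσ` subsets of a `σ`-compact space are `Fσ`; this is what makes
existential quantification over real variables harmless for measurability. -/
theorem IsFsigma.image {E E' : Type*} [TopologicalSpace E] [TopologicalSpace E']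
    [SigmaCompactSpace E] [T2Space E'] {f : E → E'} (hf : Continuous f) {S : Set E}
    (h : IsFsigma S) : IsFsigma (f '' S) := by
  obtain ⟨K, hK, hS⟩ := isGδ_iff_eq_iInter_nat.1 h
  have hS' : f '' S = ⋃ p : ℕ × ℕ, f '' ((K p.1)ᶜ ∩ compactCovering E p.2) := by
    rw [← Set.image_iUnion]
    congr 1
    ext y
    have hy : y ∈ S ↔ ∃ i, y ∉ K i := by
      rw [← not_iff_not, ← Set.mem_compl_iff, hS]
      simp
    simp only [hy, Set.mem_iUnion, Prod.exists, Set.mem_inter_iff, Set.mem_compl_iff]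
    constructor
    · rintro ⟨i, hi⟩
      obtain ⟨j, hj⟩ := exists_mem_compactCovering y
      exact ⟨i, j, hi, hj⟩
    · rintro ⟨i, j, hi, -⟩
      exact ⟨i, hi⟩
  rw [hS']
  refine IsFsigma.iUnion fun p => IsFsigma.of_isClosed (IsCompact.isClosed ?_)
  exact ((isCompact_compactCovering E p.2).inter_left (hK p.1).isClosed_compl).image hf

theorem IsFsigma.measurableSet {E : Type*} [TopologicalSpace E] [MeasurableSpace E] [BorelSpace E]
    {S : Set E} (h : IsFsigma S) : MeasurableSet S := by
  simpa using (IsGδ.measurableSet h).compl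

theorem IsTSemialgebraic.isFsigma {N t : ℕ} {S : Set (Fin N → ℝ)} (h : IsTSemialgebraic N t S) :
    IsFsigma S := by
  obtain ⟨m, p, -, -, hsep⟩ := h
  let A : (Fin m → SignType) → Set (Fin N → ℝ) := fun v =>
    ⋂ i, (fun y => eval y (p i)) ⁻¹' {z | Real.sign z = (v i : ℝ)}
  have hA : ∀ v, IsFsigma (A v) := by
    intro v
    refine IsFsigma.iInter fun i => IsFsigma.preimage (MvPolynomial.continuous_eval _) ?_
    rcases v i with _ | _ | _
    · convert! IsFsigma.of_isClosed (isClosed_singleton (x := (0 : ℝ))) using 1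
      ext z
      simp [Real.sign_eq_zero_iff]
    · convert! IsFsigma.of_isOpen (isOpen_Iio (a := (0 : ℝ))) using 1
      ext z
      rcases lt_trichotomy z 0 with hz | rfl | hz
      · simp [Real.sign_of_neg hz, hz]
      · simp
      · simp [Real.sign_of_pos hz]; norm_num; exact hz.le
    · convert! IsFsigma.of_isOpen (isOpen_Ioi (a := (0 : ℝ))) using 1
      ext z
      rcases lt_trichotomy z 0 with hz | rfl | hz
      · simp [Real.sign_of_neg hz]; norm_num; exact hz.le
      · simp
      · simp [Real.sign_of_pos hz, hz]
  have hcov : ∀ y, ∃ v, y ∈ A v := by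
    intro y
    refine ⟨fun i => SignType.sign (eval y (p i)), Set.mem_iInter.2 fun i => ?_⟩
    simp only [Set.mem_preimage, Set.mem_ofPred_eq]
    rcases lt_trichotomy (eval y (p i)) 0 with hz | hz | hz
    · simp [Real.sign_of_neg hz, hz]
    · simp [hz]
    · simp [Real.sign_of_pos hz, hz]
  have hS : S = ⋃ v : {v // ∃ y ∈ S, y ∈ A v}, A v := by
    ext y
    simp only [Set.mem_iUnion, Subtype.exists, exists_prop]
    constructor
    · intro hy
      obtain ⟨v, hv⟩ := hcov y
      exact ⟨v, ⟨y, hy, hv⟩, hv⟩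
    · rintro ⟨v, ⟨y', hy', hv'⟩, hv⟩
      by_contra hy
      refine hsep y' hy' y hy (funext fun i => ?_)
      exact (Set.mem_iInter.1 hv' i).trans (Set.mem_iInter.1 hv i).symm
  rw [hS]
  exact IsFsigma.iUnion fun v => hA v

theorem IsTSemialgebraic.compl {N t : ℕ} {S : Set (Fin N → ℝ)} (h : IsTSemialgebraic N t S) :
    IsTSemialgebraic N t Sᶜ := by
  obtain ⟨m, p, hm, hp, hsep⟩ := h
  refine ⟨m, p, hm, hp, fun y hy y' hy' => ?_⟩
  exact (hsep y' (not_not.1 hy') y hy).symm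

theorem IsTSemialgebraicFun.isFsigma_graph {l t : ℕ} {g : (Fin l → ℝ) → ℝ}
    (hg : IsTSemialgebraicFun l t g) : IsFsigma {w : (Fin l → ℝ) × ℝ | w.2 = g w.1} := by
  have hc : Continuous fun w : (Fin l → ℝ) × ℝ =>
      (Fin.snoc (α := fun _ => ℝ) w.1 w.2 : Fin (l + 1) → ℝ) := by
    refine continuous_pi fun i => ?_
    induction i using Fin.lastCases with
    | last => simpa using continuous_snd
    | cast i => simpa using! (continuous_apply i).comp continuous_fst
  convert! IsFsigma.preimage hc (IsTSemialgebraic.isFsigma hg) using 1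
  ext w
  simp

/-- The graph of a composition is a projection along the intermediate values. -/
theorem isFsigma_graph_comp {E : Type*} [TopologicalSpace E] [SigmaCompactSpace E] [T2Space E]
    {l t : ℕ} {g : (Fin l → ℝ) → ℝ} (hg : IsTSemialgebraicFun l t g) {h : Fin l → E → ℝ}
    (hh : ∀ j, IsFsigma {w : E × ℝ | w.2 = h j w.1}) :
    IsFsigma {w : E × ℝ | w.2 = g fun j => h j w.1} := by
  have h1 : IsFsigma (⋂ j, (fun w : E × (Fin l → ℝ) × ℝ => (w.1, w.2.1 j)) ⁻¹'
      {w : E × ℝ | w.2 = h j w.1}) :=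
    IsFsigma.iInter fun j => IsFsigma.preimage (by fun_prop) (hh j)
  have h2 : IsFsigma ((fun w : E × (Fin l → ℝ) × ℝ => w.2) ⁻¹'
      {w : (Fin l → ℝ) × ℝ | w.2 = g w.1}) :=
    IsFsigma.preimage (by fun_prop) hg.isFsigma_graph
  convert! IsFsigma.image (f := fun w : E × (Fin l → ℝ) × ℝ => (w.1, w.2.2)) (by fun_prop)
    (h1.inter h2) using 1
  ext ⟨e, z⟩
  simp only [Set.mem_ofPred_eq, Set.mem_image, Set.mem_inter_iff, Set.mem_iInter, Set.mem_preimage,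
    Prod.exists, Prod.mk.injEq]
  constructor
  · intro hz
    exact ⟨e, fun j => h j e, z, ⟨fun j => rfl, hz⟩, rfl, rfl⟩
  · rintro ⟨e', y, z', ⟨hy, hz⟩, rfl, rfl⟩
    rw [hz]
    congr 1
    funext j
    exact hy j

theorem IsSACircuit.isFsigma_graph {N s b : ℕ} {circ : Fin s → (Fin N → ℝ) → ℝ}
    (hc : IsSACircuit N s b circ) (i : Fin s) :
    IsFsigma {w : (Fin N → ℝ) × ℝ | w.2 = circ i w.1} := by
  induction i using WellFoundedLT.induction with
  | ind i ih =>
    obtain ⟨l, g, h, hg, hh, hi⟩ := hc i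
    rw [hi]
    refine isFsigma_graph_comp hg fun j => ?_
    rcases hh j with ⟨u, hu⟩ | ⟨cst, hu⟩ | ⟨i', hi', hu⟩
    · rw [hu]
      exact IsFsigma.of_isClosed (isClosed_eq (by fun_prop) (by fun_prop))
    · rw [hu]
      exact IsFsigma.of_isClosed (isClosed_eq (by fun_prop) (by fun_prop))
    · rw [hu]
      exact ih i' hi'

/-- The success set `{(x, r) | F(x,r) ρ f(x)}` is a projection along the values of `F` and `f`. -/
theorem isFsigma_relation {n k s b tf tρ : ℕ} {ρ : ℝ → ℝ → Prop}
    (hρ : IsTSemialgebraic 2 tρ {w : Fin 2 → ℝ | ρ (w 0) (w 1)}) {f : (Fin n → ℝ) → ℝ}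
    (hf : IsTSemialgebraicFun n tf f) {circ : Fin s → (Fin (n + k) → ℝ) → ℝ}
    (hc : IsSACircuit (n + k) s b circ) (i : Fin s) :
    IsFsigma {w : (Fin n → ℝ) × (Fin k → ℝ) | ρ (circ i (Fin.append w.1 w.2)) (f w.1)} := by
  have hap : Continuous fun w : (Fin n → ℝ) × (Fin k → ℝ) => Fin.append w.1 w.2 := by
    refine continuous_pi fun i => ?_
    induction i using Fin.addCases with
    | left i => simpa using! (continuous_apply i).comp continuous_fst
    | right i => simpa using! (continuous_apply i).comp continuous_snd
  have h1 : IsFsigma ((fun w : ((Fin n → ℝ) × (Fin k → ℝ)) × ℝ × ℝ =>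
      (Fin.append w.1.1 w.1.2, w.2.1)) ⁻¹' {w | w.2 = circ i w.1}) :=
    IsFsigma.preimage ((hap.comp continuous_fst).prodMk (by fun_prop)) (hc.isFsigma_graph i)
  have h2 : IsFsigma ((fun w : ((Fin n → ℝ) × (Fin k → ℝ)) × ℝ × ℝ =>
      (w.1.1, w.2.2)) ⁻¹' {w | w.2 = f w.1}) :=
    IsFsigma.preimage (by fun_prop) hf.isFsigma_graph
  have h3 : IsFsigma ((fun w : ((Fin n → ℝ) × (Fin k → ℝ)) × ℝ × ℝ =>
      (![w.2.1, w.2.2] : Fin 2 → ℝ)) ⁻¹' {w : Fin 2 → ℝ | ρ (w 0) (w 1)}) :=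
    IsFsigma.preimage (by fun_prop) hρ.isFsigma
  convert! IsFsigma.image (f := Prod.fst) continuous_fst ((h1.inter h2).inter h3) using 1
  ext ⟨x, r⟩
  simp only [Set.mem_ofPred_eq, Set.mem_image, Set.mem_inter_iff, Set.mem_preimage]
  constructor
  · intro h
    exact ⟨((x, r), _, _), ⟨⟨rfl, rfl⟩, h⟩, rfl⟩
  · rintro ⟨⟨⟨x', r'⟩, u, v⟩, ⟨⟨hu, hv⟩, h⟩, he⟩
    obtain ⟨rfl, rfl⟩ := Prod.mk.inj he
    simp only [Matrix.cons_val_zero, Matrix.cons_val_one] at h hu hv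
    rwa [hu, hv] at h

/-! ### Swaps, Hoeffding's inequality and Markov's inequality -/

/-- Hoeffding's inequality, as a count of sign vectors. -/
theorem card_signs_le (m : ℕ) (d : Fin m → ℝ) (hd : ∀ i, |d i| ≤ 1) :
    ((Finset.univ.filter fun σ : Fin m → Bool =>
      (m : ℝ) / 10 ≤ ∑ i, (if σ i then d i else -d i)).card : ℝ) ≤ 2 ^ m * Real.exp (-(m / 200)) := by
  set T := Finset.univ.filter fun σ : Fin m → Bool =>
      (m : ℝ) / 10 ≤ ∑ i, (if σ i then d i else -d i) with hT
  have h1 : ∑ σ : Fin m → Bool, Real.exp (1 / 10 * ∑ i, (if σ i then d i else -d i)) ≤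
      2 ^ m * Real.exp (m / 200) := by
    have e1 : ∀ σ : Fin m → Bool, Real.exp (1 / 10 * ∑ i, (if σ i then d i else -d i)) =
        ∏ i, Real.exp (1 / 10 * (if σ i then d i else -d i)) := by
      intro σ
      rw [Finset.mul_sum, Real.exp_sum]
    simp_rw [e1]
    rw [← Fintype.prod_sum (fun i (b : Bool) => Real.exp (1 / 10 * (if b then d i else -d i)))]
    have e2 : ∀ i, ∑ b : Bool, Real.exp (1 / 10 * (if b then d i else -d i)) ≤
        2 * Real.exp (1 / 200) := by
      intro i
      have e3 : ∑ b : Bool, Real.exp (1 / 10 * (if b then d i else -d i)) =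
          2 * Real.cosh (1 / 10 * d i) := by
        rw [Real.cosh_eq]
        simp
        ring
      rw [e3]
      have e4 := Real.cosh_le_exp_half_sq (1 / 10 * d i)
      have e5 : (1 / 10 * d i) ^ 2 / 2 ≤ 1 / 200 := by
        have := (sq_le_one_iff_abs_le_one (d i)).2 (hd i)
        nlinarith
      have := Real.exp_le_exp.2 e5
      linarith
    refine (Finset.prod_le_prod (fun i _ => by positivity) fun i _ => e2 i).trans ?_
    simp only [Finset.prod_const, Finset.card_univ, Fintype.card_fin, mul_pow]
    rw [← Real.exp_nat_mul]
    gcongr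
    linarith
  have h2 : (T.card : ℝ) * Real.exp (m / 100) ≤
      ∑ σ : Fin m → Bool, Real.exp (1 / 10 * ∑ i, (if σ i then d i else -d i)) := by
    rw [← nsmul_eq_mul]
    refine (Finset.card_nsmul_le_sum T _ _ fun σ hσ => ?_).trans
      (Finset.sum_le_sum_of_subset_of_nonneg (Finset.subset_univ T) fun _ _ _ => by positivity)
    have := (Finset.mem_filter.1 hσ).2
    apply Real.exp_le_exp.2
    linarith
  have h3 := h2.trans h1
  have h4 : Real.exp ((m : ℝ) / 200) = Real.exp (-(m / 200)) * Real.exp (m / 100) := by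
    rw [← Real.exp_add]
    congr 1
    ring
  rw [h4, ← mul_assoc] at h3
  exact le_of_mul_le_mul_right h3 (Real.exp_pos _)

open Classical in
/-- A double-sample failure pattern in which at least half of the left half fails, but at most a
`2/5` fraction of the right half. -/
def Unbalanced {m : ℕ} (τ : Fin m ⊕ Fin m → Prop) : Prop :=
  m ≤ 2 * (Finset.univ.filter fun i => τ (.inl i)).card ∧
    5 * (Finset.univ.filter fun i => τ (.inr i)).card ≤ 2 * m

/-- The swap of the two halves of a double sample at the coordinates where `σ` is `false`. -/
def swapFun {m : ℕ} (σ : Fin m → Bool) : Fin m ⊕ Fin m → Fin m ⊕ Fin m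
  | .inl i => if σ i then .inl i else .inr i
  | .inr i => if σ i then .inr i else .inl i

theorem swapFun_involutive {m : ℕ} (σ : Fin m → Bool) : Function.Involutive (swapFun σ) := by
  rintro (i | i) <;> cases h : σ i <;> simp [swapFun, h]

open Classical in
/-- For a fixed failure pattern, few swaps make it unbalanced: the number of failures on the left minus
that on the right is a signed sum of numbers in `[-1, 1]`, and it is at least `m / 10` when unbalanced. -/
theorem card_unbalanced_swaps_le {m : ℕ} (τ : Fin m ⊕ Fin m → Prop) :
    ((Finset.univ.filter fun σ : Fin m → Bool => Unbalanced (τ ∘ swapFun σ)).card : ℝ) ≤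
      2 ^ m * Real.exp (-(m / 200)) := by
  set χ : Prop → ℝ := fun p => if p then 1 else 0 with hχ
  refine le_trans ?_ (card_signs_le m (fun i => χ (τ (.inl i)) - χ (τ (.inr i))) fun i => ?_)
  · refine Nat.cast_le.2 (Finset.card_le_card fun σ hσ => ?_)
    obtain ⟨h1, h2⟩ := (Finset.mem_filter.1 hσ).2
    refine Finset.mem_filter.2 ⟨Finset.mem_univ _, ?_⟩
    have e1 : ((Finset.univ.filter fun i => (τ ∘ swapFun σ) (.inl i)).card : ℝ) =
        ∑ i, χ ((τ ∘ swapFun σ) (.inl i)) := by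
      rw [Finset.card_filter]; simp [hχ]
    have e2 : ((Finset.univ.filter fun i => (τ ∘ swapFun σ) (.inr i)).card : ℝ) =
        ∑ i, χ ((τ ∘ swapFun σ) (.inr i)) := by
      rw [Finset.card_filter]; simp [hχ]
    have h1' : (m : ℝ) ≤ 2 * ∑ i, χ ((τ ∘ swapFun σ) (.inl i)) := by rw [← e1]; exact_mod_cast h1
    have h2' : 5 * ∑ i, χ ((τ ∘ swapFun σ) (.inr i)) ≤ 2 * (m : ℝ) := by
      rw [← e2]; exact_mod_cast h2
    have e3 : ∑ i, (if σ i then χ (τ (.inl i)) - χ (τ (.inr i))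
        else -(χ (τ (.inl i)) - χ (τ (.inr i)))) =
        ∑ i, χ ((τ ∘ swapFun σ) (.inl i)) - ∑ i, χ ((τ ∘ swapFun σ) (.inr i)) := by
      rw [← Finset.sum_sub_distrib]
      refine Finset.sum_congr rfl fun i _ => ?_
      cases h : σ i <;> simp [swapFun, h]
    rw [e3]
    linarith
  · simp only [hχ]
    split_ifs <;> simp

open Classical in
/-- Markov's inequality for the number of failures of a sample. -/
theorem sixth_le_few_failures {R : Type*} [MeasurableSpace R] (μ : Measure R) [IsProbabilityMeasure μ]
    {m : ℕ} (hm : 1 ≤ m) (S : Set R) (hS : MeasurableSet S) (hμ : μ S ≤ 1 / 3) :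
    1 / 6 ≤ (Measure.pi fun _ : Fin m => μ)
      {r | 5 * (Finset.univ.filter fun i => r i ∈ S).card ≤ 2 * m} := by
  set ν := Measure.pi fun _ : Fin m => μ with hν
  set c : (Fin m → R) → ℝ≥0∞ := fun r => ∑ i, S.indicator 1 (r i) with hc
  have hind : Measurable (S.indicator (1 : R → ℝ≥0∞)) := measurable_one.indicator hS
  have hcm : Measurable c := by
    refine Finset.measurable_fun_sum _ fun i _ => hind.comp (measurable_pi_apply i)
  have hcc : ∀ r, c r = ((Finset.univ.filter fun i => r i ∈ S).card : ℝ≥0∞) := by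
    intro r
    rw [Finset.card_filter]
    simp [hc, Set.indicator_apply]
  have hIntegral : ∫⁻ r, c r ∂ν ≤ m * (1 / 3) := by
    have e : ∫⁻ r, c r ∂ν = ∑ i, ∫⁻ r : Fin m → R, S.indicator 1 (r i) ∂ν :=
      lintegral_finsetSum _ fun i _ => hind.comp (measurable_pi_apply i)
    rw [e]
    have : ∀ i, ∫⁻ r : Fin m → R, S.indicator 1 (r i) ∂ν ≤ 1 / 3 := by
      intro i
      rw [(measurePreserving_eval (fun _ : Fin m => μ) i).lintegral_comp hind,
        lintegral_indicator_one hS]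
      exact hμ
    refine (Finset.sum_le_sum fun i _ => this i).trans ?_
    simp
  set G := {r : Fin m → R | 5 * (Finset.univ.filter fun i => r i ∈ S).card ≤ 2 * m} with hG
  have hGc : Gᶜ ⊆ {r | (2 * m / 5 : ℝ≥0∞) ≤ c r} := by
    intro r hr
    have hr' : 2 * m < 5 * (Finset.univ.filter fun i => r i ∈ S).card := by
      simpa [hG] using hr
    rw [Set.mem_ofPred_eq, hcc]
    refine ENNReal.div_le_of_le_mul ?_
    rw [mul_comm _ (5 : ℝ≥0∞)]
    exact_mod_cast hr'.le
  have hmk := mul_meas_ge_le_lintegral₀ (μ := ν) hcm.aemeasurable (2 * m / 5 : ℝ≥0∞)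
  have hGm : MeasurableSet G := by
    have : G = {r | 5 * c r ≤ 2 * m} := by
      ext r
      simp only [hG, hcc, Set.mem_ofPred_eq]
      exact_mod_cast Iff.rfl
    rw [this]
    exact measurableSet_le (hcm.const_mul 5) measurable_const
  have h56 : ν Gᶜ ≤ 5 / 6 := by
    refine (measure_mono hGc).trans ?_
    have h := hmk.trans hIntegral
    set v := ν {r | (2 * m / 5 : ℝ≥0∞) ≤ c r} with hv
    have hvt : v ≠ ⊤ := measure_ne_top _ _
    lift v to NNReal using hvt with v' hv'
    have h' : (2 * m / 5 : NNReal) * v' ≤ m * (1 / 3) := by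
      have e : ((2 * m / 5 : NNReal) : ℝ≥0∞) = 2 * m / 5 := by
        rw [ENNReal.coe_div (by norm_num)]; simp
      have e' : (((m : NNReal) * (1 / 3) : NNReal) : ℝ≥0∞) = m * (1 / 3) := by
        rw [ENNReal.coe_mul, ENNReal.coe_div (by norm_num)]; simp
      rw [← e, ← e'] at h
      exact_mod_cast h
    have e6 : ((5 / 6 : NNReal) : ℝ≥0∞) = 5 / 6 := by
      rw [ENNReal.coe_div (by norm_num)]; simp
    rw [← e6]
    refine ENNReal.coe_le_coe.2 ?_
    have hm' : (1 : ℝ) ≤ m := by exact_mod_cast hm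
    have h'' : (2 * m / 5 : ℝ) * v' ≤ m * (1 / 3) := by exact_mod_cast h'
    have : (v' : ℝ) ≤ 5 / 6 := by
      by_contra hcon
      push Not at hcon
      nlinarith
    exact_mod_cast this
  have hsum := prob_add_prob_compl (μ := ν) hGm
  have hlt : ν G ≠ ⊤ := measure_ne_top _ _
  lift ν G to NNReal using hlt with g hg
  lift ν Gᶜ to NNReal using measure_ne_top _ _ with g' hg'
  have e6 : ((5 / 6 : NNReal) : ℝ≥0∞) = 5 / 6 := by
    rw [ENNReal.coe_div (by norm_num)]; simp
  have e1 : ((1 / 6 : NNReal) : ℝ≥0∞) = 1 / 6 := by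
    rw [ENNReal.coe_div (by norm_num)]; simp
  rw [← e6] at h56
  rw [← e1]
  have a1 : (g' : ℝ) ≤ 5 / 6 := by exact_mod_cast h56
  have a2 : (g : ℝ) + g' = 1 := by exact_mod_cast hsum
  have : (1 / 6 : ℝ) ≤ g := by linarith
  exact ENNReal.coe_le_coe.2 (by exact_mod_cast this)

/-! ### Symmetrization -/

open Classical in
/-- The projection that forgets `x`, applied to a finite Boolean combination of the failure sets. -/
theorem isFsigma_unbalanced {n k m : ℕ} (Bd : (Fin n → ℝ) → (Fin k → ℝ) → Prop)
    (h1 : IsFsigma {w : (Fin n → ℝ) × (Fin k → ℝ) | Bd w.1 w.2})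
    (h2 : IsFsigma {w : (Fin n → ℝ) × (Fin k → ℝ) | ¬ Bd w.1 w.2}) :
    IsFsigma {z : Fin m ⊕ Fin m → Fin k → ℝ | ∃ x, Unbalanced fun a => Bd x (z a)} := by
  have key : IsFsigma (⋃ τ : {τ : Fin m ⊕ Fin m → Prop // Unbalanced τ}, ⋂ a,
      {w : (Fin n → ℝ) × (Fin m ⊕ Fin m → Fin k → ℝ) | Bd w.1 (w.2 a) ↔ τ.1 a}) := by
    refine IsFsigma.iUnion fun τ => IsFsigma.iInter fun a => ?_
    have hc : Continuous fun w : (Fin n → ℝ) × (Fin m ⊕ Fin m → Fin k → ℝ) => (w.1, w.2 a) := by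
      fun_prop
    by_cases ha : τ.1 a
    · simp only [ha, iff_true]
      exact IsFsigma.preimage hc h1
    · simp only [ha, iff_false]
      exact IsFsigma.preimage hc h2
  convert! IsFsigma.image (f := Prod.snd) continuous_snd key using 1
  ext z
  simp only [Set.mem_ofPred_eq, Set.mem_image, Set.mem_iUnion, Set.mem_iInter, Prod.exists,
    Subtype.exists, exists_prop]
  constructor
  · rintro ⟨x, hx⟩
    exact ⟨x, z, ⟨_, hx, fun a => Iff.rfl⟩, rfl⟩
  · rintro ⟨x, z', ⟨τ, hτ, h⟩, rfl⟩
    refine ⟨x, ?_⟩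
    rwa [show (fun a => Bd x (z' a)) = τ from funext fun a => propext (h a)]

open Classical in
/-- Symmetrization: if every double sample of size `2m` sees fewer than `exp (m / 200) / 6` failure
patterns, and every input fails with probability at most `1/3`, then some sample of size `m` has a
minority of failures on every input. -/
theorem exists_majority_sample {n k m : ℕ} (hm : 1 ≤ m) (Bd : (Fin n → ℝ) → (Fin k → ℝ) → Prop)
    (h1 : IsFsigma {w : (Fin n → ℝ) × (Fin k → ℝ) | Bd w.1 w.2})
    (h2 : IsFsigma {w : (Fin n → ℝ) × (Fin k → ℝ) | ¬ Bd w.1 w.2})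
    (μ : Measure (Fin k → ℝ)) [IsProbabilityMeasure μ] (hμ : ∀ x, μ {r | Bd x r} ≤ 1 / 3)
    (N : ℝ) (hN : 6 * N < Real.exp (m / 200))
    (hpat : ∀ z : Fin m ⊕ Fin m → Fin k → ℝ, ∀ T : Finset (Fin m ⊕ Fin m → Prop),
      (∀ τ ∈ T, ∃ x, τ = fun a => Bd x (z a)) → (T.card : ℝ) ≤ N) :
    ∃ r : Fin m → Fin k → ℝ, ∀ x, 2 * (Finset.univ.filter fun i => Bd x (r i)).card < m := by
  by_contra hcon
  push Not at hcon
  choose xr hxr using hcon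
  set P := Measure.pi fun _ : Fin m ⊕ Fin m => μ with hP
  set ν := Measure.pi fun _ : Fin m => μ with hν
  set E := {z : Fin m ⊕ Fin m → Fin k → ℝ | ∃ x, Unbalanced fun a => Bd x (z a)} with hE
  have hEm : MeasurableSet E := (isFsigma_unbalanced Bd h1 h2).measurableSet
  have hBm : ∀ x, MeasurableSet {r | Bd x r} := fun x =>
    (IsFsigma.preimage (f := fun r : Fin k → ℝ => (x, r)) (by fun_prop) h1).measurableSet
  -- lower bound, by Fubini over the two halves
  have hlow : 1 / 6 ≤ P E := by
    have hmp := measurePreserving_sumPiEquivProdPi_symm (fun _ : Fin m ⊕ Fin m => μ)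
    rw [← hmp.measure_preimage hEm.nullMeasurableSet]
    rw [Measure.prod_apply (hmp.measurable hEm)]
    have hsec : ∀ r : Fin m → Fin k → ℝ, 1 / 6 ≤ ν (Prod.mk r ⁻¹'
        ((MeasurableEquiv.sumPiEquivProdPi fun _ : Fin m ⊕ Fin m => Fin k → ℝ).symm ⁻¹' E)) := by
      intro r
      refine (sixth_le_few_failures μ hm {r' | Bd (xr r) r'} (hBm _) (hμ _)).trans
        (measure_mono fun r' hr' => ?_)
      exact ⟨xr r, hxr r, hr'⟩
    calc (1 / 6 : ℝ≥0∞) = ∫⁻ _ : Fin m → Fin k → ℝ, 1 / 6 ∂ν := by simp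
      _ ≤ _ := lintegral_mono hsec
  -- upper bound, by averaging over swaps
  have hswap : ∀ σ : Fin m → Bool, MeasurePreserving
      (fun z : Fin m ⊕ Fin m → Fin k → ℝ => z ∘ swapFun σ) P P := by
    intro σ
    have := measurePreserving_arrowCongr' (fun _ : Fin m ⊕ Fin m => μ) (fun _ => μ)
      (swapFun_involutive σ).toPerm (MeasurableEquiv.refl _) (fun _ => MeasurePreserving.id μ)
    exact this
  have hcount : ∀ z, ((Finset.univ.filter fun σ : Fin m → Bool => z ∘ swapFun σ ∈ E).card : ℝ) ≤
      N * (2 ^ m * Real.exp (-(m / 200))) := by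
    intro z
    let T : Finset (Fin m ⊕ Fin m → Prop) :=
      Finset.univ.filter fun τ => ∃ x, τ = fun a => Bd x (z a)
    have hsub : (Finset.univ.filter fun σ : Fin m → Bool => z ∘ swapFun σ ∈ E) ⊆
        T.biUnion fun τ => Finset.univ.filter fun σ => Unbalanced (τ ∘ swapFun σ) := by
      intro σ hσ
      obtain ⟨x, hx⟩ := (Finset.mem_filter.1 hσ).2
      refine Finset.mem_biUnion.2 ⟨fun a => Bd x (z a), Finset.mem_filter.2
        ⟨Finset.mem_univ _, x, rfl⟩, Finset.mem_filter.2 ⟨Finset.mem_univ _, hx⟩⟩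
    have hc := (Finset.card_le_card hsub).trans Finset.card_biUnion_le
    calc ((Finset.univ.filter fun σ : Fin m → Bool => z ∘ swapFun σ ∈ E).card : ℝ)
        ≤ ∑ τ ∈ T, ((Finset.univ.filter fun σ : Fin m → Bool =>
            Unbalanced (τ ∘ swapFun σ)).card : ℝ) := by exact_mod_cast hc
      _ ≤ ∑ τ ∈ T, 2 ^ m * Real.exp (-(m / 200)) :=
          Finset.sum_le_sum fun τ _ => card_unbalanced_swaps_le τ
      _ = T.card * (2 ^ m * Real.exp (-(m / 200))) := by simp
      _ ≤ _ := by
          gcongr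
          exact hpat z T fun τ hτ => (Finset.mem_filter.1 hτ).2
  have hup : (2 : ℝ≥0∞) ^ m * P E ≤ ENNReal.ofReal (N * (2 ^ m * Real.exp (-(m / 200)))) := by
    have e1 : (2 : ℝ≥0∞) ^ m * P E = ∑ σ : Fin m → Bool, ∫⁻ z, E.indicator 1 (z ∘ swapFun σ) ∂P := by
      have : ∀ σ : Fin m → Bool, ∫⁻ z, E.indicator 1 (z ∘ swapFun σ) ∂P = P E := by
        intro σ
        rw [(hswap σ).lintegral_comp (measurable_one.indicator hEm), lintegral_indicator_one hEm]
      simp [this]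
    have e3 : ∫⁻ z, ∑ σ : Fin m → Bool, E.indicator 1 (z ∘ swapFun σ) ∂P =
        ∑ σ : Fin m → Bool, ∫⁻ z, E.indicator 1 (z ∘ swapFun σ) ∂P :=
      lintegral_finsetSum _ fun σ _ => (measurable_one.indicator hEm).comp (hswap σ).measurable
    rw [e1, ← e3]
    calc _ ≤ ∫⁻ _, ENNReal.ofReal (N * (2 ^ m * Real.exp (-(m / 200)))) ∂P := by
          refine lintegral_mono fun z => ?_
          have e2 : ∑ σ : Fin m → Bool, E.indicator (1 : (Fin m ⊕ Fin m → Fin k → ℝ) → ℝ≥0∞) (z ∘ swapFun σ) =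
              ENNReal.ofReal
                ((Finset.univ.filter fun σ : Fin m → Bool => z ∘ swapFun σ ∈ E).card : ℝ) := by
            rw [ENNReal.ofReal_natCast, Finset.card_filter]
            simp [Set.indicator_apply]
          dsimp only
          rw [e2]
          exact ENNReal.ofReal_le_ofReal (hcount z)
      _ = _ := by simp
  have hfin : ENNReal.ofReal (2 ^ m * (1 / 6)) ≤
      ENNReal.ofReal (N * (2 ^ m * Real.exp (-(m / 200)))) := by
    refine le_trans (le_trans (le_of_eq ?_) (mul_le_mul_right hlow ((2 : ℝ≥0∞) ^ m))) hup
    rw [ENNReal.ofReal_mul (by positivity), ENNReal.ofReal_pow (by norm_num),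
      ENNReal.ofReal_div_of_pos (by norm_num)]
    simp
  have hN0 : 0 ≤ N := by simpa using hpat (fun _ _ => 0) ∅ (by simp)
  have h3 := (ENNReal.ofReal_le_ofReal_iff (by positivity)).1 hfin
  have h4 : (1 : ℝ) / 6 ≤ N * Real.exp (-(m / 200)) := by
    have : (0 : ℝ) < 2 ^ m := by positivity
    nlinarith
  have h5 : Real.exp (-((m : ℝ) / 200)) * Real.exp (m / 200) = 1 := by
    rw [← Real.exp_add]; simp
  nlinarith [Real.exp_pos ((m : ℝ) / 200), mul_le_mul_of_nonneg_right h4 (Real.exp_pos ((m : ℝ) / 200)).le]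

/-! ### The sample size and the conclusion -/

/-- The growth bound of `card_patterns_le` for `2m` strings, simplified to `((B+1)^(25 n s) m)ⁿ / 6`. -/
theorem six_mul_growth_le {n s m B M Δ : ℕ} (hn : 1 ≤ n) (hs : 1 ≤ s) (hm : 1 ≤ m) (hB : 3 ≤ B)
    (hM : M = (B * (B + 1)) ^ (s + 1) * ((s + 1) * (B + 1)) * ((B + 1) ^ (n + (s + 1)) + 1))
    (hΔ : Δ = (B + 1) ^ (n + (s + 1)) * ((B + 2 * (n + (s + 1)) * B + 1) * (B + 1) ^ (s + 1))) :
    6 * (n * (2 + 4 * ((m + m) * M) * Δ) + 1) ^ n ≤ ((B + 1) ^ (25 * n * s) * m) ^ n := by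
  obtain ⟨β, hβ⟩ : ∃ β, β = B + 1 := ⟨_, rfl⟩
  have hβ4 : 4 ≤ β := by omega
  have hβ1 : 1 ≤ β := by omega
  have hpow : ∀ a : ℕ, 1 + 2 * a ≤ β ^ a := by
    intro a
    induction a with
    | zero => simp
    | succ a ih =>
      rw [pow_succ]
      nlinarith
  have hpow1 : ∀ a : ℕ, a ≤ β ^ a := fun a => by have := hpow a; omega
  obtain ⟨J, hJ⟩ : ∃ J, J = s + 1 := ⟨_, rfl⟩
  rw [← hJ, ← hβ] at hM hΔ
  have hM' : M ≤ β ^ (n + 4 * J + 2) := by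
    have h1 : (B * β) ^ J ≤ β ^ (2 * J) := by
      rw [pow_mul]
      exact Nat.pow_le_pow_left (by nlinarith) _
    have h2 : J * β ≤ β ^ (J + 1) := by
      rw [pow_succ]
      exact Nat.mul_le_mul_right _ (hpow1 J)
    have h3 : β ^ (n + J) + 1 ≤ β ^ (n + J + 1) := by
      have := Nat.one_le_pow (n + J) β hβ1
      rw [pow_succ]
      nlinarith
    calc M ≤ β ^ (2 * J) * β ^ (J + 1) * β ^ (n + J + 1) := by
          rw [hM]
          exact Nat.mul_le_mul (Nat.mul_le_mul h1 h2) h3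
      _ = _ := by rw [← pow_add, ← pow_add]; congr 1; ring
  have hΔ' : Δ ≤ β ^ (2 * n + 3 * J + 1) := by
    have h1 : B + 2 * (n + J) * B + 1 ≤ β ^ (n + J + 1) := by
      have := hpow (n + J)
      rw [pow_succ]
      have h4 : B + 2 * (n + J) * B + 1 ≤ (1 + 2 * (n + J)) * β := by
        rw [hβ]; ring_nf; omega
      exact h4.trans (Nat.mul_le_mul_right _ this)
    calc Δ ≤ β ^ (n + J) * (β ^ (n + J + 1) * β ^ J) := by
          rw [hΔ]
          exact Nat.mul_le_mul_left _ (Nat.mul_le_mul_right _ h1)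
      _ = _ := by rw [← pow_add, ← pow_add]; congr 1; ring
  obtain ⟨W, hW⟩ : ∃ W, W = β ^ (3 * n + 7 * J + 3) := ⟨_, rfl⟩
  have hMΔ : M * Δ ≤ W := by
    refine (Nat.mul_le_mul hM' hΔ').trans (le_of_eq ?_)
    rw [hW, ← pow_add]; congr 1; ring
  have hW1 : 1 ≤ W := hW ▸ Nat.one_le_pow _ _ hβ1
  have hexp : (n + 2) + (3 * n + 7 * J + 3) + 2 ≤ 25 * n * s := by
    have a1 : n ≤ n * s := Nat.le_mul_of_pos_right _ hs
    have a2 : s ≤ n * s := Nat.le_mul_of_pos_left _ hn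
    rw [mul_assoc]
    omega
  have hbase : n * (2 + 4 * ((m + m) * M) * Δ) + 1 ≤ 11 * (n * (m * W)) := by
    have e : 4 * ((m + m) * M) * Δ = 8 * (m * (M * Δ)) := by ring
    rw [e]
    have a1 : m * (M * Δ) ≤ m * W := Nat.mul_le_mul_left _ hMΔ
    have a2 : 1 ≤ m * W := Nat.mul_pos hm hW1
    have a3 : 1 ≤ n * (m * W) := Nat.mul_pos hn a2
    have a4 : n * (2 + 8 * (m * (M * Δ))) ≤ n * (10 * (m * W)) :=
      Nat.mul_le_mul_left _ (by omega)
    have a5 : n * (10 * (m * W)) = 10 * (n * (m * W)) := by ring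
    omega
  have h6 : 6 * (11 * (n * (m * W))) ≤ β ^ (25 * n * s) * m := by
    calc 6 * (11 * (n * (m * W))) = 66 * n * W * m := by ring
      _ ≤ β ^ 4 * β ^ n * W * m := by
          have : 66 ≤ β ^ 4 := le_trans (by norm_num) (Nat.pow_le_pow_left hβ4 4)
          gcongr
          exact hpow1 n
      _ = β ^ ((n + 2) + (3 * n + 7 * J + 3) + 2) * m := by
          rw [hW, ← pow_add, ← pow_add]; congr 2; ring
      _ ≤ _ := Nat.mul_le_mul_right _ (Nat.pow_le_pow_right hβ1 hexp)
  have h66 : 6 ≤ 6 ^ n := Nat.le_self_pow (by omega) 6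
  calc 6 * (n * (2 + 4 * ((m + m) * M) * Δ) + 1) ^ n
      ≤ 6 ^ n * (11 * (n * (m * W))) ^ n := Nat.mul_le_mul h66 (Nat.pow_le_pow_left hbase n)
    _ = (6 * (11 * (n * (m * W)))) ^ n := (mul_pow _ _ _).symm
    _ ≤ _ := by rw [← hβ]; exact Nat.pow_le_pow_left h6 n

/-- The sample size `m ≥ 10⁴ n² s (1 + log B)` beats the growth function. The term `n log m` is
absorbed using `log z ≤ z - 1` at `z = m / (1024 n)`. -/
theorem growth_lt_exp {n s m B : ℕ} (hn : 1 ≤ n) (hs : 1 ≤ s) (hB : 3 ≤ B)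
    (hm : 10000 * ((n : ℝ) ^ 2 * s * (1 + Real.log B)) ≤ m) :
    ((((B + 1) ^ (25 * n * s) * m) ^ n : ℕ) : ℝ) < Real.exp (m / 200) := by
  have hn' : (1 : ℝ) ≤ n := by exact_mod_cast hn
  have hs' : (1 : ℝ) ≤ s := by exact_mod_cast hs
  have hB' : (3 : ℝ) ≤ B := by exact_mod_cast hB
  have hlB : 0 ≤ Real.log B := Real.log_nonneg (by linarith)
  set Z : ℝ := (n : ℝ) ^ 2 * s * (1 + Real.log B) with hZ
  have hns : (n : ℝ) ^ 2 ≤ (n : ℝ) ^ 2 * s := le_mul_of_one_le_right (by positivity) hs'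
  have hZ1 : (n : ℝ) ^ 2 ≤ Z := hns.trans (le_mul_of_one_le_right (by positivity) (by linarith))
  have hZ0 : 1 ≤ Z := le_trans (by nlinarith) hZ1
  have hm0 : (0 : ℝ) < m := by linarith
  have hlb : Real.log ((B : ℝ) + 1) ≤ 1 + Real.log B := by
    have e : 1 + Real.log B = Real.log (Real.exp 1 * B) := by
      rw [Real.log_mul (by positivity) (by positivity), Real.log_exp]
    rw [e]
    refine Real.log_le_log (by positivity) ?_
    have := Real.add_one_le_exp (1 : ℝ)
    nlinarith
  have hlm : Real.log m ≤ m / (1024 * n) - 1 + (10 + n) := by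
    have e : Real.log m = Real.log (m / (1024 * n)) + (Real.log 1024 + Real.log n) := by
      rw [← Real.log_mul (by norm_num) (by positivity), ← Real.log_mul (by positivity) (by positivity)]
      congr 1
      field_simp
    have e1 := Real.log_le_sub_one_of_pos (x := (m : ℝ) / (1024 * n)) (by positivity)
    have e2 : Real.log 1024 ≤ 10 := by
      rw [show (1024 : ℝ) = 2 ^ 10 by norm_num, Real.log_pow]
      have := Real.log_le_sub_one_of_pos (x := (2 : ℝ)) (by norm_num)
      norm_num at this ⊢
      linarith
    have e3 := Real.log_le_sub_one_of_pos (x := (n : ℝ)) (by positivity)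
    linarith
  have hpos : (0 : ℝ) < ((B : ℝ) + 1) ^ (25 * n * s) * m := by positivity
  push_cast
  rw [← Real.log_lt_iff_lt_exp (by positivity), Real.log_pow,
    Real.log_mul (by positivity) (by positivity), Real.log_pow]
  push_cast
  have t1 : (n : ℝ) * (25 * n * s * Real.log (B + 1)) ≤ 25 * Z := by
    have : (n : ℝ) ^ 2 * s * Real.log (B + 1) ≤ Z := mul_le_mul_of_nonneg_left hlb (by positivity)
    nlinarith
  have t2 : (n : ℝ) * Real.log m ≤ m / 1024 + 11 * Z := by
    have := mul_le_mul_of_nonneg_left hlm (by positivity : (0 : ℝ) ≤ n)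
    have e : (n : ℝ) * (m / (1024 * n) - 1 + (10 + n)) = m / 1024 + 9 * n + n ^ 2 := by
      field_simp
      ring
    rw [e] at this
    nlinarith
  nlinarith

/-- **Derandomization of approximating semialgebraic circuits.** There is an absolute
constant `C > 0` such that: if `ρ` is a `t_ρ`-semialgebraic binary relation on `ℝ`,
`f : ℝⁿ → ℝ` has a `t_f`-semialgebraic graph, and a probabilistic `b`-semialgebraic
circuit of size `s` with `n` deterministic and `k` random inputs `ρ`-approximates `f`
(success probability at least `2/3` on every input), then there are
`m ≤ C·n²·s·(1 + ln(b·s + t_f + t_ρ))` assignments `r₁,…,r_m` to the random inputs such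
that on every input `x` strictly more than `m/2` of the indices `i` satisfy
`F(x,rᵢ) ρ f(x)`. -/
theorem derandomize_approximating_semialgebraic_circuits :
    ∃ C : ℝ, 0 < C ∧
      ∀ (n k s b tf tρ : ℕ) (hn : 1 ≤ n) (hk : 1 ≤ k) (hs : 1 ≤ s) (hb : 1 ≤ b)
        (htf : 1 ≤ tf) (htρ : 1 ≤ tρ)
        (ρ : ℝ → ℝ → Prop),
        IsTSemialgebraic 2 tρ {w : Fin 2 → ℝ | ρ (w 0) (w 1)} →
        ∀ f : (Fin n → ℝ) → ℝ,
          IsTSemialgebraic (n + 1) tf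
            {w : Fin (n + 1) → ℝ | w (Fin.last n) = f (fun i => w i.castSucc)} →
          ∀ (F : (Fin n → ℝ) → (Fin k → ℝ) → ℝ)
            (circ : Fin s → (Fin (n + k) → ℝ) → ℝ),
            IsSACircuit (n + k) s b circ →
            (∀ (x : Fin n → ℝ) (r : Fin k → ℝ),
              F x r = circ ⟨s - 1, by omega⟩ (Fin.append x r)) →
            ∀ (μ : Measure (Fin k → ℝ)), IsProbabilityMeasure μ →
              (∀ x : Fin n → ℝ, 2 / 3 ≤ μ {r : Fin k → ℝ | ρ (F x r) (f x)}) →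
              ∃ m : ℕ, 1 ≤ m ∧
                (m : ℝ) ≤ C * n ^ 2 * s * (1 + Real.log (b * s + tf + tρ)) ∧
                ∃ r : Fin m → (Fin k → ℝ), ∀ x : Fin n → ℝ,
                  m < 2 * Set.ncard {i : Fin m | ρ (F x (r i)) (f x)} := by
  classical
  refine ⟨10001, by norm_num, ?_⟩
  intro n k s b tf tρ hn hk hs hb htf htρ ρ hρ f hf F circ hc hF μ hμp hμ
  obtain ⟨B, hB⟩ : ∃ B, B = b * s + tf + tρ := ⟨_, rfl⟩
  have hB3 : 3 ≤ B := by
    have : 1 ≤ b * s := Nat.mul_pos hb hs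
    omega
  have hBr : ((b : ℝ) * s + tf + tρ) = B := by rw [hB]; push_cast; ring
  rw [hBr]
  have hn' : (1 : ℝ) ≤ n := by exact_mod_cast hn
  have hs' : (1 : ℝ) ≤ s := by exact_mod_cast hs
  have hB' : (3 : ℝ) ≤ B := by exact_mod_cast hB3
  have hlB : 0 ≤ Real.log B := Real.log_nonneg (by linarith)
  set Z : ℝ := (n : ℝ) ^ 2 * s * (1 + Real.log B) with hZ
  have hZ1 : 1 ≤ Z := by
    have a1 : (1 : ℝ) ≤ (n : ℝ) ^ 2 := one_le_pow₀ hn'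
    have a2 : (1 : ℝ) ≤ (n : ℝ) ^ 2 * s := one_le_mul_of_one_le_of_one_le a1 hs'
    exact one_le_mul_of_one_le_of_one_le a2 (by linarith)
  obtain ⟨m, hmdef⟩ : ∃ m, m = ⌈10000 * Z⌉₊ := ⟨_, rfl⟩
  have hmlow : 10000 * Z ≤ m := hmdef ▸ Nat.le_ceil _
  have hmup : (m : ℝ) ≤ 10001 * Z := by
    have := (Nat.ceil_lt_add_one (by positivity : 0 ≤ 10000 * Z)).le
    rw [← hmdef] at this
    linarith
  have hm1 : 1 ≤ m := by
    have : (0 : ℝ) < m := by linarith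
    exact_mod_cast this
  refine ⟨m, hm1, by rw [hZ] at hmup; linarith, ?_⟩
  let Bd : (Fin n → ℝ) → (Fin k → ℝ) → Prop := fun x r => ¬ ρ (F x r) (f x)
  have hgood : IsFsigma {w : (Fin n → ℝ) × (Fin k → ℝ) | ρ (F w.1 w.2) (f w.1)} := by
    simp only [hF]
    exact isFsigma_relation hρ hf hc _
  have hbad : IsFsigma {w : (Fin n → ℝ) × (Fin k → ℝ) | Bd w.1 w.2} := by
    simp only [Bd, hF]
    exact isFsigma_relation (ρ := fun u v => ¬ ρ u v) hρ.compl hf hc _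
  obtain ⟨M, hM⟩ : ∃ M, M = (B * (B + 1)) ^ (s + 1) * ((s + 1) * (B + 1)) *
    ((B + 1) ^ (n + (s + 1)) + 1) := ⟨_, rfl⟩
  obtain ⟨Δ, hΔ⟩ : ∃ Δ, Δ = (B + 1) ^ (n + (s + 1)) *
    ((B + 2 * (n + (s + 1)) * B + 1) * (B + 1) ^ (s + 1)) := ⟨_, rfl⟩
  have hN := six_mul_growth_le (m := m) hn hs hm1 hB3 hM hΔ
  have hexp := growth_lt_exp hn hs hB3 hmlow
  have hfail : ∀ x, μ {r | Bd x r} ≤ 1 / 3 := by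
    intro x
    have hgm : MeasurableSet {r | ρ (F x r) (f x)} :=
      (IsFsigma.preimage (f := fun r : Fin k → ℝ => (x, r)) (by fun_prop) hgood).measurableSet
    have e : {r | Bd x r} = {r | ρ (F x r) (f x)}ᶜ := rfl
    rw [e, prob_compl_eq_one_sub hgm]
    refine (tsub_le_tsub_left (hμ x) 1).trans ?_
    rw [tsub_le_iff_right, ENNReal.div_add_div_same]
    norm_num
    rw [ENNReal.div_self (by norm_num) (by norm_num)]
  have hpat : ∀ z : Fin m ⊕ Fin m → Fin k → ℝ, ∀ T : Finset (Fin m ⊕ Fin m → Prop),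
      (∀ τ ∈ T, ∃ x, τ = fun a => Bd x (z a)) →
        (T.card : ℝ) ≤ (((n * (2 + 4 * ((m + m) * M) * Δ) + 1) ^ n : ℕ) : ℝ) := by
    intro z T hT
    refine Nat.cast_le.2 ?_
    -- transport patterns indexed by `Fin m ⊕ Fin m` to complemented patterns on `Fin (m + m)`
    let φ : (Fin m ⊕ Fin m → Prop) → Fin (m + m) → Prop := fun τ a => ¬ τ (finSumFinEquiv.symm a)
    have hφ : Function.Injective φ := by
      intro τ τ' h
      funext a
      have := congrFun h (finSumFinEquiv a)
      simpa [φ, not_iff_not] using this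
    rw [← Finset.card_image_of_injective T hφ]
    refine card_patterns_le hs hρ hf hc hB hM hΔ (fun a => z (finSumFinEquiv.symm a)) _ ?_
    intro τ' hτ'
    obtain ⟨τ, hτ, rfl⟩ := Finset.mem_image.1 hτ'
    obtain ⟨x, rfl⟩ := hT τ hτ
    exact ⟨x, funext fun a => by simp [φ, Bd, hF]⟩
  obtain ⟨r, hr⟩ := exists_majority_sample hm1 Bd hbad (by simpa [Bd] using hgood) μ hfail _
    (lt_of_le_of_lt (by exact_mod_cast hN) hexp) hpat
  refine ⟨r, fun x => ?_⟩
  have e : Set.ncard {i : Fin m | ρ (F x (r i)) (f x)} =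
      (Finset.univ.filter fun i => ρ (F x (r i)) (f x)).card := by
    rw [← Set.ncard_coe_finset]
    congr 1
    ext i
    simp
  have h1 := Finset.card_filter_add_card_filter_not (s := (Finset.univ : Finset (Fin m)))
    (fun i => ρ (F x (r i)) (f x))
  have h2 := hr x
  simp only [Finset.card_univ, Fintype.card_fin] at h1
  simp only [Bd] at h2
  rw [e]
  omega
end

section
/- Derandomization of probabilistic families of polynomials: Let n ≥ 1 and D ≥ 0 be integers, let (Ω, 𝒜, μ) be a probability space, let f ∈ ℝ[x_1,…,x_n] be a polynomial of total degree at most D, and let G : Ω → ℝ[x_1,…,x_n] be a family of polynomials with total degree of G(ω) at most D for every ω ∈ Ω. Assume that for every x ∈ ℝⁿ the set {ω ∈ Ω : G(ω)(x) = f(x)} is measurable and has μ-measure at least 2/3. Then there exists ω ∈ Ω with G(ω) = f. -/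
open MvPolynomial MeasureTheory

/-!
The proof averages the Schwartz–Zippel lemma over `Ω`. If every `G ω - f` were nonzero, each of
them would vanish on at most half of the points of a grid `Sⁿ` with `2D + 1` points on each side,
being of degree at most `D ≤ |S| / 2`. Integrating the number of zeros over `ω` shows that the probabilities of
the events `G(ω)(x) = f(x)` add up, over the grid, to at most half the number of grid points, while
by hypothesis they add up to at least two thirds of it.
-/

/-- Schwartz–Zippel for `g - f` on a grid `Sⁿ` with `|S| = 2D + 1`: two distinct polynomials of
degree at most `D` agree on at most half of the grid. -/
lemma two_mul_card_agree_le {n D : ℕ} {f g : MvPolynomial (Fin n) ℝ}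
    (hf : f.totalDegree ≤ D) (hg : g.totalDegree ≤ D) (hne : g ≠ f) (S : Finset ℝ)
    (hS : S.card = 2 * D + 1) :
    2 * ((Fintype.piFinset fun _ : Fin n => S).filter
      fun x => eval x g = eval x f).card ≤ (Fintype.piFinset fun _ : Fin n => S).card := by
  have hdeg : (g - f).totalDegree ≤ D := (totalDegree_sub g f).trans (max_le hg hf)
  have h := schwartz_zippel_totalDegree (sub_ne_zero.mpr hne) S
  simp only [map_sub, sub_eq_zero] at h
  have hcard : (Fintype.piFinset fun _ : Fin n => S).card = S.card ^ n := by simp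
  rw [hcard]
  have hpos : (0 : ℚ≥0) < (S.card : ℚ≥0) ^ n := by
    rw [hS]; positivity
  have hhalf : ((g - f).totalDegree : ℚ≥0) / S.card ≤ 1 / 2 := by
    rw [hS, div_le_div_iff₀ (by positivity) (by norm_num)]
    exact_mod_cast (by omega : (g - f).totalDegree * 2 ≤ 1 * (2 * D + 1))
  have h2 := h.trans hhalf
  rw [div_le_div_iff₀ hpos (by norm_num)] at h2
  rw [mul_comm, one_mul] at h2
  exact_mod_cast h2

/-- **Derandomization of probabilistic families of polynomials.** Let `f ∈ ℝ[x₁,…,x_n]`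
have total degree at most `D` and let `G` be a family of polynomials of total degree at
most `D` indexed by a probability space `(Ω, μ)`. If for every point `x ∈ ℝⁿ` the
(measurable) event `{ω : G(ω)(x) = f(x)}` has probability at least `2/3`, then some member
of the family equals `f`. -/
theorem derandomize_probabilistic_polynomials
    (n : ℕ) (hn : 1 ≤ n) (D : ℕ)
    {Ω : Type} [MeasurableSpace Ω] (μ : Measure Ω) [IsProbabilityMeasure μ]
    (f : MvPolynomial (Fin n) ℝ) (hf : f.totalDegree ≤ D)
    (G : Ω → MvPolynomial (Fin n) ℝ) (hG : ∀ ω : Ω, (G ω).totalDegree ≤ D)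
    (hmeas : ∀ x : Fin n → ℝ, MeasurableSet {ω : Ω | eval x (G ω) = eval x f})
    (hprob : ∀ x : Fin n → ℝ, 2 / 3 ≤ μ {ω : Ω | eval x (G ω) = eval x f}) :
    ∃ ω : Ω, G ω = f := by
  classical
  by_contra! hne
  obtain ⟨S, hS⟩ := Infinite.exists_subset_card_eq ℝ (2 * D + 1)
  set P := Fintype.piFinset fun _ : Fin n => S with hP
  have hPpos : 0 < P.card := by simp [hP, hS]
  -- Tonelli: the expected number of agreement points is the sum of the probabilities.
  have hsum : ∑ x ∈ P, μ {ω : Ω | eval x (G ω) = eval x f} =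
      ∫⁻ ω, ((P.filter fun x => eval x (G ω) = eval x f).card : ENNReal) ∂μ := by
    calc _ = ∑ x ∈ P, ∫⁻ ω, {ω : Ω | eval x (G ω) = eval x f}.indicator 1 ω ∂μ :=
          Finset.sum_congr rfl fun x _ => (lintegral_indicator_one (hmeas x)).symm
      _ = ∫⁻ ω, ∑ x ∈ P, {ω : Ω | eval x (G ω) = eval x f}.indicator 1 ω ∂μ :=
          (lintegral_finsetSum _ fun x _ => measurable_one.indicator (hmeas x)).symm
      _ = _ := by
          refine lintegral_congr fun ω => ?_
          simp [Set.indicator_apply]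
  have hupper : ∑ x ∈ P, μ {ω : Ω | eval x (G ω) = eval x f} ≤ (P.card : ENNReal) / 2 := by
    rw [hsum]
    calc _ ≤ ∫⁻ _, (P.card : ENNReal) / 2 ∂μ := by
          refine lintegral_mono fun ω => ?_
          rw [ENNReal.le_div_iff_mul_le (by simp) (by simp), mul_comm]
          exact_mod_cast two_mul_card_agree_le hf (hG ω) (hne ω) S hS
      _ = _ := by simp
  have hlower : (P.card : ENNReal) * (2 / 3) ≤ P.card / 2 := by
    refine le_trans ?_ hupper
    rw [← nsmul_eq_mul]
    exact Finset.card_nsmul_le_sum _ _ _ fun x _ => hprob x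
  have hreal := ENNReal.toReal_mono (ENNReal.div_ne_top (by simp) (by simp)) hlower
  simp only [ENNReal.toReal_mul, ENNReal.toReal_div, ENNReal.toReal_natCast,
    ENNReal.toReal_ofNat] at hreal
  have : (0 : ℝ) < P.card := by exact_mod_cast hPpos
  linarith
end

section
/- The Boolean cube isolates multilinear constant-free (max,+) polynomials: Let n ≥ 1, let A ⊆ {0,1}ⁿ be a finite nonempty set, and define f : ℝ₊ⁿ → ℝ by f(x) = max_{a∈A} ⟨a,x⟩. Let B ⊆ ℕⁿ be a finite nonempty set, let c_b ≥ 0 for each b ∈ B, and define h : ℝ₊ⁿ → ℝ by h(x) = max_{b∈B} (⟨b,x⟩ + c_b). If h(x) = f(x) for all x ∈ {0,1}ⁿ, then h(x) = f(x) for all x ∈ ℝ₊ⁿ. -/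
/-!
Evaluating at the origin forces every `c b` to vanish, and evaluating at the unit vectors forces
every `b ∈ B` to be a 0-1 vector, since `⟨b, e_i⟩ = b i ≤ f(e_i) ≤ 1`. For 0-1 vectors `u`, `v`,
the inequality `⟨u, u⟩ ≤ ⟨v, u⟩` means that `v` dominates `u` coordinatewise
(`le_of_dot_self_le`). Evaluating at `x = b` therefore gives an `a ∈ A` dominating `b`, and
evaluating at `x = a` gives a `b ∈ B` dominating `a`. Domination gives both inequalities between
the two maxima at every nonnegative `x`.
-/

/-- If the overlap of two 0-1 vectors `u`, `v` is at least the size of the support of `u`,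
then that support is contained in the support of `v`. -/
theorem le_of_dot_self_le {n : ℕ} {u v : Fin n → ℝ}
    (hu : ∀ i, u i = 0 ∨ u i = 1) (hv : ∀ i, v i = 0 ∨ v i = 1)
    (h : ∑ i, u i * u i ≤ ∑ i, v i * u i) (i : Fin n) : u i ≤ v i := by
  have hle : ∀ j ∈ Finset.univ, v j * u j ≤ u j * u j := by
    intro j _
    rcases hu j with h1 | h1 <;> rcases hv j with h2 | h2 <;> simp [h1, h2]
  have heq := (Finset.sum_eq_sum_iff_of_le hle).1
    (le_antisymm (Finset.sum_le_sum hle) h) i (Finset.mem_univ i)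
  rcases hu i with h1 | h1 <;> rcases hv i with h2 | h2 <;> simp_all

/-- **The Boolean cube isolates multilinear constant-free (max,+) polynomials.** Let
`f(x) = max_{a ∈ A} ⟨a,x⟩` where `A ⊆ {0,1}ⁿ` is finite and nonempty, and let
`h(x) = max_{b ∈ B} (⟨b,x⟩ + c_b)` be any (max,+) polynomial (`B ⊆ ℕⁿ` finite nonempty,
`c_b ≥ 0`). If `h = f` on all 0-1 inputs, then `h = f` on all nonnegative real inputs. -/
theorem boolean_cube_isolates_maxplus
    (n : ℕ) (hn : 1 ≤ n)
    (A : Finset (Fin n → ℝ)) (hA : A.Nonempty)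
    (hA01 : ∀ a ∈ A, ∀ i : Fin n, a i = 0 ∨ a i = 1)
    (B : Finset (Fin n → ℕ)) (hB : B.Nonempty)
    (c : (Fin n → ℕ) → ℝ) (hc : ∀ b ∈ B, 0 ≤ c b)
    (hcube : ∀ x : Fin n → ℝ, (∀ i, x i = 0 ∨ x i = 1) →
      (B.sup' hB fun b => (∑ i, (b i : ℝ) * x i) + c b) =
        (A.sup' hA fun a => ∑ i, a i * x i)) :
    ∀ x : Fin n → ℝ, (∀ i, 0 ≤ x i) →
      (B.sup' hB fun b => (∑ i, (b i : ℝ) * x i) + c b) =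
        (A.sup' hA fun a => ∑ i, a i * x i) := by
  have hc0 : ∀ b ∈ B, c b = 0 := by
    intro b hb
    have h0 := hcube (fun _ => 0) (fun _ => Or.inl rfl)
    have h1 := Finset.le_sup' (fun b : Fin n → ℕ => (∑ i, (b i : ℝ) * (0 : ℝ)) + c b) hb
    rw [h0] at h1
    simp only [mul_zero, Finset.sum_const_zero, zero_add, Finset.sup'_const] at h1
    exact le_antisymm h1 (hc b hb)
  have hB01 : ∀ b ∈ B, ∀ i, (b i : ℝ) = 0 ∨ (b i : ℝ) = 1 := by
    intro b hb i
    have h0 := hcube (Pi.single i 1) (fun j => by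
      by_cases hj : j = i
      · subst hj; simp
      · simp [hj])
    have h1 := Finset.le_sup' (fun b : Fin n → ℕ =>
      (∑ j, (b j : ℝ) * (Pi.single i 1 : Fin n → ℝ) j) + c b) hb
    rw [h0] at h1
    have h2 : (A.sup' hA fun a => ∑ j, a j * (Pi.single i 1 : Fin n → ℝ) j) ≤ 1 := by
      refine Finset.sup'_le _ _ fun a ha => ?_
      rcases hA01 a ha i with h | h <;> simp [Pi.single_apply, h]
    have h3 := h1.trans h2
    simp only [Pi.single_apply, mul_ite, mul_one, mul_zero, Finset.sum_ite_eq',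
      Finset.mem_univ, if_true, hc0 b hb, add_zero] at h3
    have h4 : b i ≤ 1 := by exact_mod_cast h3
    have h5 : b i = 0 ∨ b i = 1 := by omega
    exact_mod_cast h5
  intro x hx
  apply le_antisymm
  · refine Finset.sup'_le _ _ fun b hb => ?_
    have h1 := Finset.le_sup' (fun b' : Fin n → ℕ => (∑ i, (b' i : ℝ) * (b i : ℝ)) + c b') hb
    rw [hcube (fun i => (b i : ℝ)) (hB01 b hb)] at h1
    obtain ⟨a, ha, h2⟩ := Finset.exists_mem_eq_sup' hA (fun a => ∑ i, a i * (b i : ℝ))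
    rw [h2] at h1
    simp only [hc0 b hb, add_zero] at h1 ⊢
    have h3 := le_of_dot_self_le (hB01 b hb) (hA01 a ha) h1
    exact (Finset.sum_le_sum fun i _ => mul_le_mul_of_nonneg_right (h3 i) (hx i)).trans
      (Finset.le_sup' (fun a => ∑ i, a i * x i) ha)
  · refine Finset.sup'_le _ _ fun a ha => ?_
    have h1 := Finset.le_sup' (fun a' : Fin n → ℝ => ∑ i, a' i * a i) ha
    rw [← hcube a (hA01 a ha)] at h1
    obtain ⟨b, hb, h2⟩ := Finset.exists_mem_eq_sup' hB
      (fun b : Fin n → ℕ => (∑ i, (b i : ℝ) * a i) + c b)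
    rw [h2] at h1
    simp only [hc0 b hb, add_zero] at h1
    have h3 := le_of_dot_self_le (hA01 a ha) (hB01 b hb) h1
    have h4 := Finset.le_sup' (fun b : Fin n → ℕ => (∑ i, (b i : ℝ) * x i) + c b) hb
    simp only [hc0 b hb, add_zero] at h4
    exact (Finset.sum_le_sum fun i _ => mul_le_mul_of_nonneg_right (h3 i) (hx i)).trans h4
end

section
/- One-sided-error derandomization for (max,+) polynomials: Let n ≥ 1, let A ⊆ {0,1}ⁿ be finite nonempty and f(x) = max_{a∈A} ⟨a,x⟩ for x ∈ ℝ₊ⁿ. Let (Ω, 𝒜, μ) be a probability space, let 0 < p ≤ 1, and let G assign to each ω ∈ Ω a (max,+) polynomial G(ω) in n variables. Assume that for every x ∈ ℝ₊ⁿ the sets {ω : G(ω)(x) > f(x)} and {ω : G(ω)(x) < f(x)} are measurable, with μ{ω : G(ω)(x) > f(x)} = 0 and μ{ω : G(ω)(x) < f(x)} ≤ 1 − p. Then for m = ⌈n/p⌉ there exist ω_1,…,ω_m ∈ Ω such that max_{1≤i≤m} G(ω_i)(x) = f(x) for all x ∈ ℝ₊ⁿ. -/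
open MeasureTheory

/-!
The function `f(x) = max_{a ∈ A} ⟨a,x⟩` and a (max,+) polynomial `g` can be compared through their
values on the cube `{0,1}ⁿ` alone.

* If `g ≤ f` on the cube, then all constants of `g` vanish (evaluate at `0`), all its exponents are
  at most `1` (evaluate at unit vectors), and every exponent vector lies below some `a ∈ A`
  (evaluate at the exponent vector itself); hence `g ≤ f` on all nonnegative inputs
  (`le_of_le_on_cube`).
* If moreover `g(a) ≥ f(a)` for some `a ∈ A`, then `g` has an exponent vector above `a`, so
  `g(x) ≥ ⟨a,x⟩` for all nonnegative `x` (`inner_le_of_cube`).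

So it suffices to choose `m` sample points, none of them in the null set where `G ω ≤ f` fails on
the cube, such that each `a ∈ A` satisfies `G(ω_i)(a) ≥ f(a)` for some `i`. For independent samples
a fixed `a` is missed with probability at most `(1-p)^m ≤ e^{-pm} ≤ e^{-n}`, and
`|A| e^{-n} ≤ (2/e)^n < 1`, so the union bound yields such a choice (`exists_sample`).
-/

/-- `g` is a (max,+) polynomial in `n` variables: on nonnegative inputs it is of the form
`x ↦ max_{b ∈ B} (⟨b,x⟩ + c_b)` for a finite nonempty set `B ⊆ ℕⁿ` of exponent vectors and
nonnegative constants `c_b`. -/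
def IsMaxPlusPoly (n : ℕ) (g : (Fin n → ℝ) → ℝ) : Prop :=
  ∃ (B : Finset (Fin n → ℕ)) (hB : B.Nonempty) (c : (Fin n → ℕ) → ℝ),
    (∀ b ∈ B, 0 ≤ c b) ∧
    ∀ x : Fin n → ℝ, (∀ i, 0 ≤ x i) →
      g x = B.sup' hB fun b => (∑ i, (b i : ℝ) * x i) + c b

/-- The properties of the exponents and constants forced by `g ≤ f` on the cube. -/
lemma poly_structure {n : ℕ} {A : Finset (Fin n → ℝ)} (hA : A.Nonempty)
    (hA01 : ∀ a ∈ A, ∀ i : Fin n, a i = 0 ∨ a i = 1)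
    {B : Finset (Fin n → ℕ)} (hB : B.Nonempty) {c : (Fin n → ℕ) → ℝ}
    {g : (Fin n → ℝ) → ℝ} (hc : ∀ b ∈ B, 0 ≤ c b)
    (hg : ∀ x : Fin n → ℝ, (∀ i, 0 ≤ x i) →
      g x = B.sup' hB fun b => (∑ i, (b i : ℝ) * x i) + c b)
    (hle : ∀ v : Fin n → ℝ, (∀ i, v i = 0 ∨ v i = 1) →
      g v ≤ A.sup' hA fun a => ∑ i, a i * v i)
    {b : Fin n → ℕ} (hb : b ∈ B) :
    c b = 0 ∧ (∀ i, b i ≤ 1) ∧ ∃ a ∈ A, ∀ i, (b i : ℝ) ≤ a i := by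
  have key : ∀ v : Fin n → ℝ, (∀ i, v i = 0 ∨ v i = 1) →
      ∃ a ∈ A, (∑ i, (b i : ℝ) * v i) + c b ≤ ∑ i, a i * v i := by
    intro v hv
    have h1 := hle v hv
    rw [hg v (fun i => by rcases hv i with h | h <;> simp [h])] at h1
    have h2 := (Finset.le_sup' (fun b : Fin n → ℕ => (∑ i, (b i : ℝ) * v i) + c b) hb).trans h1
    exact (Finset.le_sup'_iff hA).1 h2
  have hc0 : c b = 0 := by
    obtain ⟨a, -, h⟩ := key 0 (fun i => Or.inl rfl)
    simp at h
    exact le_antisymm h (hc b hb)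
  have hb1 : ∀ i, b i ≤ 1 := by
    intro i
    obtain ⟨a, ha, h⟩ := key (Pi.single i 1) (fun j => by
      by_cases hj : j = i
      · subst hj; simp
      · simp [hj])
    simp only [Pi.single_apply, mul_ite, mul_one, mul_zero, Finset.sum_ite_eq', Finset.mem_univ,
      if_true, hc0, add_zero] at h
    have h' : (b i : ℝ) ≤ 1 := h.trans (by rcases hA01 a ha i with h | h <;> simp [h])
    exact_mod_cast h'
  refine ⟨hc0, hb1, ?_⟩
  have hb01 : ∀ i, (b i : ℝ) = 0 ∨ (b i : ℝ) = 1 := by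
    intro i
    have := hb1 i
    interval_cases b i <;> simp
  obtain ⟨a, ha, h⟩ := key (fun i => b i) hb01
  refine ⟨a, ha, fun i => ?_⟩
  -- Termwise `a i * b i ≤ b i * b i`, so the reverse inequality of the sums forces equality.
  have hterm : ∀ j ∈ Finset.univ, a j * (b j : ℝ) ≤ (b j : ℝ) * b j := by
    intro j _
    rcases hA01 a ha j with h1 | h1 <;> rcases hb01 j with h2 | h2 <;> simp [h1, h2]
  have heq := (Finset.sum_eq_sum_iff_of_le hterm).1
    (le_antisymm (Finset.sum_le_sum hterm) (by linarith)) i (Finset.mem_univ i)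
  rcases hA01 a ha i with h1 | h1 <;> rcases hb01 i with h2 | h2 <;> simp_all

/-- Domination on the cube implies domination on all nonnegative inputs. -/
lemma le_of_le_on_cube {n : ℕ} {A : Finset (Fin n → ℝ)} (hA : A.Nonempty)
    (hA01 : ∀ a ∈ A, ∀ i : Fin n, a i = 0 ∨ a i = 1)
    {g : (Fin n → ℝ) → ℝ} (hg : IsMaxPlusPoly n g)
    (hle : ∀ v : Fin n → ℝ, (∀ i, v i = 0 ∨ v i = 1) →
      g v ≤ A.sup' hA fun a => ∑ i, a i * v i)
    (x : Fin n → ℝ) (hx : ∀ i, 0 ≤ x i) :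
    g x ≤ A.sup' hA fun a => ∑ i, a i * x i := by
  obtain ⟨B, hB, c, hc, hgx⟩ := hg
  rw [hgx x hx]
  refine Finset.sup'_le _ _ fun b hb => ?_
  obtain ⟨hc0, -, a, ha, hba⟩ := poly_structure hA hA01 hB hc hgx hle hb
  rw [hc0, add_zero]
  exact (Finset.sum_le_sum fun i _ => mul_le_mul_of_nonneg_right (hba i) (hx i)).trans
    (Finset.le_sup' (fun a : Fin n → ℝ => ∑ i, a i * x i) ha)

/-- If `g ≤ f` on the cube and `g` attains `f` at the point `a ∈ A`, then `g` has an exponent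
vector above `a`, and so dominates the linear form `⟨a,·⟩`. -/
lemma inner_le_of_cube {n : ℕ} {A : Finset (Fin n → ℝ)} (hA : A.Nonempty)
    (hA01 : ∀ a ∈ A, ∀ i : Fin n, a i = 0 ∨ a i = 1)
    {g : (Fin n → ℝ) → ℝ} (hg : IsMaxPlusPoly n g)
    (hle : ∀ v : Fin n → ℝ, (∀ i, v i = 0 ∨ v i = 1) →
      g v ≤ A.sup' hA fun a => ∑ i, a i * v i)
    {a : Fin n → ℝ} (ha : a ∈ A) (hge : (A.sup' hA fun a' => ∑ i, a' i * a i) ≤ g a)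
    (x : Fin n → ℝ) (hx : ∀ i, 0 ≤ x i) :
    ∑ i, a i * x i ≤ g x := by
  obtain ⟨B, hB, c, hc, hgx⟩ := hg
  have ha0 : ∀ i, 0 ≤ a i := fun i => by rcases hA01 a ha i with h | h <;> simp [h]
  rw [hgx a ha0] at hge
  have h1 := (Finset.le_sup' (fun a' : Fin n → ℝ => ∑ i, a' i * a i) ha).trans hge
  obtain ⟨b, hb, h⟩ := (Finset.le_sup'_iff hB).1 h1
  obtain ⟨hc0, hb1, -⟩ := poly_structure hA hA01 hB hc hgx hle hb
  rw [hc0, add_zero] at h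
  -- Termwise `b i * a i ≤ a i * a i`, so the reverse inequality of the sums forces equality.
  have hterm : ∀ j ∈ Finset.univ, (b j : ℝ) * a j ≤ a j * a j := by
    intro j _
    rcases hA01 a ha j with h1 | h1 <;> simp [h1, hb1 j]
  have hab : ∀ i, a i ≤ b i := by
    intro i
    have heq := (Finset.sum_eq_sum_iff_of_le hterm).1
      (le_antisymm (Finset.sum_le_sum hterm) h) i (Finset.mem_univ i)
    rcases hA01 a ha i with h1 | h1
    · simp [h1]
    · simp only [h1, mul_one] at heq
      rw [h1, heq]
  rw [hgx x hx]
  refine le_trans ?_ (Finset.le_sup' (fun b : Fin n → ℕ => (∑ i, (b i : ℝ) * x i) + c b) hb)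
  simp only [hc0, add_zero]
  exact Finset.sum_le_sum fun i _ => mul_le_mul_of_nonneg_right (hab i) (hx i)

/-- The union bound over independent samples: `m` points can be chosen outside a null set `N` so
that no bad set `U a` contains all of them. -/
lemma exists_sample {Ω α : Type*} [MeasurableSpace Ω] (μ : Measure Ω) [IsProbabilityMeasure μ]
    (S : Finset α) (U : α → Set Ω) (N : Set Ω) (hN : μ N = 0) (q : ℝ) (hq : 0 ≤ q)
    (hU : ∀ a ∈ S, μ (U a) ≤ ENNReal.ofReal q) (m : ℕ) (hm : (S.card : ℝ) * q ^ m < 1) :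
    ∃ ω : Fin m → Ω, (∀ i, ω i ∉ N) ∧ ∀ a ∈ S, ∃ i, ω i ∉ U a := by
  let P : Measure (Fin m → Ω) := Measure.pi fun _ => μ
  have h1 : P (⋃ i, Function.eval i ⁻¹' N) = 0 :=
    measure_iUnion_null fun i => Measure.pi_eval_preimage_null _ hN
  have h2 : P (⋃ a ∈ S, Set.pi Set.univ fun _ => U a) < 1 := by
    calc P (⋃ a ∈ S, Set.pi Set.univ fun _ => U a)
        ≤ ∑ a ∈ S, P (Set.pi Set.univ fun _ => U a) := measure_biUnion_finset_le _ _
      _ ≤ ∑ a ∈ S, ENNReal.ofReal (q ^ m) := by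
          refine Finset.sum_le_sum fun a ha => ?_
          rw [Measure.pi_pi, Finset.prod_const, Finset.card_univ, Fintype.card_fin,
            ENNReal.ofReal_pow hq]
          exact pow_le_pow_left' (hU a ha) m
      _ = ENNReal.ofReal (S.card * q ^ m) := by
          rw [Finset.sum_const, nsmul_eq_mul, ENNReal.ofReal_mul (Nat.cast_nonneg _),
            ENNReal.ofReal_natCast]
      _ < 1 := by
          rw [← ENNReal.ofReal_one]
          exact (ENNReal.ofReal_lt_ofReal_iff one_pos).2 hm
  by_contra hcon
  push Not at hcon
  have hcover : (Set.univ : Set (Fin m → Ω)) ⊆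
      (⋃ i, Function.eval i ⁻¹' N) ∪ ⋃ a ∈ S, Set.pi Set.univ fun _ => U a := by
    intro ω _
    by_cases h : ∀ i, ω i ∉ N
    · obtain ⟨a, ha, h'⟩ := hcon ω h
      exact Or.inr (Set.mem_biUnion ha fun i _ => h' i)
    · push Not at h
      obtain ⟨i, hi⟩ := h
      exact Or.inl (Set.mem_iUnion.2 ⟨i, hi⟩)
  have h3 : (1 : ENNReal) ≤ P (⋃ a ∈ S, Set.pi Set.univ fun _ => U a) := by
    calc (1 : ENNReal) = P Set.univ := measure_univ.symm
      _ ≤ _ := (measure_mono hcover).trans (measure_union_le _ _)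
      _ = _ := by rw [h1, zero_add]
  exact absurd h2 (not_lt.2 h3)

/-- The numerical bound `2ⁿ (1-p)^m ≤ (2/e)ⁿ < 1` for `m = ⌈n/p⌉`. -/
lemma two_pow_mul_lt_one (n : ℕ) (hn : 1 ≤ n) (p : ℝ) (hp0 : 0 < p) (hp1 : p ≤ 1) :
    (2 : ℝ) ^ n * (1 - p) ^ ⌈(n : ℝ) / p⌉₊ < 1 := by
  have h1 : (1 - p) ^ ⌈(n : ℝ) / p⌉₊ ≤ Real.exp (-1) ^ n := by
    calc (1 - p) ^ ⌈(n : ℝ) / p⌉₊ ≤ Real.exp (-p) ^ ⌈(n : ℝ) / p⌉₊ :=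
          pow_le_pow_left₀ (by linarith) (Real.one_sub_le_exp_neg p) _
      _ ≤ Real.exp (-1) ^ n := by
          rw [← Real.exp_nat_mul, ← Real.exp_nat_mul, Real.exp_le_exp]
          have h := (div_le_iff₀ hp0).1 (Nat.le_ceil ((n : ℝ) / p))
          linarith
  have h2 : 2 * Real.exp (-1) < 1 := by
    rw [Real.exp_neg, ← div_eq_mul_inv, div_lt_one (Real.exp_pos 1)]
    linarith [Real.exp_one_gt_d9]
  calc (2 : ℝ) ^ n * (1 - p) ^ ⌈(n : ℝ) / p⌉₊ ≤ 2 ^ n * Real.exp (-1) ^ n := by gcongr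
    _ = (2 * Real.exp (-1)) ^ n := (mul_pow _ _ _).symm
    _ < 1 := pow_lt_one₀ (by positivity) h2 (by omega)

/-- **One-sided-error derandomization for (max,+) polynomials.** Let
`f(x) = max_{a ∈ A} ⟨a,x⟩` with `A ⊆ {0,1}ⁿ` finite nonempty, let `G` be a probabilistic
family of (max,+) polynomials which on every nonnegative input never exceeds `f` and falls
below `f` with probability at most `1 − p` (where `0 < p ≤ 1`). Then for `m = ⌈n/p⌉` there
are `ω₁,…,ω_m` such that `max_i G(ω_i)(x) = f(x)` for every nonnegative input `x`. -/
theorem one_sided_derandomization_maxplus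
    (n : ℕ) (hn : 1 ≤ n)
    (A : Finset (Fin n → ℝ)) (hA : A.Nonempty)
    (hA01 : ∀ a ∈ A, ∀ i : Fin n, a i = 0 ∨ a i = 1)
    {Ω : Type} [MeasurableSpace Ω] (μ : Measure Ω) [IsProbabilityMeasure μ]
    (p : ℝ) (hp0 : 0 < p) (hp1 : p ≤ 1)
    (G : Ω → (Fin n → ℝ) → ℝ) (hG : ∀ ω : Ω, IsMaxPlusPoly n (G ω))
    (hmeas : ∀ x : Fin n → ℝ, (∀ i, 0 ≤ x i) →
      MeasurableSet {ω : Ω | (A.sup' hA fun a => ∑ i, a i * x i) < G ω x} ∧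
      MeasurableSet {ω : Ω | G ω x < (A.sup' hA fun a => ∑ i, a i * x i)})
    (hone : ∀ x : Fin n → ℝ, (∀ i, 0 ≤ x i) →
      μ {ω : Ω | (A.sup' hA fun a => ∑ i, a i * x i) < G ω x} = 0 ∧
      μ {ω : Ω | G ω x < (A.sup' hA fun a => ∑ i, a i * x i)} ≤ ENNReal.ofReal (1 - p)) :
    ∃ ω : Fin (⌈(n : ℝ) / p⌉₊) → Ω, ∀ x : Fin n → ℝ, (∀ i, 0 ≤ x i) →
      IsGreatest (Set.range fun i => G (ω i) x)
        (A.sup' hA fun a => ∑ i, a i * x i) := by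
  classical
  let cube : Finset (Fin n → ℝ) := Fintype.piFinset fun _ => {0, 1}
  have hcube : ∀ v : Fin n → ℝ, v ∈ cube ↔ ∀ i, v i = 0 ∨ v i = 1 := by
    intro v
    simp [cube, Fintype.mem_piFinset]
  have hnn : ∀ v : Fin n → ℝ, (∀ i, v i = 0 ∨ v i = 1) → ∀ i, 0 ≤ v i := by
    intro v hv i
    rcases hv i with h | h <;> simp [h]
  have hcard : (A.card : ℝ) ≤ 2 ^ n := by
    have h : A.card ≤ cube.card :=
      Finset.card_le_card fun a ha => (hcube a).2 (hA01 a ha)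
    have h' : cube.card = 2 ^ n := by
      simp [cube, Fintype.card_piFinset]
    rw [h'] at h
    exact_mod_cast h
  let N : Set Ω := ⋃ v ∈ cube, {ω : Ω | (A.sup' hA fun a => ∑ i, a i * v i) < G ω v}
  have hN : μ N = 0 :=
    (measure_biUnion_null_iff cube.countable_toSet).2 fun v hv =>
      (hone v (hnn v ((hcube v).1 hv))).1
  have hm : (A.card : ℝ) * (1 - p) ^ ⌈(n : ℝ) / p⌉₊ < 1 :=
    (mul_le_mul_of_nonneg_right hcard (pow_nonneg (by linarith) _)).trans_lt
      (two_pow_mul_lt_one n hn p hp0 hp1)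
  obtain ⟨ω, hωN, hωU⟩ := exists_sample μ A
    (fun v => {ω : Ω | G ω v < (A.sup' hA fun a => ∑ i, a i * v i)}) N hN (1 - p) (by linarith)
    (fun a ha => (hone a (hnn a (hA01 a ha))).2) _ hm
  have hle : ∀ i, ∀ v : Fin n → ℝ, (∀ j, v j = 0 ∨ v j = 1) →
      G (ω i) v ≤ A.sup' hA fun a => ∑ j, a j * v j := by
    intro i v hv
    by_contra hlt
    exact hωN i (Set.mem_biUnion ((hcube v).2 hv) (not_le.1 hlt))
  refine ⟨ω, fun x hx => ⟨?_, ?_⟩⟩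
  · obtain ⟨a, ha, hax⟩ := Finset.exists_mem_eq_sup' hA fun a : Fin n → ℝ => ∑ i, a i * x i
    obtain ⟨i, hi⟩ := hωU a ha
    refine ⟨i, le_antisymm (le_of_le_on_cube hA hA01 (hG _) (hle i) x hx) ?_⟩
    rw [hax]
    exact inner_le_of_cube hA hA01 (hG _) (hle i) ha (not_lt.1 hi) x hx
  · rintro _ ⟨i, rfl⟩
    exact le_of_le_on_cube hA hA01 (hG _) (hle i) x hx
end

section
/- No concave and no convex function computes the majority vote of three reals: there is no function f : ℝ³ → ℝ that is concave (on all of ℝ³) and satisfies f(x,x,z) = x, f(x,y,x) = x and f(x,y,y) = y for all x,y,z ∈ ℝ; likewise there is no convex function f : ℝ³ → ℝ satisfying these three identities. -/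
/-- **No concave and no convex function computes the majority vote of three reals:**
there is no concave function `f : ℝ³ → ℝ` satisfying the majority-vote identities
`f(x,x,z) = x`, `f(x,y,x) = x`, `f(x,y,y) = y`, and likewise no convex one. -/
theorem no_concave_or_convex_majority_vote :
    (¬ ∃ f : (Fin 3 → ℝ) → ℝ,
        ConcaveOn ℝ Set.univ f ∧
        (∀ x z : ℝ, f ![x, x, z] = x) ∧
        (∀ x y : ℝ, f ![x, y, x] = x) ∧
        (∀ x y : ℝ, f ![x, y, y] = y)) ∧
    (¬ ∃ f : (Fin 3 → ℝ) → ℝ,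
        ConvexOn ℝ Set.univ f ∧
        (∀ x z : ℝ, f ![x, x, z] = x) ∧
        (∀ x y : ℝ, f ![x, y, x] = x) ∧
        (∀ x y : ℝ, f ![x, y, y] = y)) := by
  constructor
  · rintro ⟨f, hf, h₁, h₂, h₃⟩
    -- The midpoint of `(0,0,-2)` and `(-2,0,0)` is `(-1,0,-1)`: concavity would give `0 ≤ -1`.
    have h := hf.2 (Set.mem_univ ![0, 0, -2]) (Set.mem_univ ![-2, 0, 0])
      (by norm_num : (0 : ℝ) ≤ 1 / 2) (by norm_num : (0 : ℝ) ≤ 1 / 2) (by norm_num)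
    have hm : (1 / 2 : ℝ) • ![(0 : ℝ), 0, -2] + (1 / 2 : ℝ) • ![(-2 : ℝ), 0, 0]
        = ![-1, 0, -1] := by
      ext i; fin_cases i <;> norm_num
    rw [hm, h₁, h₂, h₃] at h
    norm_num at h
  · rintro ⟨f, hf, h₁, h₂, h₃⟩
    -- The midpoint of `(0,0,2)` and `(2,0,0)` is `(1,0,1)`: convexity would give `1 ≤ 0`.
    have h := hf.2 (Set.mem_univ ![0, 0, 2]) (Set.mem_univ ![2, 0, 0])
      (by norm_num : (0 : ℝ) ≤ 1 / 2) (by norm_num : (0 : ℝ) ≤ 1 / 2) (by norm_num)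
    have hm : (1 / 2 : ℝ) • ![(0 : ℝ), 0, 2] + (1 / 2 : ℝ) • ![(2 : ℝ), 0, 0]
        = ![1, 0, 1] := by
      ext i; fin_cases i <;> norm_num
    rw [hm, h₁, h₂, h₃] at h
    norm_num at h
end

section
/- The median is a majority ρ-vote for contiguous relations: Let ρ ⊆ ℝ × ℝ be a contiguous binary relation, i.e., for all reals x ≤ y ≤ z and all a ∈ ℝ, if x ρ a and z ρ a then y ρ a. Let m ≥ 1 be an integer, let x_1 ≤ x_2 ≤ ⋯ ≤ x_m be a nondecreasing sequence of reals, and let a ∈ ℝ. If strictly more than m/2 of the indices i ∈ {1,…,m} satisfy x_i ρ a, then the median x_{⌈m/2⌉} satisfies x_{⌈m/2⌉} ρ a. -/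
/-- **The median is a majority ρ-vote for contiguous relations.** Let `ρ` be a contiguous
binary relation on `ℝ` (if `x ≤ y ≤ z`, `x ρ a` and `z ρ a`, then `y ρ a`). If
`x₁ ≤ ⋯ ≤ x_m` is nondecreasing and strictly more than `m/2` of the entries satisfy
`xᵢ ρ a`, then the median entry `x_{⌈m/2⌉}` satisfies `x_{⌈m/2⌉} ρ a`. -/
theorem median_is_majority_vote
    (ρ : ℝ → ℝ → Prop)
    (hcontig : ∀ x y z a : ℝ, x ≤ y → y ≤ z → ρ x a → ρ z a → ρ y a)
    (m : ℕ) (hm : 1 ≤ m)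
    (x : Fin m → ℝ) (hmono : Monotone x) (a : ℝ)
    (hmaj : m < 2 * Set.ncard {i : Fin m | ρ (x i) a}) :
    ρ (x ⟨(m + 1) / 2 - 1, by omega⟩) a := by
  -- At most half of the indices lie strictly on either side of the median index,
  -- so a majority has members on both sides (weakly), and contiguity applies between them.
  have hk : (m + 1) / 2 - 1 < m := by omega
  obtain ⟨i, hi, hρi⟩ : ∃ i : Fin m, i ≤ ⟨(m + 1) / 2 - 1, hk⟩ ∧ ρ (x i) a := by
    by_contra! h
    have hsub : {i : Fin m | ρ (x i) a} ⊆ ↑(Finset.Ioi (⟨(m + 1) / 2 - 1, hk⟩ : Fin m)) := by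
      intro i hi
      rw [Finset.mem_coe, Finset.mem_Ioi]
      exact lt_of_not_ge fun hle => h i hle hi
    have hcard := Set.ncard_le_ncard hsub (Set.toFinite _)
    rw [Set.ncard_coe_finset, Fin.card_Ioi] at hcard
    dsimp only at hcard
    omega
  obtain ⟨j, hj, hρj⟩ : ∃ j : Fin m, ⟨(m + 1) / 2 - 1, hk⟩ ≤ j ∧ ρ (x j) a := by
    by_contra! h
    have hsub : {i : Fin m | ρ (x i) a} ⊆ ↑(Finset.Iio (⟨(m + 1) / 2 - 1, hk⟩ : Fin m)) := by
      intro i hi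
      rw [Finset.mem_coe, Finset.mem_Iio]
      exact lt_of_not_ge fun hle => h i hle hi
    have hcard := Set.ncard_le_ncard hsub (Set.toFinite _)
    rw [Set.ncard_coe_finset, Fin.card_Iio] at hcard
    dsimp only at hcard
    omega
  exact hcontig _ _ _ a (hmono hi) (hmono hj) hρi hρj
end

section
/- Zero-vote polynomials via the dynamic programming recursion: For integers m ≥ 1 and k ≥ 1 define polynomials S_{m,k} ∈ ℝ[x_1,…,x_m] by: S_{m,k} = 1 whenever k > m; S_{m,1} = x_1²·x_2²⋯x_m²; and S_{m,k} = S_{m−1,k} · (S_{m−1,k−1} + x_m²) for 2 ≤ k ≤ m (where S_{m−1,k} and S_{m−1,k−1} are regarded as polynomials in x_1,…,x_m not involving x_m beyond the displayed occurrence). Then for all integers 1 ≤ k ≤ m and all x ∈ ℝ^m one has S_{m,k}(x) ≥ 0, and S_{m,k}(x) = 0 if and only if at least k of the coordinates x_1,…,x_m are zero. In particular, for k = ⌊m/2⌋ + 1 the polynomial S_{m,k} is a zero-vote function: it vanishes at x exactly when strictly more than m/2 of the coordinates of x are zero. -/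
/-!
The zero criterion is proved by induction on `m ≥ 1`, for all `k ≥ 1` at once. Allowing `k > m`
costs nothing (both sides are then false) and is needed because the recursion for `S m m` refers
to `S (m - 1) m`. In the recursive step all values are nonnegative, so the product
`S (m - 1) k * (S (m - 1) (k - 1) + x²)`, with `x` the last coordinate, vanishes iff the first
`m - 1` coordinates contain at least `k` zeros, or at least `k - 1` zeros while `x = 0`; that is,
iff all `m` coordinates contain at least `k` zeros.
-/

open MvPolynomial

/-- **Zero-vote polynomials via the dynamic programming recursion.** Suppose the
polynomials `S m k ∈ ℝ[x₀,x₁,…]` (with `S m k` a polynomial in the variables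
`x₀,…,x_{m−1}`) satisfy: `S m k = 1` whenever `k > m ≥ 1`;
`S m 1 = x₀²⋯x_{m−1}²` for `m ≥ 1`; and
`S m k = S (m−1) k · (S (m−1) (k−1) + x_{m−1}²)` for `2 ≤ k ≤ m`. Then for all
`1 ≤ k ≤ m` and all real points `x`, the value `S m k (x)` is nonnegative, and it is zero
iff at least `k` of the coordinates `x₀,…,x_{m−1}` are zero. In particular, for
`k = ⌊m/2⌋ + 1` the polynomial `S m k` vanishes at `x` exactly when strictly more than
`m/2` of the coordinates are zero (a zero-vote function). -/
theorem zero_vote_polynomials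
    (S : ℕ → ℕ → MvPolynomial ℕ ℝ)
    (hbig : ∀ m k : ℕ, 1 ≤ m → m < k → S m k = 1)
    (hone : ∀ m : ℕ, 1 ≤ m → S m 1 = ∏ i ∈ Finset.range m, (X i : MvPolynomial ℕ ℝ) ^ 2)
    (hrec : ∀ m k : ℕ, 2 ≤ k → k ≤ m →
      S m k = S (m - 1) k * (S (m - 1) (k - 1) + (X (m - 1) : MvPolynomial ℕ ℝ) ^ 2)) :
    ∀ m k : ℕ, 1 ≤ k → k ≤ m → ∀ x : ℕ → ℝ,
      0 ≤ eval x (S m k) ∧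
      (eval x (S m k) = 0 ↔ k ≤ ((Finset.range m).filter fun i => x i = 0).card) ∧
      (k = m / 2 + 1 →
        (eval x (S m k) = 0 ↔
          m < 2 * ((Finset.range m).filter fun i => x i = 0).card)) := by
  have key : ∀ x : ℕ → ℝ, ∀ m : ℕ, 1 ≤ m → ∀ k : ℕ, 1 ≤ k →
      0 ≤ eval x (S m k) ∧
      (eval x (S m k) = 0 ↔ k ≤ ((Finset.range m).filter fun i => x i = 0).card) := by
    intro x
    have h_one : ∀ m : ℕ, 1 ≤ m → 0 ≤ eval x (S m 1) ∧
        (eval x (S m 1) = 0 ↔ 1 ≤ ((Finset.range m).filter fun i => x i = 0).card) := by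
      intro m hm
      have he : eval x (S m 1) = ∏ i ∈ Finset.range m, x i ^ 2 := by
        simp [hone m hm, map_prod]
      rw [he]
      refine ⟨Finset.prod_nonneg fun i _ => sq_nonneg _, ?_⟩
      rw [Finset.prod_eq_zero_iff, Nat.one_le_iff_ne_zero, Finset.card_ne_zero,
        Finset.filter_nonempty_iff]
      simp
    have h_big : ∀ m k : ℕ, 1 ≤ m → m < k → 0 ≤ eval x (S m k) ∧
        (eval x (S m k) = 0 ↔ k ≤ ((Finset.range m).filter fun i => x i = 0).card) := by
      intro m k hm hk
      have hc := Finset.card_filter_le (Finset.range m) fun i => x i = 0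
      rw [Finset.card_range] at hc
      rw [hbig m k hm hk, map_one]
      exact ⟨zero_le_one, fun h => absurd h one_ne_zero, fun h => by omega⟩
    intro m hm
    induction m, hm using Nat.le_induction with
    | base =>
      intro k hk
      rcases hk.eq_or_lt with rfl | hk
      · exact h_one 1 le_rfl
      · exact h_big 1 k le_rfl hk
    | succ m hm ih =>
      intro k hk
      rcases hk.eq_or_lt with rfl | hk
      · exact h_one (m + 1) (by omega)
      rcases lt_or_ge (m + 1) k with hkm | hkm
      · exact h_big (m + 1) k (by omega) hkm
      obtain ⟨ha, ha0⟩ := ih k (by omega)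
      obtain ⟨hb, hb0⟩ := ih (k - 1) (by omega)
      have he : eval x (S (m + 1) k) =
          eval x (S m k) * (eval x (S m (k - 1)) + x m ^ 2) := by
        simp [hrec (m + 1) k hk hkm]
      rw [he]
      refine ⟨by positivity, ?_⟩
      rw [mul_eq_zero, add_eq_zero_iff_of_nonneg hb (sq_nonneg _), ha0, hb0,
        sq_eq_zero_iff, Finset.range_add_one, Finset.filter_insert]
      by_cases hx : x m = 0
      · rw [if_pos hx, Finset.card_insert_of_notMem (by simp)]
        simp only [hx, and_true]
        omega
      · simp [hx]
  intro m k hk hkm x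
  obtain ⟨h0, hz⟩ := key x m (by omega) k hk
  refine ⟨h0, hz, fun hk2 => ?_⟩
  rw [hz]
  omega
end
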